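/- arXiv:1608.06975 — 2 statements merged into one kernel-verified Lean document; each statement's English description precedes it below -/
import Mathlib

section
/- (Strict subadditivity for h close to 1.) There exists H ∈ [0, 1) such that for every h ∈ [H, 1), writing α = arccos h ∈ (0, π/2], one has ℰ_h(2 − α/π) < 2ℰ_h(1 − α/π) + ℰ_h(α/π). -/
/-!
The idea is to compare with the case `h = 1` (`α = 0`), where a phase of winding number `2` can be
built from two separated turns that attract each other through the stray field; the strict gain
found there survives for small `α > 0`, and the nonnegative third term is not needed.

**Single turn.** A phase of winding number `1 - α / π` passes an odd multiple of `π`. Placing this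
point at the origin, folding the two halves into `[0, π]` and `[π, 2π]`, collapsing the values with
`cos φ ≥ cos β` for some `β > α` and stretching by `l = π / (π - β)` gives a profile
`u = sin (φ / 2)` of compact support. This increases the energy at most by the factor `l⁴`, so that
`m1 ≤ l⁴ * ℰ_h(1 - α / π)` (`lower_bound`), where `m1` is the infimum of the relaxed energy `En` at
`h = 1`. In `En` the exchange term is a supremum of chordal difference quotients of
`(sin (φ / 2), cos (φ / 2))`, so that no differentiability of the folded profiles is needed.

**Interaction gain.** Two copies of a profile supported in `[-S, S]` gain at least a multiple of
`m² / S²` when placed side by side, with `m` the mass of `1 - cos φ` in the core (`Nst_pair`).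
Localisation formulas (`ims_field`, `ims_chord`) bound the cost of truncating at scale `R` by the
tail of the profile, while the truncation removes the tail beyond `3R` from the anisotropy energy.
For almost minimizers this makes the tail small, and iterating it three times gives a truncation at
scale `r²` with cost `O((1 + m)² / r⁵)`, against a gain of order `m² / r⁴` (`three_pass`,
`exists_gain`). For large `r` the double turn therefore has energy at most `2 * m1 - c`, `c > 0`.

**Double turn.** Averaging the double turn over windows of length `α` and mapping `[0, 4π]` affinely
onto `[α, 4π - α]` gives an admissible phase of winding number `2 - α / π`, whose energy is
asymptotically at most that of the double turn as `α → 0` (`upper_bound`). As `l → 1` is allowed when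
`α → 0`, the two bounds give the claim.
-/

open Real MeasureTheory Filter Topology
open scoped ENNReal NNReal

noncomputable section

/-- `k = min {h, 1}`. -/
def kparam (h : ℝ) : ℝ := min h 1

/-- `α = arccos k ∈ [0, π/2]`. -/
def alphaParam (h : ℝ) : ℝ := Real.arccos (kparam h)

/-- The anisotropy potential `W_h(θ) = (1/2)(cos²θ − 2h cos θ + 2hk − k²)`. -/
def Wpot (h θ : ℝ) : ℝ :=
  (1/2) * ((Real.cos θ)^2 - 2*h*Real.cos θ + 2*h*(kparam h) - (kparam h)^2)

/-- The set `2πℤ + {−α, α}` of allowed limits at `±∞`. -/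
def limSet (h : ℝ) : Set ℝ :=
  {y | ∃ n : ℤ, y = 2*Real.pi*n + alphaParam h ∨ y = 2*Real.pi*n - alphaParam h}

/-- The total energy `E_h(φ)`, valued in `[0, ∞]`:
exchange + anisotropy energy plus the stray-field (homogeneous `H^{1/2}`) energy. -/
def energy (h : ℝ) (φ : ℝ → ℝ) : ℝ≥0∞ :=
  ENNReal.ofReal (1/2) *
      (∫⁻ x : ℝ, ENNReal.ofReal ((deriv φ x)^2 + 2 * Wpot h (φ x))) +
    ENNReal.ofReal (1/(4*Real.pi)) *
      (∫⁻ s : ℝ, ∫⁻ t : ℝ,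
        ENNReal.ofReal ((Real.cos (φ s) - Real.cos (φ t))^2 / (s - t)^2))

/-- An admissible phase: `C¹`, limits at `±∞` in `2πℤ + {−α, α}`, finite energy. -/
def Admissible (h : ℝ) (φ : ℝ → ℝ) : Prop :=
  ContDiff ℝ 1 φ ∧
    (∃ L ∈ limSet h, Tendsto φ atTop (𝓝 L)) ∧
    (∃ L ∈ limSet h, Tendsto φ atBot (𝓝 L)) ∧
    energy h φ < ⊤

/-- The winding number `deg(φ) = (φ(+∞) − φ(−∞))/(2π)`. -/
def deg (φ : ℝ → ℝ) : ℝ :=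
  (limUnder atTop φ - limUnder atBot φ) / (2*Real.pi)

/-- `𝒜_h(d)`: admissible phases of winding number `d`. -/
def AA (h d : ℝ) : Set (ℝ → ℝ) := {φ | Admissible h φ ∧ deg φ = d}

/-- `ℰ_h(d) = inf {E_h(φ) : φ ∈ 𝒜_h(d)}`. -/
def Einf (h d : ℝ) : ℝ≥0∞ := ⨅ φ ∈ AA h d, energy h φ

/-- `D_α = {n + j·α/π : n ∈ ℤ, j ∈ {−1, 0, 1}}`. -/
def Dset (h : ℝ) : Set ℝ :=
  {d | ∃ n j : ℤ, (j = -1 ∨ j = 0 ∨ j = 1) ∧ d = n + j * alphaParam h / Real.pi}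

/-! ### Folded profiles and their relaxed energy -/

/-- The value `cos (φ / 2)` for a phase `φ` that runs from `0` to `2π`, passes `π` at the origin
and satisfies `sin (φ / 2) = u`. -/
def wv (u : ℝ → ℝ) (x : ℝ) : ℝ := if x ≤ 0 then √(1 - u x ^ 2) else -√(1 - u x ^ 2)

/-- Squared chordal distance between the half-angle vectors `(u, w)` at `x` and `y`. -/
def chord2 (u : ℝ → ℝ) (x y : ℝ) : ℝ := (u x - u y) ^ 2 + (wv u x - wv u y) ^ 2

/-- The profile `1 - cos φ` expressed through `u = sin (φ / 2)`. -/
def fu (u : ℝ → ℝ) (x : ℝ) : ℝ := 2 * u x ^ 2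

/-- Exchange energy at step `δ`: derivatives are replaced by chordal difference quotients. -/
def Dd (u : ℝ → ℝ) (δ : ℝ) : ℝ≥0∞ :=
  ENNReal.ofReal (2 / δ ^ 2) * ∫⁻ x, ENNReal.ofReal (chord2 u (x + δ) x)

/-- Relaxed exchange energy. -/
def Dsup (u : ℝ → ℝ) : ℝ≥0∞ := ⨆ δ ∈ Set.Ioc (0 : ℝ) 1, Dd u δ

/-- Anisotropy energy at `h = 1` of the profile `f = 1 - cos φ`. -/
def Pe (f : ℝ → ℝ) : ℝ≥0∞ := ENNReal.ofReal (1 / 2) * ∫⁻ x, ENNReal.ofReal (f x ^ 2)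

/-- Stray-field energy, written as an integral over the plane. -/
def Nst (f : ℝ → ℝ) : ℝ≥0∞ :=
  ENNReal.ofReal (1 / (4 * Real.pi)) *
    ∫⁻ z : ℝ × ℝ, ENNReal.ofReal ((f z.1 - f z.2) ^ 2 / (z.1 - z.2) ^ 2)

/-- Relaxed energy at `h = 1` of the phase of winding number one described by `u`. -/
def En (u : ℝ → ℝ) : ℝ≥0∞ := Dsup u + Pe (fu u) + Nst (fu u)

/-- Compactly supported, locally Lipschitz profiles `u = sin (φ / 2)` of winding number one which
satisfy `1 - cos φ ≥ 1` on `[-r, r]`. -/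
structure Cls (r : ℝ) (u : ℝ → ℝ) : Prop where
  nonneg : ∀ x, 0 ≤ u x
  le_one : ∀ x, u x ≤ 1
  lip : ∃ K, ∀ x y, |x - y| ≤ 1 → chord2 u x y ≤ K * (x - y) ^ 2
  supp : ∃ S, ∀ x, S ≤ |x| → u x = 0
  core : ∀ x, |x| ≤ r → 1 / 2 ≤ u x ^ 2

lemma chord2_nonneg (u : ℝ → ℝ) (x y : ℝ) : 0 ≤ chord2 u x y := by
  unfold chord2; positivity

lemma fu_nonneg (u : ℝ → ℝ) (x : ℝ) : 0 ≤ fu u x := by unfold fu; positivity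

/-- A Lipschitz bound at distances at most `1` gives continuity. -/
lemma continuous_of_loc_lip {g : ℝ → ℝ} {K : ℝ}
    (h : ∀ x y, |x - y| ≤ 1 → (g x - g y) ^ 2 ≤ K * (x - y) ^ 2) : Continuous g := by
  rw [continuous_iff_continuousAt]
  intro x
  have h2 : Tendsto (fun y => (g y - g x) ^ 2) (𝓝 x) (𝓝 0) := by
    have h3 : Tendsto (fun y : ℝ => K * (y - x) ^ 2) (𝓝 x) (𝓝 0) := by
      have : Continuous (fun y : ℝ => K * (y - x) ^ 2) := by fun_prop
      simpa using this.tendsto x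
    refine tendsto_of_tendsto_of_tendsto_of_le_of_le' tendsto_const_nhds h3
      (Eventually.of_forall fun y => sq_nonneg _) ?_
    filter_upwards [Metric.ball_mem_nhds x one_pos] with y hy
    rw [Metric.mem_ball, Real.dist_eq] at hy
    exact h y x hy.le
  have h4 : Tendsto (fun y => |g y - g x|) (𝓝 x) (𝓝 0) := by
    have := (Real.continuous_sqrt.tendsto 0).comp h2
    simpa [Function.comp_def, Real.sqrt_sq_eq_abs] using this
  have h5 := (tendsto_zero_iff_abs_tendsto_zero _).2 h4
  have := h5.add_const (g x)
  simpa [ContinuousAt] using this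

lemma Cls.cont {r : ℝ} {u : ℝ → ℝ} (hu : Cls r u) : Continuous u := by
  obtain ⟨K, hK⟩ := hu.lip
  refine continuous_of_loc_lip (K := K) fun x y h => le_trans ?_ (hK x y h)
  unfold chord2; nlinarith [sq_nonneg (wv u x - wv u y)]

lemma Cls.cont_wv {r : ℝ} {u : ℝ → ℝ} (hu : Cls r u) : Continuous (wv u) := by
  obtain ⟨K, hK⟩ := hu.lip
  refine continuous_of_loc_lip (K := K) fun x y h => le_trans ?_ (hK x y h)
  unfold chord2; nlinarith [sq_nonneg (u x - u y)]

lemma Cls.cont_fu {r : ℝ} {u : ℝ → ℝ} (hu : Cls r u) : Continuous (fu u) := by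
  have := hu.cont
  unfold fu; fun_prop

lemma Cls.sq_le {r : ℝ} {u : ℝ → ℝ} (hu : Cls r u) (x : ℝ) : u x ^ 2 ≤ 1 := by
  have := hu.nonneg x; have := hu.le_one x; nlinarith

lemma Cls.wv_sq {r : ℝ} {u : ℝ → ℝ} (hu : Cls r u) (x : ℝ) : wv u x ^ 2 = 1 - u x ^ 2 := by
  have := hu.sq_le x
  unfold wv; split_ifs
  · exact Real.sq_sqrt (by linarith)
  · rw [neg_sq]; exact Real.sq_sqrt (by linarith)

lemma Cls.fu_le {r : ℝ} {u : ℝ → ℝ} (hu : Cls r u) (x : ℝ) : fu u x ≤ 2 := by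
  have := hu.sq_le x
  unfold fu; linarith

/-- Cutoff angle: `0` on `[-2R, 2R]`, `π / 2` outside `[-3R, 3R]`, linear in between. -/
def zt (R x : ℝ) : ℝ := π / 2 * max 0 (min 1 ((|x| - 2 * R) / R))

/-- Truncated profile. -/
def tr (R : ℝ) (u : ℝ → ℝ) (x : ℝ) : ℝ := cos (zt R x) * u x

lemma zt_core {R x : ℝ} (hR : 0 < R) (h : |x| ≤ 2 * R) : zt R x = 0 := by
  unfold zt
  rw [max_eq_left, mul_zero]
  exact min_le_of_right_le (div_nonpos_of_nonpos_of_nonneg (by linarith) hR.le)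

lemma zt_far {R x : ℝ} (hR : 0 < R) (h : 3 * R ≤ |x|) : zt R x = π / 2 := by
  unfold zt
  rw [min_eq_left, max_eq_right zero_le_one, mul_one]
  rw [le_div_iff₀ hR]; linarith

lemma zt_nonneg (R x : ℝ) : 0 ≤ zt R x := by unfold zt; positivity

lemma zt_le (R x : ℝ) : zt R x ≤ π / 2 := by
  unfold zt
  have : max 0 (min 1 ((|x| - 2 * R) / R)) ≤ 1 := by simp
  nlinarith [Real.pi_pos]

lemma zt_lip {R : ℝ} (hR : 0 < R) (x y : ℝ) : |zt R x - zt R y| ≤ 2 / R * |x - y| := by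
  unfold zt
  rw [← mul_sub, abs_mul, abs_of_pos (by positivity)]
  have h1 : |max 0 (min 1 ((|x| - 2 * R) / R)) - max 0 (min 1 ((|y| - 2 * R) / R))| ≤
      |x - y| / R := by
    refine (abs_max_sub_max_le_max (0 : ℝ) _ 0 _).trans ?_
    rw [sub_self, abs_zero, max_eq_right (abs_nonneg _)]
    have h3 : |min 1 ((|x| - 2 * R) / R) - min 1 ((|y| - 2 * R) / R)| ≤
        |(|x| - 2 * R) / R - (|y| - 2 * R) / R| := by
      have := abs_min_sub_min_le_max 1 ((|x| - 2 * R) / R) 1 ((|y| - 2 * R) / R)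
      simpa using this
    refine h3.trans ?_
    rw [← sub_div, abs_div, abs_of_pos hR]
    refine div_le_div_of_nonneg_right ?_ hR.le
    rw [show |x| - 2 * R - (|y| - 2 * R) = |x| - |y| by ring]
    exact abs_abs_sub_abs_le x y
  have h2 : π / 2 ≤ 2 := by linarith [Real.pi_le_four]
  calc π / 2 * _ ≤ 2 * (|x - y| / R) := by gcongr
    _ = _ := by ring

lemma tr_core {R x : ℝ} (u : ℝ → ℝ) (hR : 0 < R) (h : |x| ≤ 2 * R) : tr R u x = u x := by
  simp [tr, zt_core hR h]

lemma tr_far {R x : ℝ} (u : ℝ → ℝ) (hR : 0 < R) (h : 3 * R ≤ |x|) : tr R u x = 0 := by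
  simp [tr, zt_far hR h]

lemma cos_zt_mem (R x : ℝ) : 0 ≤ cos (zt R x) ∧ cos (zt R x) ≤ 1 :=
  ⟨cos_nonneg_of_neg_pi_div_two_le_of_le
    (by linarith [zt_nonneg R x, Real.pi_pos]) (zt_le R x), cos_le_one _⟩

/-- Localisation formula for the stray field: the partition of unity
`(cos² ζ, √2 cos ζ sin ζ, sin² ζ)` gives the square completion. -/
lemma ims_field (z0 z1 f0 f1 : ℝ) :
    (cos z0 ^ 2 * f0 - cos z1 ^ 2 * f1) ^ 2 ≤
      (f0 - f1) ^ 2 + 2 * (f0 * f1) * sin (z0 - z1) ^ 2 := by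
  have e0 := sin_sq_add_cos_sq z0
  have e1 := sin_sq_add_cos_sq z1
  rw [sin_sub]
  set c0 := cos z0
  set s0 := sin z0
  set c1 := cos z1
  set s1 := sin z1
  have key : (f0 - f1) ^ 2 + 2 * (f0 * f1) * (s0 * c1 - c0 * s1) ^ 2
      - (c0 ^ 2 * f0 - c1 ^ 2 * f1) ^ 2
      = 2 * (c0 * s0 * f0 - c1 * s1 * f1) ^ 2 + (s0 ^ 2 * f0 - s1 ^ 2 * f1) ^ 2 := by
    have h0 : s0 ^ 2 = 1 - c0 ^ 2 := by linarith
    have h1 : s1 ^ 2 = 1 - c1 ^ 2 := by linarith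
    ring_nf
    rw [show s0 ^ 4 = (s0 ^ 2) ^ 2 by ring, show s1 ^ 4 = (s1 ^ 2) ^ 2 by ring, h0, h1]
    ring
  nlinarith [sq_nonneg (c0 * s0 * f0 - c1 * s1 * f1), sq_nonneg (s0 ^ 2 * f0 - s1 ^ 2 * f1)]

lemma sqrt_diff_sq_le (a b c d : ℝ) :
    (√(a ^ 2 + b ^ 2) - √(c ^ 2 + d ^ 2)) ^ 2 ≤ (a - c) ^ 2 + (b - d) ^ 2 := by
  have h1 : 0 ≤ a ^ 2 + b ^ 2 := by positivity
  have h2 : 0 ≤ c ^ 2 + d ^ 2 := by positivity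
  have h3 : a * c + b * d ≤ √(a ^ 2 + b ^ 2) * √(c ^ 2 + d ^ 2) := by
    rw [← Real.sqrt_mul h1]
    apply Real.le_sqrt_of_sq_le
    nlinarith [sq_nonneg (a * d - b * c)]
  nlinarith [Real.sq_sqrt h1, Real.sq_sqrt h2]

/-- Localisation formula for the exchange energy. The rotated vector
`(u cos ζ, u sin ζ, w)` lives on the sphere, and the truncation forgets the rotation by merging
the last two components into their norm, which is a contraction. -/
lemma ims_chord {r : ℝ} {u : ℝ → ℝ} (hu : Cls r u) {R : ℝ} (hR : 1 ≤ R) {x y : ℝ}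
    (hxy : |x - y| ≤ 1) :
    chord2 (tr R u) x y ≤ chord2 u x y + u x * u y * (zt R x - zt R y) ^ 2 := by
  have hR0 : 0 < R := by linarith
  have hux := hu.nonneg x
  have huy := hu.nonneg y
  have hsame : ∀ x, √(1 - tr R u x ^ 2) =
      √((√(1 - u x ^ 2)) ^ 2 + (u x * sin (zt R x)) ^ 2) := by
    intro x
    rw [Real.sq_sqrt (by linarith [hu.sq_le x])]
    congr 1
    unfold tr
    nlinarith [sin_sq_add_cos_sq (zt R x)]
  have main : (tr R u x - tr R u y) ^ 2 + (√(1 - tr R u x ^ 2) - √(1 - tr R u y ^ 2)) ^ 2 ≤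
      (u x - u y) ^ 2 + (√(1 - u x ^ 2) - √(1 - u y ^ 2)) ^ 2 +
        u x * u y * (zt R x - zt R y) ^ 2 := by
    rw [hsame x, hsame y]
    have h1 := sqrt_diff_sq_le (√(1 - u x ^ 2)) (u x * sin (zt R x)) (√(1 - u y ^ 2))
      (u y * sin (zt R y))
    have h2 := Real.one_sub_sq_div_two_le_cos (x := zt R x - zt R y)
    rw [cos_sub] at h2
    have h3 := mul_le_mul_of_nonneg_left h2 (mul_nonneg hux huy)
    have ex := sin_sq_add_cos_sq (zt R x)
    have ey := sin_sq_add_cos_sq (zt R y)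
    have h4 : (tr R u x - tr R u y) ^ 2 + (u x * sin (zt R x) - u y * sin (zt R y)) ^ 2 =
        u x ^ 2 + u y ^ 2 - 2 * (u x * u y * (cos (zt R x) * cos (zt R y)
          + sin (zt R x) * sin (zt R y))) := by
      unfold tr
      linear_combination (u x ^ 2) * ex + (u y ^ 2) * ey
    nlinarith
  have opp : |x| ≤ 1 → |y| ≤ 1 → chord2 (tr R u) x y ≤
      chord2 u x y + u x * u y * (zt R x - zt R y) ^ 2 := by
    intro hx hy
    have e1 : tr R u x = u x := tr_core u hR0 (by linarith)
    have e2 : tr R u y = u y := tr_core u hR0 (by linarith)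
    have : chord2 (tr R u) x y = chord2 u x y := by simp only [chord2, wv, e1, e2]
    rw [this]
    have : 0 ≤ u x * u y * (zt R x - zt R y) ^ 2 := by positivity
    linarith
  rcases le_or_gt x 0 with hx | hx <;> rcases le_or_gt y 0 with hy | hy
  · simpa only [chord2, wv, if_pos hx, if_pos hy] using main
  · rw [abs_le] at hxy
    exact opp (abs_le.2 ⟨by linarith, by linarith⟩) (abs_le.2 ⟨by linarith, by linarith⟩)
  · rw [abs_le] at hxy
    exact opp (abs_le.2 ⟨by linarith, by linarith⟩) (abs_le.2 ⟨by linarith, by linarith⟩)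
  · have hx' := not_le.2 hx
    have hy' := not_le.2 hy
    simp only [chord2, wv, if_neg hx', if_neg hy']
    have : (-√(1 - tr R u x ^ 2) - -√(1 - tr R u y ^ 2)) ^ 2 =
      (√(1 - tr R u x ^ 2) - √(1 - tr R u y ^ 2)) ^ 2 := by ring
    rw [this]
    have : (-√(1 - u x ^ 2) - -√(1 - u y ^ 2)) ^ 2 =
      (√(1 - u x ^ 2) - √(1 - u y ^ 2)) ^ 2 := by ring
    rw [this]
    exact main

/-- Truncation beyond the core stays in the class. -/
lemma Cls.tr {r : ℝ} {u : ℝ → ℝ} (hu : Cls r u) {R : ℝ} (hR : 1 ≤ R) (hr : r ≤ R) :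
    Cls r (tr R u) where
  nonneg x := mul_nonneg (cos_zt_mem R x).1 (hu.nonneg x)
  le_one x := mul_le_one₀ (cos_zt_mem R x).2 (hu.nonneg x) (hu.le_one x)
  lip := by
    obtain ⟨K, hK⟩ := hu.lip
    have hR0 : 0 < R := by linarith
    refine ⟨K + (2 / R) ^ 2, fun x y h => (ims_chord hu hR h).trans ?_⟩
    have h1 : u x * u y ≤ 1 := mul_le_one₀ (hu.le_one x) (hu.nonneg y) (hu.le_one y)
    have h2 : (zt R x - zt R y) ^ 2 ≤ (2 / R) ^ 2 * (x - y) ^ 2 := by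
      rw [← mul_pow, ← sq_abs, ← sq_abs (2 / R * (x - y)), abs_mul, abs_of_pos (by positivity : 0 < 2 / R)]
      exact pow_le_pow_left₀ (abs_nonneg _) (zt_lip hR0 x y) 2
    have h3 := hK x y h
    nlinarith [sq_nonneg (zt R x - zt R y)]
  supp := ⟨3 * R, fun x hx => tr_far u (by linarith) hx⟩
  core x hx := by
    have hR0 : 0 < R := by linarith
    rw [tr_core u hR0 (by linarith)]; exact hu.core x hx

lemma fu_tr (R : ℝ) (u : ℝ → ℝ) (x : ℝ) : fu (tr R u) x = cos (zt R x) ^ 2 * fu u x := by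
  unfold fu tr; ring

/-! ### The cost of truncation -/

/-- Restriction of `F` to the exterior of `[-R, R]`. -/
def outf (R : ℝ) (F : ℝ → ℝ) (x : ℝ) : ℝ := if R < |x| then F x else 0

/-- Restriction of `F` to `[-R, R]`. -/
def inf' (R : ℝ) (F : ℝ → ℝ) (x : ℝ) : ℝ := if |x| ≤ R then F x else 0

/-- Weighted tail mass `∫_{|x| > R} f / x²`. -/
def II (u : ℝ → ℝ) (R : ℝ) : ℝ≥0∞ := ∫⁻ x, ENNReal.ofReal (outf R (fun x => fu u x / x ^ 2) x)

/-- Tail `∫_{|x| > R} f²`. -/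
def Tt (u : ℝ → ℝ) (R : ℝ) : ℝ≥0∞ := ∫⁻ x, ENNReal.ofReal (outf R (fun x => fu u x ^ 2) x)

/-- Core mass `∫_{|x| ≤ R} f`. -/
def mm (u : ℝ → ℝ) (R : ℝ) : ℝ≥0∞ := ∫⁻ x, ENNReal.ofReal (inf' R (fu u) x)

lemma measurable_outf {F : ℝ → ℝ} (hF : Measurable F) (R : ℝ) : Measurable (outf R F) :=
  Measurable.ite (measurableSet_lt measurable_const (by fun_prop)) hF measurable_const

lemma measurable_inf' {F : ℝ → ℝ} (hF : Measurable F) (R : ℝ) : Measurable (inf' R F) :=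
  Measurable.ite (measurableSet_le (by fun_prop) measurable_const) hF measurable_const

lemma outf_nonneg {F : ℝ → ℝ} (hF : ∀ x, 0 ≤ F x) (R x : ℝ) : 0 ≤ outf R F x := by
  unfold outf; split_ifs; exacts [hF x, le_rfl]

lemma inf'_nonneg {F : ℝ → ℝ} (hF : ∀ x, 0 ≤ F x) (R x : ℝ) : 0 ≤ inf' R F x := by
  unfold inf'; split_ifs; exacts [hF x, le_rfl]

/-- The Lorentz kernel, used to bound the localisation error `sin (ζ s - ζ t)² / (s - t)²`. -/
lemma lintegral_lorentz {A : ℝ} (hA : 0 < A) :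
    ∫⁻ x : ℝ, ENNReal.ofReal (2 * A ^ 2 / (1 + A ^ 2 * x ^ 2)) = ENNReal.ofReal (2 * A * π) := by
  have hi : Integrable (fun x : ℝ => (1 + (A * x) ^ 2)⁻¹) :=
    integrable_inv_one_add_sq.comp_mul_left' hA.ne'
  have e : ∀ x : ℝ, 2 * A ^ 2 / (1 + A ^ 2 * x ^ 2) = 2 * A ^ 2 * (1 + (A * x) ^ 2)⁻¹ := by
    intro x; rw [mul_pow, div_eq_mul_inv]
  simp_rw [e]
  rw [← ofReal_integral_eq_lintegral_ofReal (hi.const_mul _)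
    (Eventually.of_forall fun x => by positivity), integral_const_mul,
    Measure.integral_comp_mul_left (fun x : ℝ => (1 + x ^ 2)⁻¹) A, integral_univ_inv_one_add_sq,
    abs_of_pos (by positivity)]
  congr 1
  simp only [smul_eq_mul]
  field_simp

/-- Since `ζ = zt R` is constant on `[-2R, 2R]` and has slope at most `2 / R`, its increments are
controlled by `1 / x²` on the exterior region. -/
lemma exch_point {r : ℝ} {u : ℝ → ℝ} (hu : Cls r u) {R : ℝ} (hR : 1 ≤ R) {x y : ℝ}
    (hxy : |x - y| ≤ 1) :
    u x * u y * (zt R x - zt R y) ^ 2 ≤ 16 * (x - y) ^ 2 *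
      (outf R (fun x => fu u x / x ^ 2) x + outf R (fun x => fu u x / x ^ 2) y) := by
  have hR0 : 0 < R := by linarith
  have hnn : ∀ x, 0 ≤ outf R (fun x => fu u x / x ^ 2) x :=
    outf_nonneg (fun x => div_nonneg (fu_nonneg u x) (sq_nonneg x)) R
  have hrhs : 0 ≤ 16 * (x - y) ^ 2 *
      (outf R (fun x => fu u x / x ^ 2) x + outf R (fun x => fu u x / x ^ 2) y) := by
    have := hnn x; have := hnn y; positivity
  have hab := abs_abs_sub_abs_le x y
  rw [abs_le] at hab
  by_cases hin : |x| ≤ 2 * R ∧ |y| ≤ 2 * R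
  · rw [zt_core hR0 hin.1, zt_core hR0 hin.2]; simpa using hrhs
  by_cases hout : 3 * R ≤ |x| ∧ 3 * R ≤ |y|
  · rw [zt_far hR0 hout.1, zt_far hR0 hout.2]; simpa using hrhs
  have hx : R < |x| ∧ |x| ≤ 4 * R ∧ R < |y| ∧ |y| ≤ 4 * R := by
    rw [not_and_or, not_le, not_le] at hin hout
    rcases hin with h | h <;> rcases hout with h' | h' <;> refine ⟨?_, ?_, ?_, ?_⟩ <;> linarith
  have h2 : (zt R x - zt R y) ^ 2 ≤ (2 / R) ^ 2 * (x - y) ^ 2 := by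
    rw [← mul_pow, ← sq_abs, ← sq_abs (2 / R * (x - y)), abs_mul,
      abs_of_pos (by positivity : 0 < 2 / R)]
    exact pow_le_pow_left₀ (abs_nonneg _) (zt_lip hR0 x y) 2
  have aux : ∀ x : ℝ, R < |x| → |x| ≤ 4 * R → u x ^ 2 / R ^ 2 ≤ 8 * outf R (fun x => fu u x / x ^ 2) x := by
    intro x h1 h2
    have hx0 : 0 < |x| := by linarith
    have : x ^ 2 ≤ 16 * R ^ 2 := by rw [← sq_abs]; nlinarith
    have hx2 : 0 < x ^ 2 := by rw [← sq_abs]; positivity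
    simp only [outf, if_pos h1, fu]
    rw [← mul_div_assoc, div_le_div_iff₀ (by positivity) hx2]
    nlinarith [sq_nonneg (u x)]
  have a1 := aux x hx.1 hx.2.1
  have a2 := aux y hx.2.2.1 hx.2.2.2
  have h3 : 2 * (u x * u y) ≤ u x ^ 2 + u y ^ 2 := by nlinarith [sq_nonneg (u x - u y)]
  have h4 := mul_le_mul_of_nonneg_left h2 (mul_nonneg (hu.nonneg x) (hu.nonneg y))
  calc _ ≤ u x * u y * ((2 / R) ^ 2 * (x - y) ^ 2) := h4
    _ = 2 * (u x * u y) * (2 / R ^ 2) * (x - y) ^ 2 := by ring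
    _ ≤ (u x ^ 2 + u y ^ 2) * (2 / R ^ 2) * (x - y) ^ 2 := by gcongr
    _ = 2 * (u x ^ 2 / R ^ 2 + u y ^ 2 / R ^ 2) * (x - y) ^ 2 := by ring
    _ ≤ 2 * (8 * outf R (fun x => fu u x / x ^ 2) x + 8 * outf R (fun x => fu u x / x ^ 2) y)
        * (x - y) ^ 2 := by gcongr
    _ = _ := by ring

/-- Exchange energy created by the truncation. -/
lemma exch_cost {r : ℝ} {u : ℝ → ℝ} (hu : Cls r u) {R : ℝ} (hR : 1 ≤ R) :
    Dsup (tr R u) ≤ Dsup u + ENNReal.ofReal 64 * II u R := by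
  unfold Dsup
  refine iSup₂_le fun δ hδ => ?_
  have hδ0 := hδ.1
  refine le_trans ?_ (add_le_add_left (le_iSup₂ (f := fun δ (_ : δ ∈ Set.Ioc (0 : ℝ) 1) => Dd u δ)
    δ hδ) _)
  unfold Dd
  set g := outf R (fun x => fu u x / x ^ 2) with hg
  have hgm : Measurable g := measurable_outf (by have := hu.cont_fu.measurable; fun_prop) R
  have hgn : ∀ x, 0 ≤ g x :=
    outf_nonneg (fun x => div_nonneg (fu_nonneg u x) (sq_nonneg x)) R
  have hmain : ∫⁻ x, ENNReal.ofReal (chord2 (tr R u) (x + δ) x) ≤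
      (∫⁻ x, ENNReal.ofReal (chord2 u (x + δ) x)) +
        ENNReal.ofReal (16 * δ ^ 2) * (II u R + II u R) := by
    have e1 : ∫⁻ x, ENNReal.ofReal (g (x + δ)) = II u R :=
      lintegral_add_right_eq_self (fun x => ENNReal.ofReal (g x)) δ
    have e2 : ∫⁻ x, ENNReal.ofReal (g x) = II u R := rfl
    have e3 : ENNReal.ofReal (16 * δ ^ 2) * (II u R + II u R) =
        ∫⁻ x, ENNReal.ofReal (16 * δ ^ 2) * (ENNReal.ofReal (g (x + δ)) + ENNReal.ofReal (g x)) := by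
      rw [lintegral_const_mul _ (by fun_prop), lintegral_add_left (by fun_prop), e1, e2]
    rw [e3, ← lintegral_add_right _ (by fun_prop)]
    refine lintegral_mono fun x => ?_
    have hd : |x + δ - x| ≤ 1 := by
      rw [add_sub_cancel_left, abs_of_pos hδ0]; exact hδ.2
    have h1 := ims_chord hu hR hd
    have h2 := exch_point hu hR hd
    rw [add_sub_cancel_left] at h2
    rw [← ENNReal.ofReal_add (hgn _) (hgn _), ← ENNReal.ofReal_mul (by positivity),
      ← ENNReal.ofReal_add (chord2_nonneg _ _ _) (by have := hgn x; have := hgn (x + δ); positivity)]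
    exact ENNReal.ofReal_le_ofReal (by linarith)
  refine (mul_le_mul_right hmain _).trans ?_
  rw [mul_add, ← mul_assoc, ← ENNReal.ofReal_mul (by positivity), ← two_mul, ← mul_assoc]
  gcongr
  rw [show (2 : ℝ≥0∞) = ENNReal.ofReal 2 by simp, ← ENNReal.ofReal_mul (by positivity)]
  refine ENNReal.ofReal_le_ofReal (le_of_eq ?_)
  field_simp; norm_num

/-- Pointwise bound for the error term in `ims_field`. A pair with both points outside `[-R, R]` is
controlled by a Lorentz kernel of width `R`; for a mixed pair the difference of the cutoffs vanishes
unless the outer point lies beyond `2R`, where `1 / (s - t)²` is comparable to `1 / s²`. -/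
lemma field_point (u : ℝ → ℝ) {R : ℝ} (hR : 1 ≤ R) (s t : ℝ) :
    fu u s * fu u t * sin (zt R s - zt R t) ^ 2 / (s - t) ^ 2 ≤
      4 * (outf R (fun x => fu u x / x ^ 2) s * inf' R (fu u) t) +
      4 * (inf' R (fu u) s * outf R (fun x => fu u x / x ^ 2) t) +
      (1 / 2) * (outf R (fun x => fu u x ^ 2) s * (2 * (2 / R) ^ 2 / (1 + (2 / R) ^ 2 * (s - t) ^ 2)) +
        outf R (fun x => fu u x ^ 2) t * (2 * (2 / R) ^ 2 / (1 + (2 / R) ^ 2 * (t - s) ^ 2))) := by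
  have hR0 : 0 < R := by linarith
  have hfs := fu_nonneg u s
  have hft := fu_nonneg u t
  have far : ∀ s t : ℝ, R < |s| → |t| ≤ R →
      fu u s * fu u t * sin (zt R s - zt R t) ^ 2 / (s - t) ^ 2 ≤
        4 * (fu u s / s ^ 2 * fu u t) := by
    intro s t hs ht
    have hfs := fu_nonneg u s
    have hft := fu_nonneg u t
    rcases le_or_gt |s| (2 * R) with h | h
    · rw [zt_core hR0 h, zt_core hR0 (by linarith)]
      simp only [sub_self, sin_zero]
      have : 0 ≤ 4 * (fu u s / s ^ 2 * fu u t) := by positivity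
      simpa using this
    · have h1 : |s| / 2 ≤ |s - t| := by
        have := abs_sub_abs_le_abs_sub s t; linarith
      have h2 : s ^ 2 / 4 ≤ (s - t) ^ 2 := by
        rw [← sq_abs, ← sq_abs (s - t)]; nlinarith [abs_nonneg s]
      have hs2 : 0 < s ^ 2 := by rw [← sq_abs]; have : 0 < |s| := by linarith
                                 positivity
      have h3 : sin (zt R s - zt R t) ^ 2 ≤ 1 := sin_sq_le_one _
      have e : 4 * (fu u s / s ^ 2 * fu u t) = fu u s * fu u t * 1 / (s ^ 2 / 4) := by
        field_simp
      rw [e]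
      gcongr
  have hl : ∀ q : ℝ, 0 ≤ 2 * (2 / R) ^ 2 / (1 + (2 / R) ^ 2 * q ^ 2) := fun q => by positivity
  rcases le_or_gt |s| R with hs | hs <;> rcases le_or_gt |t| R with ht | ht
  · rw [zt_core hR0 (by linarith), zt_core hR0 (by linarith)]
    simp [outf, inf', hs.not_gt, ht.not_gt]
  · have := far t s ht hs
    simp only [outf, inf', if_neg hs.not_gt, if_pos ht, if_pos hs, if_neg ht.not_ge]
    rw [show zt R s - zt R t = -(zt R t - zt R s) by ring, sin_neg, neg_sq,
      show (s - t) ^ 2 = (t - s) ^ 2 by ring, mul_comm (fu u s)]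
    have := mul_nonneg (sq_nonneg (fu u t)) (hl (t - s))
    nlinarith
  · have := far s t hs ht
    simp only [outf, inf', if_neg ht.not_gt, if_pos ht, if_pos hs, if_neg hs.not_ge]
    have := mul_nonneg (sq_nonneg (fu u s)) (hl (s - t))
    nlinarith
  · simp only [outf, inf', if_pos ht, if_pos hs, if_neg hs.not_ge, if_neg ht.not_ge]
    rw [show (t - s) ^ 2 = (s - t) ^ 2 by ring]
    have h1 : sin (zt R s - zt R t) ^ 2 ≤ 1 := sin_sq_le_one _
    have h2 : sin (zt R s - zt R t) ^ 2 ≤ (2 / R) ^ 2 * (s - t) ^ 2 := by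
      rw [← mul_pow, ← sq_abs, ← sq_abs (2 / R * (s - t)), abs_mul,
        abs_of_pos (by positivity : 0 < 2 / R)]
      exact pow_le_pow_left₀ (abs_nonneg _) (Real.abs_sin_le_abs.trans (zt_lip hR0 s t)) 2
    have h3 : sin (zt R s - zt R t) ^ 2 / (s - t) ^ 2 ≤
        2 * (2 / R) ^ 2 / (1 + (2 / R) ^ 2 * (s - t) ^ 2) := by
      rcases eq_or_ne s t with rfl | hne
      · simpa using hl 0
      · have : 0 < (s - t) ^ 2 := by have := sub_ne_zero.2 hne; positivity
        rw [div_le_div_iff₀ this (by positivity)]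
        nlinarith [mul_nonneg (sq_nonneg (2 / R)) this.le]
    have h4 := mul_le_mul_of_nonneg_left h3 (mul_nonneg hfs hft)
    have h5 := hl (s - t)
    rw [mul_div_assoc]
    nlinarith [mul_nonneg h5 (sq_nonneg (fu u s - fu u t))]

/-- Stray-field energy created by the truncation. -/
lemma field_cost {r : ℝ} {u : ℝ → ℝ} (hu : Cls r u) {R : ℝ} (hR : 1 ≤ R) :
    Nst (fu (tr R u)) ≤ Nst (fu u) +
      (ENNReal.ofReal 64 * (mm u R * II u R) + ENNReal.ofReal (64 / R) * Tt u R) := by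
  have hR0 : 0 < R := by linarith
  set a := outf R (fun x => fu u x / x ^ 2) with ha
  set b := inf' R (fu u) with hb
  set q := outf R (fun x => fu u x ^ 2) with hq
  set κ : ℝ → ℝ := fun x => 2 * (2 / R) ^ 2 / (1 + (2 / R) ^ 2 * x ^ 2) with hκ
  have hfm : Measurable (fu u) := hu.cont_fu.measurable
  have ham : Measurable a := measurable_outf (by fun_prop) R
  have hbm : Measurable b := measurable_inf' hfm R
  have hqm : Measurable q := measurable_outf (by fun_prop) R
  have hκm : Measurable κ := by fun_prop
  have han : ∀ x, 0 ≤ a x := outf_nonneg (fun x => div_nonneg (fu_nonneg u x) (sq_nonneg x)) R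
  have hbn : ∀ x, 0 ≤ b x := inf'_nonneg (fu_nonneg u) R
  have hqn : ∀ x, 0 ≤ q x := outf_nonneg (fun x => sq_nonneg _) R
  have hκn : ∀ x, 0 ≤ κ x := fun x => by simp only [hκ]; positivity
  have iκ : ∀ s, ∫⁻ t, ENNReal.ofReal (κ (s - t)) = ENNReal.ofReal (4 / R * π) := by
    intro s
    rw [lintegral_sub_left_eq_self (fun x => ENNReal.ofReal (κ x)) s,
      lintegral_lorentz (by positivity : 0 < 2 / R)]
    congr 1; ring
  have i1 : ∫⁻ z : ℝ × ℝ, ENNReal.ofReal (a z.1) * ENNReal.ofReal (b z.2) = mm u R * II u R := by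
    rw [Measure.volume_eq_prod, mul_comm]
    exact lintegral_prod_mul (f := fun x => ENNReal.ofReal (a x))
      (g := fun x => ENNReal.ofReal (b x)) (by fun_prop) (by fun_prop)
  have i2 : ∫⁻ z : ℝ × ℝ, ENNReal.ofReal (b z.1) * ENNReal.ofReal (a z.2) = mm u R * II u R := by
    rw [Measure.volume_eq_prod]
    exact lintegral_prod_mul (f := fun x => ENNReal.ofReal (b x))
      (g := fun x => ENNReal.ofReal (a x)) (by fun_prop) (by fun_prop)
  have i3 : ∫⁻ z : ℝ × ℝ, ENNReal.ofReal (q z.1) * ENNReal.ofReal (κ (z.1 - z.2)) =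
      ENNReal.ofReal (4 / R * π) * Tt u R := by
    rw [Measure.volume_eq_prod, lintegral_prod _ (by fun_prop)]
    simp only []
    have : ∀ s, ∫⁻ t, ENNReal.ofReal (q s) * ENNReal.ofReal (κ (s - t)) =
        ENNReal.ofReal (4 / R * π) * ENNReal.ofReal (q s) := by
      intro s
      rw [lintegral_const_mul _ (by fun_prop), iκ, mul_comm]
    simp_rw [this]
    rw [lintegral_const_mul _ (by fun_prop)]; rfl
  have i4 : ∫⁻ z : ℝ × ℝ, ENNReal.ofReal (q z.2) * ENNReal.ofReal (κ (z.2 - z.1)) =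
      ENNReal.ofReal (4 / R * π) * Tt u R := by
    rw [← i3, Measure.volume_eq_prod]
    exact (lintegral_prod_swap
      (fun z : ℝ × ℝ => ENNReal.ofReal (q z.1) * ENNReal.ofReal (κ (z.1 - z.2))))
  have hmain : ∫⁻ z : ℝ × ℝ, ENNReal.ofReal ((fu (tr R u) z.1 - fu (tr R u) z.2) ^ 2 /
        (z.1 - z.2) ^ 2) ≤
      (∫⁻ z : ℝ × ℝ, ENNReal.ofReal ((fu u z.1 - fu u z.2) ^ 2 / (z.1 - z.2) ^ 2)) +
      (ENNReal.ofReal 8 * (mm u R * II u R) + ENNReal.ofReal 8 * (mm u R * II u R) +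
        (ENNReal.ofReal (4 / R * π) * Tt u R + ENNReal.ofReal (4 / R * π) * Tt u R)) := by
    rw [← i3]
    nth_rewrite 2 [i3]
    rw [← i4]
    nth_rewrite 1 [← i1]
    rw [← i2, ← lintegral_const_mul _ (by fun_prop), ← lintegral_const_mul _ (by fun_prop),
      ← lintegral_add_left (by fun_prop), ← lintegral_add_left (by fun_prop),
      ← lintegral_add_left (by fun_prop), ← lintegral_add_left (by fun_prop)]
    refine lintegral_mono fun z => ?_
    obtain ⟨s, t⟩ := z
    simp only []
    have h1 := field_point u hR s t
    have h2 := ims_field (zt R s) (zt R t) (fu u s) (fu u t)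
    have A1 := mul_nonneg (han s) (hbn t)
    have A2 := mul_nonneg (hbn s) (han t)
    have A3 := mul_nonneg (hqn s) (hκn (s - t))
    have A4 := mul_nonneg (hqn t) (hκn (t - s))
    rw [← ENNReal.ofReal_mul (han s), ← ENNReal.ofReal_mul (hbn s), ← ENNReal.ofReal_mul (hqn s),
      ← ENNReal.ofReal_mul (hqn t), ← ENNReal.ofReal_mul (by norm_num),
      ← ENNReal.ofReal_mul (by norm_num), ← ENNReal.ofReal_add (by positivity) (by positivity),
      ← ENNReal.ofReal_add (by positivity) (by positivity),
      ← ENNReal.ofReal_add (by positivity) (by positivity),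
      ← ENNReal.ofReal_add (by positivity) (by positivity)]
    refine ENNReal.ofReal_le_ofReal ?_
    rw [fu_tr, fu_tr]
    have h3 := div_le_div_of_nonneg_right h2 (sq_nonneg (s - t))
    rw [add_div] at h3
    refine h3.trans ?_
    have h4 : 2 * (fu u s * fu u t) * sin (zt R s - zt R t) ^ 2 / (s - t) ^ 2 =
      2 * (fu u s * fu u t * sin (zt R s - zt R t) ^ 2 / (s - t) ^ 2) := by ring
    rw [h4]
    simp only [ha, hb, hq, hκ] at A1 A2 A3 A4 ⊢
    linarith
  unfold Nst
  refine (mul_le_mul_right hmain _).trans ?_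
  rw [mul_add]
  gcongr
  rw [← two_mul, ← two_mul, show (2 : ℝ≥0∞) = ENNReal.ofReal 2 by simp, mul_add]
  simp only [← mul_assoc]
  rw [← ENNReal.ofReal_mul (by positivity), ← ENNReal.ofReal_mul (by positivity),
    ← ENNReal.ofReal_mul (by positivity)]
  have hpi := Real.pi_gt_three
  gcongr
  · rw [div_mul_eq_mul_div, div_mul_eq_mul_div, div_le_iff₀ (by positivity)]
    nlinarith
  · rw [show 1 / (4 * π) * 2 * (4 / R * π) = 2 / R by field_simp]
    gcongr; norm_num

/-- The truncation removes all anisotropy energy beyond `3R`. -/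
lemma aniso_cost {r : ℝ} {u : ℝ → ℝ} (hu : Cls r u) {R : ℝ} (hR : 1 ≤ R) :
    Pe (fu (tr R u)) + ENNReal.ofReal (1 / 2) * Tt u (3 * R) ≤ Pe (fu u) := by
  unfold Pe Tt
  rw [← mul_add]
  gcongr
  have hR0 : 0 < R := by linarith
  have hm : Measurable fun x => ENNReal.ofReal (outf (3 * R) (fun x => fu u x ^ 2) x) :=
    (measurable_outf (by have := hu.cont_fu.measurable; fun_prop) _).ennreal_ofReal
  rw [← lintegral_add_right _ hm]
  refine lintegral_mono fun x => ?_
  rw [← ENNReal.ofReal_add (sq_nonneg _) (outf_nonneg (fun x => sq_nonneg _) _ _)]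
  refine ENNReal.ofReal_le_ofReal ?_
  rcases lt_or_ge (3 * R) |x| with h | h
  · have : fu (tr R u) x = 0 := by simp [fu, tr_far u hR0 h.le]
    simp [this, outf, h]
  · simp only [outf, if_neg h.not_gt, add_zero, fu_tr]
    have h1 := cos_zt_mem R x
    have h2 : cos (zt R x) ^ 2 ≤ 1 := by nlinarith
    have := fu_nonneg u x
    exact pow_le_pow_left₀ (by positivity) (mul_le_of_le_one_left this h2) 2

/-- Total cost of truncating at scale `R`, with the removed tail on the left-hand side. -/
lemma trunc_cost {r : ℝ} {u : ℝ → ℝ} (hu : Cls r u) {R : ℝ} (hR : 1 ≤ R) :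
    En (tr R u) + ENNReal.ofReal (1 / 2) * Tt u (3 * R) ≤
      En u + (ENNReal.ofReal 64 * ((1 + mm u R) * II u R) + ENNReal.ofReal (64 / R) * Tt u R) := by
  have h1 := exch_cost hu hR
  have h2 := field_cost hu hR
  have h3 := aniso_cost hu hR
  unfold En
  calc _ = Dsup (tr R u) + (Pe (fu (tr R u)) + ENNReal.ofReal (1 / 2) * Tt u (3 * R)) +
        Nst (fu (tr R u)) := by ring
    _ ≤ (Dsup u + ENNReal.ofReal 64 * II u R) + Pe (fu u) + (Nst (fu u) +
      (ENNReal.ofReal 64 * (mm u R * II u R) + ENNReal.ofReal (64 / R) * Tt u R)) := by gcongr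
    _ = _ := by ring

/-! ### Tail estimates for almost minimizers -/

/-- Infimum of the relaxed energy over profiles of winding number one. -/
def m1 (r : ℝ) : ℝ≥0∞ := ⨅ u, ⨅ _ : Cls r u, En u

lemma m1_le {r : ℝ} {u : ℝ → ℝ} (hu : Cls r u) : m1 r ≤ En u := iInf₂_le u hu

lemma Tt_le_int (u : ℝ → ℝ) (R : ℝ) : Tt u R ≤ ∫⁻ x, ENNReal.ofReal (fu u x ^ 2) := by
  refine lintegral_mono fun x => ENNReal.ofReal_le_ofReal ?_
  unfold outf; split_ifs
  · exact le_rfl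
  · positivity

lemma int_le_En (u : ℝ → ℝ) : ∫⁻ x, ENNReal.ofReal (fu u x ^ 2) ≤ 2 * En u := by
  have h : ∫⁻ x, ENNReal.ofReal (fu u x ^ 2) = 2 * Pe (fu u) := by
    unfold Pe
    rw [← mul_assoc, show (2 : ℝ≥0∞) = ENNReal.ofReal 2 by simp,
      ← ENNReal.ofReal_mul (by norm_num)]
    norm_num
  rw [h]
  gcongr
  unfold En
  exact le_add_right (le_add_left le_rfl)

lemma mm_mono (u : ℝ → ℝ) {R R' : ℝ} (h : R ≤ R') : mm u R ≤ mm u R' := by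
  refine lintegral_mono fun x => ENNReal.ofReal_le_ofReal ?_
  unfold inf'
  split_ifs with h1 h2
  · exact le_rfl
  · exact absurd (h1.trans h) h2
  · exact fu_nonneg u x
  · exact le_rfl

/-- Young's inequality for the weighted tail. -/
lemma II_le {u : ℝ → ℝ} (hfm : Measurable (fu u)) {R a : ℝ} (hR : 0 < R) (ha : 0 < a) :
    II u R ≤ ENNReal.ofReal a * Tt u R + ENNReal.ofReal (4 / R ^ 3 / a) := by
  have h1 : ENNReal.ofReal (1 / (2 * a * R ^ 2)) *
      ∫⁻ x : ℝ, ENNReal.ofReal (2 * (1 / R) ^ 2 / (1 + (1 / R) ^ 2 * x ^ 2)) ≤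
        ENNReal.ofReal (4 / R ^ 3 / a) := by
    rw [lintegral_lorentz (by positivity), ← ENNReal.ofReal_mul (by positivity)]
    refine ENNReal.ofReal_le_ofReal ?_
    rw [show 1 / (2 * a * R ^ 2) * (2 * (1 / R) * π) = π / R ^ 3 / a by field_simp]
    have := Real.pi_le_four
    gcongr
  refine le_trans ?_ (add_le_add_right h1 _)
  have hm : Measurable fun x => ENNReal.ofReal (outf R (fun x => fu u x ^ 2) x) :=
    (measurable_outf (by fun_prop) _).ennreal_ofReal
  unfold II Tt
  rw [← lintegral_const_mul _ hm, ← lintegral_const_mul _ (by fun_prop),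
    ← lintegral_add_left (by fun_prop)]
  refine lintegral_mono fun x => ?_
  have hl : 0 ≤ 2 * (1 / R) ^ 2 / (1 + (1 / R) ^ 2 * x ^ 2) := by positivity
  rw [← ENNReal.ofReal_mul ha.le, ← ENNReal.ofReal_mul (by positivity), ← ENNReal.ofReal_add
    (mul_nonneg ha.le (outf_nonneg (fun x => sq_nonneg _) _ _)) (by positivity)]
  refine ENNReal.ofReal_le_ofReal ?_
  unfold outf
  split_ifs with h
  · have hx : R ^ 2 < x ^ 2 := by rw [← sq_abs x]; gcongr
    have hx0 : 0 < x ^ 2 := lt_trans (by positivity) hx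
    have e : 1 / (2 * a * R ^ 2) * (2 * (1 / R) ^ 2 / (1 + (1 / R) ^ 2 * x ^ 2)) =
        1 / a * (1 / (R ^ 2 * (R ^ 2 + x ^ 2))) := by field_simp
    have h2 : 1 / (x ^ 2) ^ 2 / 2 ≤ 1 / (R ^ 2 * (R ^ 2 + x ^ 2)) := by
      rw [div_div]
      refine one_div_le_one_div_of_le (by positivity) ?_
      nlinarith [sq_nonneg R]
    rw [e]
    have h3 : fu u x / x ^ 2 ≤ a * fu u x ^ 2 + 1 / a * (1 / (x ^ 2) ^ 2 / 2) := by
      have : 0 ≤ (a * fu u x - 1 / x ^ 2) ^ 2 / a := by positivity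
      have e2 : (a * fu u x - 1 / x ^ 2) ^ 2 / a =
        a * fu u x ^ 2 - 2 * (fu u x / x ^ 2) + 1 / a * (1 / (x ^ 2) ^ 2) := by
          have : x ≠ 0 := by rintro rfl; simp at hx0
          field_simp
          ring
      have := mul_nonneg ha.le (sq_nonneg (fu u x))
      nlinarith
    refine h3.trans ?_
    gcongr
  · positivity

lemma inf'_vol (R c : ℝ) :
    ∫⁻ x : ℝ, ENNReal.ofReal (inf' R (fun _ => c) x) = ENNReal.ofReal c * ENNReal.ofReal (2 * R) := by
  have : (fun x : ℝ => ENNReal.ofReal (inf' R (fun _ => c) x)) =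
      (Set.Icc (-R) R).indicator (fun _ => ENNReal.ofReal c) := by
    funext x
    unfold inf' Set.indicator
    simp only [Set.mem_Icc, ← abs_le]
    split_ifs <;> simp
  rw [this, lintegral_indicator measurableSet_Icc, lintegral_const, Measure.restrict_apply .univ,
    Set.univ_inter, Real.volume_Icc]
  congr 2; ring

/-- Young's inequality for the core mass. -/
lemma mm_le {u : ℝ → ℝ} (hfm : Measurable (fu u)) {R e : ℝ} (he : 0 < e) :
    mm u R ≤ ENNReal.ofReal (e / 2) * (∫⁻ x, ENNReal.ofReal (fu u x ^ 2)) +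
      ENNReal.ofReal (R / e) := by
  have h1 : ∫⁻ x : ℝ, ENNReal.ofReal (inf' R (fun _ => 1 / (2 * e)) x) = ENNReal.ofReal (R / e) := by
    rw [inf'_vol R, ← ENNReal.ofReal_mul (by positivity)]
    congr 1; field_simp
  rw [← h1, ← lintegral_const_mul _ (by fun_prop), ← lintegral_add_left (by fun_prop)]
  refine lintegral_mono fun x => ?_
  rw [← ENNReal.ofReal_mul (by positivity), ← ENNReal.ofReal_add (by positivity)
    (inf'_nonneg (fun _ => by positivity) _ _)]
  refine ENNReal.ofReal_le_ofReal ?_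
  unfold inf'
  split_ifs
  · have : 0 ≤ (e * fu u x - 1) ^ 2 / e := by positivity
    have e2 : (e * fu u x - 1) ^ 2 / e = 2 * (e / 2 * fu u x ^ 2 - fu u x + 1 / (2 * e)) := by
      field_simp
      ring
    linarith
  · positivity

lemma le_mm {r : ℝ} {u : ℝ → ℝ} (hu : Cls r u) {R : ℝ} (hR : r ≤ R) :
    ENNReal.ofReal (2 * r) ≤ mm u R := by
  refine le_trans ?_ (mm_mono u hR)
  have := inf'_vol r 1
  rw [ENNReal.ofReal_one, one_mul] at this
  rw [← this]
  refine lintegral_mono fun x => ENNReal.ofReal_le_ofReal ?_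
  unfold inf'
  split_ifs with h
  · have := hu.core x h; unfold fu; linarith
  · exact le_rfl

/-- The truncation estimate in real numbers, combined with Young's inequality. -/
lemma trunc_real {r : ℝ} {u : ℝ → ℝ} (hu : Cls r u) (hfin : En u < ⊤) {R : ℝ} (hR : 1 ≤ R)
    {a : ℝ} (ha : 0 < a) :
    En (tr R u) < ⊤ ∧ Tt u R < ⊤ ∧ mm u R < ⊤ ∧
    (En (tr R u)).toReal + 1 / 2 * (Tt u (3 * R)).toReal ≤ (En u).toReal +
      (64 * ((1 + (mm u R).toReal) * (a * (Tt u R).toReal + 4 / R ^ 3 / a)) +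
        64 / R * (Tt u R).toReal) := by
  have hR0 : 0 < R := by linarith
  have hfm : Measurable (fu u) := hu.cont_fu.measurable
  have hsq : ∫⁻ x, ENNReal.ofReal (fu u x ^ 2) < ⊤ :=
    (int_le_En u).trans_lt (ENNReal.mul_lt_top (by simp) hfin)
  have hT : ∀ R, Tt u R < ⊤ := fun R => (Tt_le_int u R).trans_lt hsq
  have hm : mm u R < ⊤ := (mm_le hfm one_pos).trans_lt
    (ENNReal.add_lt_top.2 ⟨ENNReal.mul_lt_top (by simp) hsq, by simp⟩)
  have h1 := trunc_cost hu hR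
  have h2 := II_le hfm hR0 ha
  have h3 : En (tr R u) + ENNReal.ofReal (1 / 2) * Tt u (3 * R) ≤ En u +
      (ENNReal.ofReal 64 * ((1 + mm u R) *
        (ENNReal.ofReal a * Tt u R + ENNReal.ofReal (4 / R ^ 3 / a))) +
        ENNReal.ofReal (64 / R) * Tt u R) := h1.trans (by gcongr)
  rw [← ENNReal.ofReal_toReal hfin.ne, ← ENNReal.ofReal_toReal (hT R).ne,
    ← ENNReal.ofReal_toReal (hT (3 * R)).ne, ← ENNReal.ofReal_toReal hm.ne, ← ENNReal.ofReal_one,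
    ← ENNReal.ofReal_mul ha.le, ← ENNReal.ofReal_add (by positivity) (by positivity),
    ← ENNReal.ofReal_add (by positivity) (by positivity), ← ENNReal.ofReal_mul (by positivity),
    ← ENNReal.ofReal_mul (by positivity), ← ENNReal.ofReal_mul (by positivity),
    ← ENNReal.ofReal_mul (by positivity),
    ← ENNReal.ofReal_add (by positivity) (by positivity),
    ← ENNReal.ofReal_add (by positivity) (by positivity)] at h3
  have hE : En (tr R u) < ⊤ := lt_of_le_of_lt le_self_add (h3.trans_lt ENNReal.ofReal_lt_top)
  refine ⟨hE, hT R, hm, ?_⟩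
  rw [← ENNReal.ofReal_toReal hE.ne, ← ENNReal.ofReal_add (by positivity) (by positivity)] at h3
  exact (ENNReal.ofReal_le_ofReal_iff (by positivity)).1 h3

set_option maxHeartbeats 1600000 in
/-- Three successive truncations: an almost minimizer can be cut off at scale `r²` at a cost of
order `r⁻⁵`, which is smaller than the interaction energy of order `r⁻⁴`. -/
lemma three_pass {r0 M : ℝ} (h0 : r0 ≤ 1) (hM : 0 ≤ M)
    (hMm : ENNReal.ofReal M ≤ m1 r0) : ∃ C : ℝ, 0 < C ∧ ∀ r : ℝ, 1 ≤ r → ∀ u, Cls r0 u →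
      En u < ⊤ → (En u).toReal ≤ M + (1 / r) ^ 5 →
      (En (tr (9 * r ^ 2) u)).toReal ≤
        M + C * (1 + (mm u (9 * r ^ 2)).toReal) ^ 2 * (1 / r) ^ 5 := by
  set A := 2 * (M + 1) with hA
  have hA0 : 0 ≤ A := by positivity
  set C := A + 1 with hC
  set C1 := 2 * (1 + 64 * ((1 + C) * (A + 4)) + 64 * A) with hC1
  set C2 := 2 * (1 + 64 * (C1 + 4) + 64 * C1) with hC2
  have hC0 : 0 ≤ C := by positivity
  have hC10 : 0 ≤ C1 := by positivity
  have hC20 : 0 ≤ C2 := by positivity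
  refine ⟨1 + 64 * (C2 + 4) + 64 * C2, by positivity, fun r hr u hu hfin hE => ?_⟩
  have hr0 : 0 < r := by linarith
  set q := 1 / r with hq
  have hq0 : 0 < q := by positivity
  have hq1 : q ≤ 1 := by rw [hq, div_le_one hr0]; exact hr
  have hrq : r = 1 / q := by rw [hq]; field_simp
  have hR : 1 ≤ r ^ 2 := one_le_pow₀ hr
  have hfm : Measurable (fu u) := hu.cont_fu.measurable
  have low : ∀ R : ℝ, 1 ≤ R → En (tr R u) < ⊤ → M ≤ (En (tr R u)).toReal := by
    intro R hR h
    have := hMm.trans (m1_le (hu.tr hR (h0.trans hR)))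
    rwa [← ENNReal.ofReal_toReal h.ne, ENNReal.ofReal_le_ofReal_iff (by positivity)] at this
  have hsq : ∫⁻ x, ENNReal.ofReal (fu u x ^ 2) ≤ ENNReal.ofReal A := by
    refine (int_le_En u).trans ?_
    rw [← ENNReal.ofReal_toReal hfin.ne, show (2 : ℝ≥0∞) = ENNReal.ofReal 2 by simp,
      ← ENNReal.ofReal_mul (by positivity)]
    refine ENNReal.ofReal_le_ofReal ?_
    have : q ^ 5 ≤ 1 := pow_le_one₀ hq0.le hq1
    rw [hA]; linarith
  have hT0 : (Tt u (r ^ 2)).toReal ≤ A :=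
    ENNReal.toReal_le_of_le_ofReal hA0 ((Tt_le_int u _).trans hsq)
  have hm0 : (mm u (r ^ 2)).toReal * q ≤ C := by
    have h := mm_le hfm (R := r ^ 2) hr0
    have h2 : mm u (r ^ 2) ≤ ENNReal.ofReal (r / 2 * A + r ^ 2 / r) := by
      rw [ENNReal.ofReal_add (by positivity) (by positivity), ENNReal.ofReal_mul (by positivity)]
      exact h.trans (by gcongr)
    have h3 := ENNReal.toReal_le_of_le_ofReal (by positivity) h2
    calc _ ≤ (r / 2 * A + r ^ 2 / r) * q := by gcongr
      _ = A / 2 + 1 := by rw [hq]; field_simp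
      _ ≤ C := by rw [hC]; linarith
  have p1 := trunc_real hu hfin hR (a := q ^ 3) (by positivity)
  have p2 := trunc_real hu hfin (R := 3 * r ^ 2) (by linarith) (a := q ^ 2) (by positivity)
  have p3 := trunc_real hu hfin (R := 9 * r ^ 2) (by linarith) (a := q) (by positivity)
  obtain ⟨f1, -, -, p1⟩ := p1
  obtain ⟨f2, -, -, p2⟩ := p2
  obtain ⟨f3, -, fm, p3⟩ := p3
  have l1 := low _ hR f1
  have l2 := low _ (by linarith) f2
  rw [show 3 * (3 * r ^ 2) = 9 * r ^ 2 by ring] at p2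
  have hm3 : (mm u (3 * r ^ 2)).toReal ≤ (mm u (9 * r ^ 2)).toReal :=
    ENNReal.toReal_mono fm.ne (mm_mono u (by linarith))
  have e1 : 4 / (r ^ 2) ^ 3 / q ^ 3 = 4 * q ^ 3 := by rw [hrq]; field_simp
  have e2 : 4 / (3 * r ^ 2) ^ 3 / q ^ 2 = 4 / 27 * q ^ 4 := by rw [hrq]; field_simp; norm_num
  have e3 : 4 / (9 * r ^ 2) ^ 3 / q = 4 / 729 * q ^ 5 := by rw [hrq]; field_simp; norm_num
  have g1 : 64 / r ^ 2 = 64 * q ^ 2 := by rw [hrq]; field_simp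
  have g2 : 64 / (3 * r ^ 2) = 64 / 3 * q ^ 2 := by rw [hrq]; field_simp
  have g3 : 64 / (9 * r ^ 2) = 64 / 9 * q ^ 2 := by rw [hrq]; field_simp
  rw [e1, g1] at p1
  rw [e2, g2] at p2
  rw [e3, g3] at p3
  set m := (mm u (9 * r ^ 2)).toReal with hm
  have hmn : 0 ≤ m := ENNReal.toReal_nonneg
  have hm' : 0 ≤ (mm u (r ^ 2)).toReal := ENNReal.toReal_nonneg
  have hT1 : (Tt u (3 * r ^ 2)).toReal ≤ C1 * q ^ 2 := by
    have b1 : (1 + (mm u (r ^ 2)).toReal) * (q ^ 3 * (Tt u (r ^ 2)).toReal + 4 * q ^ 3) ≤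
        (1 + C) * (A + 4) * q ^ 2 := by
      calc _ ≤ (1 + (mm u (r ^ 2)).toReal) * (q ^ 3 * A + 4 * q ^ 3) := by gcongr
        _ = (q + (mm u (r ^ 2)).toReal * q) * (A + 4) * q ^ 2 := by ring
        _ ≤ (1 + C) * (A + 4) * q ^ 2 := by gcongr
    have b2 : q ^ 2 * (Tt u (r ^ 2)).toReal ≤ q ^ 2 * A := by gcongr
    have b3 : q ^ 5 ≤ q ^ 2 := pow_le_pow_of_le_one hq0.le hq1 (by norm_num)
    rw [hC1]
    linarith
  have hT2 : (Tt u (9 * r ^ 2)).toReal ≤ C2 * (1 + m) * q ^ 4 := by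
    have b1 : (1 + (mm u (3 * r ^ 2)).toReal) *
        (q ^ 2 * (Tt u (3 * r ^ 2)).toReal + 4 / 27 * q ^ 4) ≤
        (1 + m) * ((C1 + 4) * q ^ 4) := by
      calc _ ≤ (1 + m) * (q ^ 2 * (C1 * q ^ 2) + 4 * q ^ 4) := by gcongr; norm_num
        _ = _ := by ring
    have b2 : q ^ 2 * (Tt u (3 * r ^ 2)).toReal ≤ q ^ 2 * (C1 * q ^ 2) := by gcongr
    have b3 : q ^ 5 ≤ q ^ 4 := pow_le_pow_of_le_one hq0.le hq1 (by norm_num)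
    have b4 : 0 ≤ m * q ^ 4 := by positivity
    have b5 : 0 ≤ m * q ^ 4 * C1 := by positivity
    have b6 : 0 ≤ C1 * q ^ 4 := by positivity
    have b7 : C2 * (1 + m) * q ^ 4 = 2 * (q ^ 4 + m * q ^ 4 + 64 * ((1 + m) * ((C1 + 4) * q ^ 4)) +
      64 * (C1 * q ^ 4) + 64 * (m * q ^ 4 * C1)) := by rw [hC2]; ring
    rw [b7]
    linarith
  have b1 : (1 + m) * (q * (Tt u (9 * r ^ 2)).toReal + 4 / 729 * q ^ 5) ≤
      (C2 + 4) * (1 + m) ^ 2 * q ^ 5 := by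
    calc _ ≤ (1 + m) * (q * (C2 * (1 + m) * q ^ 4) + 4 * (1 + m) * q ^ 5) := by
          gcongr
          nlinarith
      _ = _ := by ring
  have b2 : q ^ 2 * (Tt u (9 * r ^ 2)).toReal ≤ C2 * (1 + m) ^ 2 * q ^ 5 := by
    calc _ ≤ q ^ 2 * (C2 * (1 + m) * q ^ 4) := by gcongr
      _ = C2 * (1 + m) * (q * q ^ 5) := by ring
      _ ≤ C2 * (1 + m) ^ 2 * (1 * q ^ 5) := by gcongr; nlinarith
      _ = _ := by ring
  have b3 : q ^ 5 ≤ (1 + m) ^ 2 * q ^ 5 := by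
    have : 1 ≤ (1 + m) ^ 2 := by nlinarith
    nlinarith [pow_pos hq0 5]
  have b4 : 0 ≤ (Tt u (3 * (9 * r ^ 2))).toReal := ENNReal.toReal_nonneg
  have b5 : 0 ≤ C2 * (1 + m) ^ 2 * q ^ 5 := by positivity
  linarith

/-! ### Interaction gain of two separated profiles -/

/-- Two disjointly supported copies of `g` attract each other through the stray field: the gain is
at least a multiple of the squared core mass over the squared distance. -/
lemma Nst_pair {g : ℝ → ℝ} (hg : Continuous g) (hn : ∀ x, 0 ≤ g x) {S ρ D L : ℝ}
    (hS : ∀ x, S ≤ |x| → g x = 0) (hL : 2 * S < L) (hD : L + 2 * ρ ≤ D) (hD0 : 0 < D) :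
    Nst (fun x => g x + g (x - L)) + ENNReal.ofReal (1 / π / D ^ 2) *
      ((∫⁻ x, ENNReal.ofReal (inf' ρ g x)) * (∫⁻ x, ENNReal.ofReal (inf' ρ g x))) ≤
      2 * Nst g := by
  set b := inf' ρ g with hb
  set m := ∫⁻ x, ENNReal.ofReal (b x) with hm
  have hgm := hg.measurable
  have hbm : Measurable b := measurable_inf' hgm ρ
  have hbn : ∀ x, 0 ≤ b x := inf'_nonneg hn ρ
  have hbg : ∀ x, b x ≤ g x := by
    intro x; simp only [hb, inf']; split_ifs
    · exact le_rfl
    · exact hn x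
  have hbs : ∀ x, b x ≠ 0 → |x| ≤ ρ := by
    intro x hx
    by_contra h
    exact hx (by simp [hb, inf', h])
  have disj : ∀ x, g x * g (x - L) = 0 := by
    intro x
    rcases le_or_gt S |x| with h | h
    · rw [hS x h, zero_mul]
    · rw [hS (x - L), mul_zero]
      have := abs_sub_abs_le_abs_sub L x
      rw [abs_sub_comm] at this
      have := le_abs_self L
      linarith
  have i1 : ∫⁻ z : ℝ × ℝ, ENNReal.ofReal (b z.1) * ENNReal.ofReal (b (z.2 - L)) = m * m := by
    rw [Measure.volume_eq_prod]
    refine (lintegral_prod_mul (f := fun x => ENNReal.ofReal (b x))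
      (g := fun x => ENNReal.ofReal (b (x - L))) (by fun_prop) (by fun_prop)).trans ?_
    rw [lintegral_sub_right_eq_self (fun x => ENNReal.ofReal (b x)) L]
  have i2 : ∫⁻ z : ℝ × ℝ, ENNReal.ofReal (b (z.1 - L)) * ENNReal.ofReal (b z.2) = m * m := by
    rw [Measure.volume_eq_prod]
    refine (lintegral_prod_mul (f := fun x => ENNReal.ofReal (b (x - L)))
      (g := fun x => ENNReal.ofReal (b x)) (by fun_prop) (by fun_prop)).trans ?_
    rw [lintegral_sub_right_eq_self (fun x => ENNReal.ofReal (b x)) L]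
  have i3 : ∫⁻ z : ℝ × ℝ, ENNReal.ofReal ((g (z.1 - L) - g (z.2 - L)) ^ 2 / (z.1 - z.2) ^ 2) =
      ∫⁻ z : ℝ × ℝ, ENNReal.ofReal ((g z.1 - g z.2) ^ 2 / (z.1 - z.2) ^ 2) := by
    rw [← lintegral_sub_right_eq_self
      (fun z : ℝ × ℝ => ENNReal.ofReal ((g z.1 - g z.2) ^ 2 / (z.1 - z.2) ^ 2)) (L, L)]
    refine lintegral_congr fun z => ?_
    simp only [Prod.fst_sub, Prod.snd_sub, sub_sub_sub_cancel_right]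
  have hmain : (∫⁻ z : ℝ × ℝ, ENNReal.ofReal
      (((g z.1 + g (z.1 - L)) - (g z.2 + g (z.2 - L))) ^ 2 / (z.1 - z.2) ^ 2)) +
      ENNReal.ofReal (2 / D ^ 2) * (m * m + m * m) ≤
      (∫⁻ z : ℝ × ℝ, ENNReal.ofReal ((g z.1 - g z.2) ^ 2 / (z.1 - z.2) ^ 2)) +
      ∫⁻ z : ℝ × ℝ, ENNReal.ofReal ((g z.1 - g z.2) ^ 2 / (z.1 - z.2) ^ 2) := by
    nth_rewrite 1 [← i1]
    rw [← i2]
    nth_rewrite 2 [← i3]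
    rw [← lintegral_add_left (by fun_prop), ← lintegral_const_mul _ (by fun_prop),
      ← lintegral_add_left (by fun_prop), ← lintegral_add_left (by fun_prop)]
    refine lintegral_mono fun z => ?_
    obtain ⟨s, t⟩ := z
    simp only []
    have hB : 0 ≤ b s * b (t - L) + b (s - L) * b t :=
      add_nonneg (mul_nonneg (hbn _) (hbn _)) (mul_nonneg (hbn _) (hbn _))
    rw [← ENNReal.ofReal_mul (hbn _), ← ENNReal.ofReal_mul (hbn _),
      ← ENNReal.ofReal_add (mul_nonneg (hbn _) (hbn _)) (mul_nonneg (hbn _) (hbn _)),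
      ← ENNReal.ofReal_mul (by positivity), ← ENNReal.ofReal_add (by positivity) (by positivity),
      ← ENNReal.ofReal_add (by positivity) (by positivity)]
    refine ENNReal.ofReal_le_ofReal ?_
    have key : 2 / D ^ 2 * (b s * b (t - L) + b (s - L) * b t) ≤
        2 * (g s * g (t - L) + g (s - L) * g t) / (s - t) ^ 2 := by
      have one : ∀ s t : ℝ, b s * b (t - L) / D ^ 2 ≤ g s * g (t - L) / (s - t) ^ 2 := by
        intro s t
        have hr : 0 ≤ g s * g (t - L) / (s - t) ^ 2 :=
          div_nonneg (mul_nonneg (hn _) (hn _)) (sq_nonneg _)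
        by_cases h1 : b s = 0
        · simpa [h1] using hr
        by_cases h2 : b (t - L) = 0
        · simpa [h2] using hr
        have a1 := abs_le.1 (hbs s h1)
        have a2 := abs_le.1 (hbs _ h2)
        rcases eq_or_ne s t with rfl | hne
        · have d := disj s
          have : b s * b (s - L) ≤ g s * g (s - L) :=
            mul_le_mul (hbg _) (hbg _) (hbn _) (hn _)
          have h3 : b s * b (s - L) = 0 :=
            le_antisymm (this.trans d.le) (mul_nonneg (hbn _) (hbn _))
          simp [h3]
        have : 0 < (s - t) ^ 2 := by have := sub_ne_zero.2 hne; positivity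
        have h4 : (s - t) ^ 2 ≤ D ^ 2 := by
          apply sq_le_sq'
          · linarith
          · have hSρ : 0 ≤ S := by
              by_contra hS0
              exact h1 (le_antisymm ((hbg s).trans (hS s (by linarith [abs_nonneg s])).le) (hbn s))
            linarith
        have h5 := hn s
        have h6 := hn (t - L)
        have h7 := hbn (t - L)
        have h8 := hbg s
        have h9 := hbg (t - L)
        gcongr
      have o1 := one s t
      have o2 := one t s
      rw [show (t - s) ^ 2 = (s - t) ^ 2 by ring] at o2
      calc _ = 2 * (b s * b (t - L) / D ^ 2 + b t * b (s - L) / D ^ 2) := by ring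
        _ ≤ 2 * (g s * g (t - L) / (s - t) ^ 2 + g t * g (s - L) / (s - t) ^ 2) := by gcongr
        _ = _ := by ring
    have e : ((g s + g (s - L)) - (g t + g (t - L))) ^ 2 / (s - t) ^ 2 +
        2 * (g s * g (t - L) + g (s - L) * g t) / (s - t) ^ 2 =
        (g s - g t) ^ 2 / (s - t) ^ 2 + (g (s - L) - g (t - L)) ^ 2 / (s - t) ^ 2 := by
      rw [← add_div, ← add_div]
      congr 1
      linear_combination 2 * disj s + 2 * disj t
    linarith
  unfold Nst
  have hpi := Real.pi_pos
  calc _ = ENNReal.ofReal (1 / (4 * π)) * ((∫⁻ z : ℝ × ℝ, ENNReal.ofReal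
      (((g z.1 + g (z.1 - L)) - (g z.2 + g (z.2 - L))) ^ 2 / (z.1 - z.2) ^ 2)) +
      ENNReal.ofReal (2 / D ^ 2) * (m * m + m * m)) := by
        rw [mul_add, ← mul_assoc (ENNReal.ofReal (1 / (4 * π))), ← ENNReal.ofReal_mul (by positivity),
          ← two_mul, ← mul_assoc _ (2 : ℝ≥0∞), show (2 : ℝ≥0∞) = ENNReal.ofReal 2 by simp,
          ← ENNReal.ofReal_mul (by positivity)]
        congr 3
        field_simp; norm_num
    _ ≤ _ := mul_le_mul_right hmain _
    _ = _ := by rw [← two_mul]; ring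

/-- The double turn costs strictly less than twice a single turn. An almost minimizer with defect
`r⁻⁵` is truncated to a support of size `27 r²` and placed twice at distance about `54 r²`. With
`m ≥ 2 r0` its core mass, the interaction gains a multiple of `m² / r⁴` by `Nst_pair`, while the
truncation costs at most a multiple of `(1 + m)² / r⁵` by `three_pass`; the gain wins for large `r`. -/
lemma exists_gain {r0 : ℝ} (h0 : 0 < r0) (h1 : r0 ≤ 1) (hne : ∃ u, Cls r0 u)
    (hfin : ∀ u, Cls r0 u → En u < ⊤) :
    ∃ c > 0, ∃ u S, Cls r0 u ∧ 1 ≤ S ∧ (∀ x, S ≤ |x| → u x = 0) ∧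
      2 * Dsup u + 2 * Pe (fu u) + Nst (fun x => fu u x + fu u (x - (2 * S + 1))) +
        ENNReal.ofReal c ≤ 2 * m1 r0 := by
  have hm1 : m1 r0 < ⊤ := by
    obtain ⟨u, hu⟩ := hne
    exact (m1_le hu).trans_lt (hfin u hu)
  set M := (m1 r0).toReal with hM
  have hMe : ENNReal.ofReal M = m1 r0 := ENNReal.ofReal_toReal hm1.ne
  have hM0 : 0 ≤ M := ENNReal.toReal_nonneg
  obtain ⟨C, hC, hpass⟩ := three_pass h1 hM0 hMe.le
  have hpi := Real.pi_pos
  set κ := 1 / π / 73 ^ 2 with hκ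
  have hκ0 : 0 < κ := by positivity
  set B := 2 * C * (1 + 1 / (2 * r0)) ^ 2 with hB
  have hB0 : 0 < B := by positivity
  set r := max 1 (2 * B / κ) with hr
  have hr1 : 1 ≤ r := le_max_left _ _
  have hr0 : 0 < r := by linarith
  have hrB : B * (1 / r) ≤ κ / 2 := by
    have : 2 * B / κ ≤ r := le_max_right _ _
    rw [div_le_iff₀ hκ0] at this
    rw [mul_one_div, div_le_iff₀ hr0]; linarith
  set q := 1 / r with hq
  have hq0 : 0 < q := by positivity
  obtain ⟨u, hu, hlt⟩ : ∃ u, ∃ _ : Cls r0 u, En u < m1 r0 + ENNReal.ofReal (q ^ 5) := by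
    have : m1 r0 < m1 r0 + ENNReal.ofReal (q ^ 5) :=
      ENNReal.lt_add_right hm1.ne (by simp; positivity)
    nth_rewrite 1 [m1] at this
    simpa only [iInf_lt_iff] using this
  have hEu := hfin u hu
  have hEr : (En u).toReal ≤ M + q ^ 5 := by
    refine ENNReal.toReal_le_of_le_ofReal (by positivity) ?_
    rw [ENNReal.ofReal_add hM0 (by positivity), hMe]; exact hlt.le
  have hR : (1 : ℝ) ≤ r ^ 2 := one_le_pow₀ hr1
  have key := hpass r hr1 u hu hEu hEr
  have hv : Cls r0 (tr (9 * r ^ 2) u) := hu.tr (by linarith) (by linarith)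
  set v := tr (9 * r ^ 2) u with hvdef
  have hEv := hfin v hv
  have hmm : mm v (9 * r ^ 2) = mm u (9 * r ^ 2) := by
    refine lintegral_congr fun x => ?_
    congr 1
    unfold inf'
    split_ifs with h
    · rw [hvdef]; unfold fu; rw [tr_core u (by linarith) (by linarith)]
    · rfl
  have hmf : mm u (9 * r ^ 2) < ⊤ := (trunc_real hu hEu (R := 9 * r ^ 2) (by linarith) one_pos).2.2.1
  set m := (mm u (9 * r ^ 2)).toReal with hm
  have hml : 2 * r0 ≤ m := by
    have := le_mm hu (R := 9 * r ^ 2) (by linarith)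
    rw [← ENNReal.ofReal_toReal hmf.ne] at this
    exact (ENNReal.ofReal_le_ofReal_iff ENNReal.toReal_nonneg).1 this
  have hm0 : 0 < m := by linarith
  have hsupp : ∀ x, 27 * r ^ 2 ≤ |x| → v x = 0 := fun x hx =>
    tr_far u (by linarith) (by linarith)
  have pair := Nst_pair hv.cont_fu (fu_nonneg v) (S := 27 * r ^ 2) (ρ := 9 * r ^ 2)
    (D := 73 * r ^ 2) (L := 2 * (27 * r ^ 2) + 1) (fun x hx => by simp [fu, hsupp x hx])
    (by linarith) (by linarith) (by linarith)
  change _ + _ * (mm v (9 * r ^ 2) * mm v (9 * r ^ 2)) ≤ _ at pair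
  rw [hmm, ← ENNReal.ofReal_toReal hmf.ne, ← hm, ← ENNReal.ofReal_mul hm0.le,
    ← ENNReal.ofReal_mul (by positivity)] at pair
  have epair : 1 / π / (73 * r ^ 2) ^ 2 * (m * m) = κ * m ^ 2 * q ^ 4 := by
    rw [hκ, hq]; field_simp
  rw [epair] at pair
  set X := 2 * Dsup v + 2 * Pe (fu v) + Nst (fun x => fu v x + fu v (x - (2 * (27 * r ^ 2) + 1)))
    with hX
  have hXle : X + ENNReal.ofReal (κ * m ^ 2 * q ^ 4) ≤ 2 * En v := by
    rw [hX]
    calc _ = 2 * Dsup v + 2 * Pe (fu v) + (Nst (fun x => fu v x +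
          fu v (x - (2 * (27 * r ^ 2) + 1))) + ENNReal.ofReal (κ * m ^ 2 * q ^ 4)) := by ring
      _ ≤ 2 * Dsup v + 2 * Pe (fu v) + 2 * Nst (fu v) := by gcongr
      _ = _ := by unfold En; ring
  have hEv2 : 2 * En v ≤ ENNReal.ofReal (2 * M + 2 * (C * (1 + m) ^ 2 * q ^ 5)) := by
    rw [← ENNReal.ofReal_toReal hEv.ne, show (2 : ℝ≥0∞) = ENNReal.ofReal 2 by simp,
      ← ENNReal.ofReal_mul (by positivity)]
    exact ENNReal.ofReal_le_ofReal (by linarith)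
  have herr : 2 * (C * (1 + m) ^ 2 * q ^ 5) ≤ κ / 2 * m ^ 2 * q ^ 4 := by
    have a1 : 1 + m ≤ m * (1 + 1 / (2 * r0)) := by
      have : 1 ≤ m * (1 / (2 * r0)) := by
        rw [mul_one_div, le_div_iff₀ (by positivity)]; linarith
      linarith
    calc 2 * (C * (1 + m) ^ 2 * q ^ 5) ≤ 2 * (C * (m * (1 + 1 / (2 * r0))) ^ 2 * q ^ 5) := by gcongr
      _ = (B * q) * m ^ 2 * q ^ 4 := by rw [hB]; ring
      _ ≤ _ := by gcongr
  refine ⟨κ / 2 * m ^ 2 * q ^ 4, by positivity, v, 27 * r ^ 2, hv, by linarith, hsupp, ?_⟩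
  have h2 : (X + ENNReal.ofReal (κ / 2 * m ^ 2 * q ^ 4)) + ENNReal.ofReal (κ / 2 * m ^ 2 * q ^ 4) ≤
      2 * m1 r0 + ENNReal.ofReal (κ / 2 * m ^ 2 * q ^ 4) := by
    rw [add_assoc, ← ENNReal.ofReal_add (by positivity) (by positivity),
      show κ / 2 * m ^ 2 * q ^ 4 + κ / 2 * m ^ 2 * q ^ 4 = κ * m ^ 2 * q ^ 4 by ring]
    refine hXle.trans (hEv2.trans ?_)
    rw [← hMe, show (2 : ℝ≥0∞) = ENNReal.ofReal 2 by simp, ← ENNReal.ofReal_mul (by positivity),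
      ← ENNReal.ofReal_add (by positivity) (by positivity)]
    exact ENNReal.ofReal_le_ofReal (by linarith)
  exact (ENNReal.add_le_add_iff_right ENNReal.ofReal_ne_top).1 h2

/-! ### Finiteness of the relaxed energy and profiles coming from a phase -/

/-- Integrable majorant for stray-field integrands of functions constant outside `[-S, S]`. -/
def dk (S C : ℝ) (z : ℝ × ℝ) : ℝ :=
  C * (inf' S (fun _ => 1) z.1 * (2 * 1 ^ 2 / (1 + 1 ^ 2 * (z.1 - z.2) ^ 2)) +
    inf' S (fun _ => 1) z.2 * (2 * 1 ^ 2 / (1 + 1 ^ 2 * (z.2 - z.1) ^ 2)))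

lemma dk_lt_top (S : ℝ) {C : ℝ} (hC : 0 ≤ C) : ∫⁻ z, ENNReal.ofReal (dk S C z) < ⊤ := by
  set q : ℝ → ℝ := inf' S (fun _ => 1) with hq
  set κ : ℝ → ℝ := fun x => 2 * 1 ^ 2 / (1 + 1 ^ 2 * x ^ 2) with hκ
  have hqm : Measurable q := measurable_inf' measurable_const S
  have hκm : Measurable κ := by fun_prop
  have hqn : ∀ x, 0 ≤ q x := inf'_nonneg (fun x => zero_le_one) S
  have hκn : ∀ x, 0 ≤ κ x := fun x => by simp only [hκ]; positivity
  have iκ : ∀ s, ∫⁻ t, ENNReal.ofReal (κ (s - t)) = ENNReal.ofReal (2 * 1 * π) := by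
    intro s
    rw [lintegral_sub_left_eq_self (fun x => ENNReal.ofReal (κ x)) s, lintegral_lorentz one_pos]
  have i3 : ∫⁻ z : ℝ × ℝ, ENNReal.ofReal (q z.1) * ENNReal.ofReal (κ (z.1 - z.2)) < ⊤ := by
    rw [Measure.volume_eq_prod, lintegral_prod _ (by fun_prop)]
    simp only []
    have : ∀ s, ∫⁻ t, ENNReal.ofReal (q s) * ENNReal.ofReal (κ (s - t)) =
        ENNReal.ofReal (2 * 1 * π) * ENNReal.ofReal (q s) := by
      intro s
      rw [lintegral_const_mul _ (by fun_prop), iκ, mul_comm]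
    simp_rw [this]
    rw [lintegral_const_mul _ (by fun_prop), hq, inf'_vol]
    exact ENNReal.mul_lt_top ENNReal.ofReal_lt_top (ENNReal.mul_lt_top ENNReal.ofReal_lt_top ENNReal.ofReal_lt_top)
  have i4 : ∫⁻ z : ℝ × ℝ, ENNReal.ofReal (q z.2) * ENNReal.ofReal (κ (z.2 - z.1)) < ⊤ := by
    refine lt_of_le_of_lt (le_of_eq ?_) i3
    rw [Measure.volume_eq_prod]
    exact (lintegral_prod_swap
      (fun z : ℝ × ℝ => ENNReal.ofReal (q z.1) * ENNReal.ofReal (κ (z.1 - z.2))))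
  have e : ∀ z, ENNReal.ofReal (dk S C z) = ENNReal.ofReal C *
      (ENNReal.ofReal (q z.1) * ENNReal.ofReal (κ (z.1 - z.2)) +
       ENNReal.ofReal (q z.2) * ENNReal.ofReal (κ (z.2 - z.1))) := by
    intro z
    rw [← ENNReal.ofReal_mul (hqn _), ← ENNReal.ofReal_mul (hqn _), ← ENNReal.ofReal_add
      (mul_nonneg (hqn _) (hκn _)) (mul_nonneg (hqn _) (hκn _)), ← ENNReal.ofReal_mul hC]
    rfl
  simp_rw [e]
  rw [lintegral_const_mul _ (by fun_prop), lintegral_add_left (by fun_prop)]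
  exact ENNReal.mul_lt_top (by simp) (ENNReal.add_lt_top.2 ⟨i3, i4⟩)

/-- A function that is bounded, locally Lipschitz and constant outside `[-S, S]` has its stray-field
integrand below the majorant `dk`. -/
lemma nst_point {F : ℝ → ℝ} {S B K : ℝ} (hB0 : 0 ≤ B) (hK0 : 0 ≤ K)
    (hB : ∀ s t, (F s - F t) ^ 2 ≤ B)
    (hK : ∀ s t, |s - t| ≤ 1 → (F s - F t) ^ 2 ≤ K * (s - t) ^ 2)
    (hc : ∀ s t, S < |s| → S < |t| → F s = F t) (z : ℝ × ℝ) :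
    (F z.1 - F z.2) ^ 2 / (z.1 - z.2) ^ 2 ≤ dk S (B + K) z := by
  obtain ⟨s, t⟩ := z
  have h : (F s - F t) ^ 2 / (s - t) ^ 2 ≤
      (B + K) * (2 * 1 ^ 2 / (1 + 1 ^ 2 * (s - t) ^ 2)) := by
    rcases eq_or_ne s t with rfl | hne
    · simp; positivity
    have hd : 0 < (s - t) ^ 2 := by have := sub_ne_zero.2 hne; positivity
    rw [mul_div_assoc', div_le_div_iff₀ hd (by positivity)]
    have hs := sq_nonneg (F s - F t)
    rcases le_or_gt |s - t| 1 with h1 | h1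
    · have h2 := hK s t h1
      have h3 : (s - t) ^ 2 ≤ 1 := by rw [← sq_abs]; nlinarith [abs_nonneg (s - t)]
      have := mul_nonneg hB0 hd.le
      nlinarith
    · have h2 := hB s t
      have h3 : 1 ≤ (s - t) ^ 2 := by rw [← sq_abs]; nlinarith
      have := mul_nonneg hK0 hd.le
      nlinarith
  have hk : 0 ≤ (B + K) * (2 * 1 ^ 2 / (1 + 1 ^ 2 * (s - t) ^ 2)) := by positivity
  unfold dk inf'
  simp only []
  rw [show (t - s) ^ 2 = (s - t) ^ 2 by ring]
  split_ifs with h1 h2 h2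
  · linarith
  · linarith
  · linarith
  · rw [hc s t (not_le.1 h1) (not_le.1 h2)]; simp

lemma Cls.supp' {r : ℝ} {u : ℝ → ℝ} (hu : Cls r u) : ∃ S, 0 ≤ S ∧ ∀ x, S ≤ |x| → u x = 0 := by
  obtain ⟨S, hS⟩ := hu.supp
  exact ⟨max S 0, le_max_right _ _, fun x hx => hS x ((le_max_left _ _).trans hx)⟩

lemma Cls.lip' {r : ℝ} {u : ℝ → ℝ} (hu : Cls r u) :
    ∃ K, 0 ≤ K ∧ ∀ x y, |x - y| ≤ 1 → chord2 u x y ≤ K * (x - y) ^ 2 := by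
  obtain ⟨K, hK⟩ := hu.lip
  exact ⟨max K 0, le_max_right _ _, fun x y h => (hK x y h).trans
    (mul_le_mul_of_nonneg_right (le_max_left _ _) (sq_nonneg _))⟩

/-- Exterior constancy: the half-angle vector is `(0, ±1)` outside the support. -/
lemma chord2_far {u : ℝ → ℝ} {S δ x : ℝ} (hS0 : 0 ≤ S) (hS : ∀ x, S ≤ |x| → u x = 0)
    (hδ : |δ| ≤ 1) (hx : S + 1 < |x|) : chord2 u (x + δ) x = 0 := by
  rw [abs_le] at hδ
  have hux : u x = 0 := hS x (by linarith)
  rcases le_or_gt 0 x with h | h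
  · rw [abs_of_nonneg h] at hx
    have h1 : u (x + δ) = 0 := hS _ ((by linarith : S ≤ x + δ).trans (le_abs_self _))
    simp [chord2, wv, hux, h1, not_le.2 (by linarith : 0 < x), not_le.2 (by linarith : 0 < x + δ)]
  · rw [abs_of_neg h] at hx
    have h1 : u (x + δ) = 0 := hS _ ((by linarith : S ≤ -(x + δ)).trans (neg_le_abs _))
    simp [chord2, wv, hux, h1, h.le, (by linarith : x + δ ≤ 0)]

lemma Cls.fu_lip {r : ℝ} {u : ℝ → ℝ} (hu : Cls r u) {K : ℝ}
    (hK : ∀ x y, |x - y| ≤ 1 → chord2 u x y ≤ K * (x - y) ^ 2) {x y : ℝ} (h : |x - y| ≤ 1) :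
    (fu u x - fu u y) ^ 2 ≤ 16 * K * (x - y) ^ 2 := by
  have h1 := hK x y h
  have h2 : (fu u x - fu u y) ^ 2 = 4 * (u x + u y) ^ 2 * (u x - u y) ^ 2 := by unfold fu; ring
  have h3 : (u x + u y) ^ 2 ≤ 4 := by
    have := hu.nonneg x; have := hu.nonneg y; have := hu.le_one x; have := hu.le_one y
    nlinarith
  have h4 : (u x - u y) ^ 2 ≤ chord2 u x y := by
    unfold chord2; nlinarith [sq_nonneg (wv u x - wv u y)]
  nlinarith [sq_nonneg (u x - u y)]

lemma En_lt_top {r : ℝ} {u : ℝ → ℝ} (hu : Cls r u) : En u < ⊤ := by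
  obtain ⟨S, hS0, hS⟩ := hu.supp'
  obtain ⟨K, hK0, hK⟩ := hu.lip'
  have hD : Dsup u < ⊤ := by
    refine lt_of_le_of_lt (b := ENNReal.ofReal (2 * K) * ENNReal.ofReal (2 * (S + 1)))
      (iSup₂_le fun δ hδ => ?_) (ENNReal.mul_lt_top ENNReal.ofReal_lt_top ENNReal.ofReal_lt_top)
    have hδ0 := hδ.1
    have h1 : ∫⁻ x, ENNReal.ofReal (chord2 u (x + δ) x) ≤
        ENNReal.ofReal (K * δ ^ 2) * ENNReal.ofReal (2 * (S + 1)) := by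
      rw [← inf'_vol]
      refine lintegral_mono fun x => ENNReal.ofReal_le_ofReal ?_
      have habs : |δ| ≤ 1 := by rw [abs_of_pos hδ0]; exact hδ.2
      unfold inf'
      split_ifs with h
      · have := hK (x + δ) x (by simpa using habs)
        simpa using this
      · rw [chord2_far hS0 hS habs (not_le.1 h)]
    unfold Dd
    refine (mul_le_mul_right h1 _).trans (le_of_eq ?_)
    rw [← mul_assoc, ← ENNReal.ofReal_mul (by positivity)]
    congr 2; field_simp
  have hP : Pe (fu u) < ⊤ := by
    unfold Pe
    refine ENNReal.mul_lt_top (by simp) ?_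
    refine lt_of_le_of_lt (b := ENNReal.ofReal 4 * ENNReal.ofReal (2 * S)) ?_
      (ENNReal.mul_lt_top ENNReal.ofReal_lt_top ENNReal.ofReal_lt_top)
    rw [← inf'_vol]
    refine lintegral_mono fun x => ENNReal.ofReal_le_ofReal ?_
    unfold inf'
    split_ifs with h
    · have := hu.fu_le x; have := fu_nonneg u x; nlinarith
    · simp [fu, hS x (not_le.1 h).le]
  have hN : Nst (fu u) < ⊤ := by
    unfold Nst
    refine ENNReal.mul_lt_top (by simp) ?_
    refine lt_of_le_of_lt (lintegral_mono fun z => ENNReal.ofReal_le_ofReal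
      (nst_point (S := S) (B := 4) (K := 16 * K) (by norm_num) (by positivity) ?_
        (fun s t h => hu.fu_lip hK h) ?_ z)) (dk_lt_top S (by positivity))
    · intro s t
      have := hu.fu_le s; have := fu_nonneg u s; have := hu.fu_le t; have := fu_nonneg u t
      nlinarith
    · intro s t h1 h2
      simp [fu, hS s h1.le, hS t h2.le]
  unfold En
  exact ENNReal.add_lt_top.2 ⟨ENNReal.add_lt_top.2 ⟨hD, hP⟩, hN⟩

/-- Profile of a phase. -/
def up (Φ : ℝ → ℝ) (x : ℝ) : ℝ := sin (Φ x / 2)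

/-- The phase runs inside `[0, π]` before the origin and inside `[π, 2π]` after it. -/
structure Folded (Φ : ℝ → ℝ) : Prop where
  left : ∀ x ≤ 0, 0 ≤ Φ x ∧ Φ x ≤ π
  right : ∀ x, 0 < x → π ≤ Φ x ∧ Φ x ≤ 2 * π

lemma Folded.mem {Φ : ℝ → ℝ} (h : Folded Φ) (x : ℝ) : 0 ≤ Φ x ∧ Φ x ≤ 2 * π := by
  have hpi := Real.pi_pos
  rcases le_or_gt x 0 with hx | hx
  · have := h.left x hx; constructor <;> linarith
  · have := h.right x hx; constructor <;> linarith

lemma Folded.wv {Φ : ℝ → ℝ} (h : Folded Φ) (x : ℝ) : wv (up Φ) x = cos (Φ x / 2) := by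
  have hpi := Real.pi_pos
  unfold _root_.wv up
  rw [← cos_sq', Real.sqrt_sq_eq_abs]
  split_ifs with hx
  · have := h.left x hx
    exact abs_of_nonneg (cos_nonneg_of_neg_pi_div_two_le_of_le (by linarith) (by linarith))
  · have := h.right x (not_le.1 hx)
    rw [abs_of_nonpos (cos_nonpos_of_pi_div_two_le_of_le (by linarith) (by linarith)), neg_neg]

lemma Folded.chord2 {Φ : ℝ → ℝ} (h : Folded Φ) (x y : ℝ) :
    chord2 (up Φ) x y ≤ (Φ x - Φ y) ^ 2 / 4 := by
  unfold _root_.chord2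
  rw [h.wv, h.wv]
  unfold up
  have h1 := Real.one_sub_sq_div_two_le_cos (x := Φ x / 2 - Φ y / 2)
  rw [cos_sub] at h1
  nlinarith [sin_sq_add_cos_sq (Φ x / 2), sin_sq_add_cos_sq (Φ y / 2)]

lemma fu_up (Φ : ℝ → ℝ) (x : ℝ) : fu (up Φ) x = 1 - cos (Φ x) := by
  unfold fu up
  have h : cos (Φ x) = 2 * cos (Φ x / 2) ^ 2 - 1 := by rw [← cos_two_mul]; congr 1; ring
  linarith [sin_sq_add_cos_sq (Φ x / 2)]

/-- A folded phase that is locally Lipschitz, trivial at infinity and has `cos Φ ≤ 0` near the origin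
defines an element of the class. -/
lemma Folded.cls {Φ : ℝ → ℝ} (h : Folded Φ) {r : ℝ}
    (hlip : ∃ K, ∀ x y, |x - y| ≤ 1 → (Φ x - Φ y) ^ 2 ≤ K * (x - y) ^ 2)
    (hsupp : ∃ S, ∀ x, S ≤ |x| → cos (Φ x) = 1) (hcore : ∀ x, |x| ≤ r → cos (Φ x) ≤ 0) :
    Cls r (up Φ) where
  nonneg x := by
    have := h.mem x
    exact sin_nonneg_of_nonneg_of_le_pi (by linarith) (by linarith)
  le_one x := sin_le_one _
  lip := by
    obtain ⟨K, hK⟩ := hlip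
    refine ⟨K / 4, fun x y hxy => (h.chord2 x y).trans ?_⟩
    have := hK x y hxy
    linarith
  supp := by
    obtain ⟨S, hS⟩ := hsupp
    refine ⟨S, fun x hx => ?_⟩
    have h1 := fu_up Φ x
    rw [hS x hx, sub_self] at h1
    unfold fu at h1
    exact pow_eq_zero_iff (two_ne_zero) |>.1 (by linarith)
  core x hx := by
    have h1 := fu_up Φ x
    have := hcore x hx
    unfold fu at h1
    linarith

lemma Cls.mono {r r' : ℝ} {u : ℝ → ℝ} (hu : Cls r u) (h : r' ≤ r) : Cls r' u :=
  { hu with core := fun x hx => hu.core x (hx.trans h) }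

/-- A piecewise linear phase shows that the class is nonempty. -/
lemma exists_cls : ∃ u, Cls (1 / 2) u := by
  have hpi := Real.pi_pos
  set Φ : ℝ → ℝ := fun x => max 0 (min (2 * π) (π * (1 + x))) with hΦ
  have hmid : ∀ x, |x| ≤ 1 → Φ x = π * (1 + x) := by
    intro x hx
    rw [abs_le] at hx
    simp only [hΦ]
    rw [min_eq_right (by nlinarith), max_eq_right (by nlinarith)]
  refine ⟨up Φ, Folded.cls ⟨fun x hx => ⟨le_max_left _ _, max_le hpi.le
    (min_le_of_right_le (by nlinarith))⟩, fun x hx => ⟨le_max_of_le_right (le_min (by linarith)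
      (by nlinarith)), max_le (by linarith) (min_le_left _ _)⟩⟩ ⟨π ^ 2, fun x y _ => ?_⟩
      ⟨1, fun x hx => ?_⟩ fun x hx => ?_⟩
  · rw [← mul_pow, ← sq_abs, ← sq_abs (π * (x - y))]
    refine pow_le_pow_left₀ (abs_nonneg _) ?_ 2
    refine (abs_max_sub_max_le_max (0 : ℝ) _ 0 _).trans ?_
    rw [sub_self, abs_zero, max_eq_right (abs_nonneg _)]
    refine (abs_min_sub_min_le_max _ _ _ _).trans ?_
    rw [sub_self, abs_zero, max_eq_right (abs_nonneg _)]
    rw [← mul_sub, add_sub_add_left_eq_sub]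
  · rcases le_or_gt 0 x with h | h
    · rw [abs_of_nonneg h] at hx
      have : Φ x = 2 * π := by
        simp only [hΦ]
        rw [min_eq_left (by nlinarith), max_eq_right (by linarith)]
      exact (congrArg cos this).trans cos_two_pi
    · rw [abs_of_neg h] at hx
      have : Φ x = 0 := by
        simp only [hΦ]
        rw [max_eq_left (min_le_of_right_le (by nlinarith))]
      exact (congrArg cos this).trans cos_zero
  · change cos (Φ x) ≤ 0
    rw [hmid x (by linarith)]
    rw [abs_le] at hx
    apply cos_nonpos_of_pi_div_two_le_of_le <;> nlinarith

/-! ### Lower bound for phases of winding number `1 - α / π` -/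

lemma abs_arccos_cos_sub_le (a b : ℝ) : |arccos (cos a) - arccos (cos b)| ≤ |a - b| := by
  set p := arccos (cos a) with hp
  set q := arccos (cos b) with hq
  have p0 := arccos_nonneg (cos a)
  have p1 := arccos_le_pi (cos a)
  have q0 := arccos_nonneg (cos b)
  have q1 := arccos_le_pi (cos b)
  have hpq : |p - q| ≤ π := abs_le.2 ⟨by linarith, by linarith⟩
  rcases le_or_gt π |a - b| with h | h
  · exact hpq.trans h
  have hc : cos (a - b) ≤ cos (p - q) := by
    have s : ∀ a, sin (arccos (cos a)) = |sin a| := by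
      intro a
      rw [sin_arccos, ← sin_sq, Real.sqrt_sq_eq_abs]
    rw [cos_sub, cos_sub, hp, hq, s, s, cos_arccos (neg_one_le_cos _) (cos_le_one _),
      cos_arccos (neg_one_le_cos _) (cos_le_one _), ← abs_mul]
    linarith [le_abs_self (sin a * sin b)]
  by_contra hlt
  push Not at hlt
  have := cos_lt_cos_of_nonneg_of_le_pi (abs_nonneg _) hpq hlt
  rw [cos_abs, cos_abs] at this
  linarith

lemma sin_scale {l x : ℝ} (hl : 1 ≤ l) (hx : 0 ≤ x) (hlx : l * x ≤ π) :
    sin (l * x) ≤ l * sin x := by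
  have hl0 : 0 < l := by linarith
  have h := strictConcaveOn_sin_Icc.concaveOn.2 (⟨by positivity, hlx⟩ : l * x ∈ Set.Icc 0 π)
    (⟨le_rfl, Real.pi_pos.le⟩ : (0 : ℝ) ∈ Set.Icc 0 π) (by positivity : 0 ≤ 1 / l)
    (by rw [sub_nonneg, div_le_one hl0]; exact hl : 0 ≤ 1 - 1 / l) (by ring)
  simp only [smul_eq_mul, mul_zero, sin_zero, add_zero] at h
  rw [show 1 / l * (l * x) = x by field_simp, one_div_mul_eq_div, div_le_iff₀ hl0] at h
  linarith

/-- Stretching `[β, π]` onto `[0, π]` by the factor `l = π / (π - β)` changes differences of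
cosines by at most the factor `l²`. -/
lemma cos_stretch {β l a b : ℝ} (hl : 1 ≤ l) (hlb : l * (π - β) = π) (ha : a ∈ Set.Icc β π)
    (hb : b ∈ Set.Icc β π) :
    |cos (l * (a - β)) - cos (l * (b - β))| ≤ l ^ 2 * |cos a - cos b| := by
  have hl0 : 0 < l := by linarith
  obtain ⟨a0, a1⟩ := ha
  obtain ⟨b0, b1⟩ := hb
  have h1 : |sin (l * ((a - b) / 2))| ≤ l * |sin ((a - b) / 2)| := by
    have key : ∀ d, 0 ≤ d → d ≤ (π - β) → |sin (l * d)| ≤ l * |sin d| := by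
      intro d hd hd2
      have h2 : l * d ≤ π := by rw [← hlb]; gcongr
      rw [abs_of_nonneg (sin_nonneg_of_nonneg_of_le_pi (by positivity) h2)]
      exact (sin_scale hl hd h2).trans (mul_le_mul_of_nonneg_left (le_abs_self _) hl0.le)
    rcases le_total 0 ((a - b) / 2) with h | h
    · exact key _ h (by linarith)
    · have := key (-((a - b) / 2)) (by linarith) (by linarith)
      rwa [mul_neg, sin_neg, sin_neg, abs_neg, abs_neg] at this
  have h2 : |sin (l * ((a + b) / 2 - β))| ≤ l * |sin ((a + b) / 2)| := by
    have e1 : sin (l * ((a + b) / 2 - β)) = sin (l * (π - (a + b) / 2)) := by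
      rw [← sin_pi_sub]; congr 1; linear_combination -hlb
    have h3 : l * (π - (a + b) / 2) ≤ π := by
      calc _ ≤ l * (π - β) := by gcongr; linarith
        _ = π := hlb
    have h4 : 0 ≤ π - (a + b) / 2 := by linarith
    rw [e1, abs_of_nonneg (sin_nonneg_of_nonneg_of_le_pi (by positivity) h3)]
    refine (sin_scale hl h4 h3).trans ?_
    rw [sin_pi_sub]
    exact mul_le_mul_of_nonneg_left (le_abs_self _) hl0.le
  rw [cos_sub_cos, cos_sub_cos,
    show (l * (a - β) + l * (b - β)) / 2 = l * ((a + b) / 2 - β) by ring,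
    show (l * (a - β) - l * (b - β)) / 2 = l * ((a - b) / 2) by ring,
    abs_mul, abs_mul, abs_mul, abs_mul]
  calc _ ≤ |(-2 : ℝ)| * (l * |sin ((a + b) / 2)|) * (l * |sin ((a - b) / 2)|) := by gcongr
    _ = _ := by ring

lemma energy_shift (h x0 : ℝ) (φ : ℝ → ℝ) : energy h (fun x => φ (x + x0)) = energy h φ := by
  unfold energy
  congr 2
  · rw [← lintegral_add_right_eq_self
      (fun x => ENNReal.ofReal ((deriv φ x) ^ 2 + 2 * Wpot h (φ x))) x0]
    refine lintegral_congr fun x => ?_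
    rw [deriv_comp_add_const]
  · rw [← lintegral_add_right_eq_self (fun s => ∫⁻ t : ℝ,
        ENNReal.ofReal ((Real.cos (φ s) - Real.cos (φ t)) ^ 2 / (s - t) ^ 2)) x0]
    refine lintegral_congr fun s => ?_
    rw [← lintegral_add_right_eq_self (fun t =>
        ENNReal.ofReal ((Real.cos (φ (s + x0)) - Real.cos (φ t)) ^ 2 / (s + x0 - t) ^ 2)) x0]
    refine lintegral_congr fun t => ?_
    rw [add_sub_add_right_eq_sub]

lemma kparam_cos (α : ℝ) : kparam (cos α) = cos α := min_eq_left (cos_le_one α)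

lemma alphaParam_cos {α : ℝ} (h0 : 0 ≤ α) (h1 : α ≤ π) : alphaParam (cos α) = α := by
  unfold alphaParam; rw [kparam_cos, arccos_cos h0 h1]

lemma two_Wpot_cos (α θ : ℝ) : 2 * Wpot (cos α) θ = (cos θ - cos α) ^ 2 := by
  unfold Wpot; rw [kparam_cos]; ring

lemma energy_cos {α : ℝ} {φ : ℝ → ℝ} (hφ : ContDiff ℝ 1 φ) : energy (cos α) φ =
    ENNReal.ofReal (1 / 2) * (∫⁻ x, ENNReal.ofReal (deriv φ x ^ 2)) +
    ENNReal.ofReal (1 / 2) * (∫⁻ x, ENNReal.ofReal ((cos (φ x) - cos α) ^ 2)) +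
    ENNReal.ofReal (1 / (4 * π)) * ∫⁻ z : ℝ × ℝ,
      ENNReal.ofReal ((cos (φ z.1) - cos (φ z.2)) ^ 2 / (z.1 - z.2) ^ 2) := by
  have hc := hφ.continuous
  have hd := hφ.continuous_deriv le_rfl
  unfold energy
  congr 1
  · rw [← mul_add, ← lintegral_add_left (by fun_prop)]
    congr 1
    refine lintegral_congr fun x => ?_
    rw [two_Wpot_cos, ENNReal.ofReal_add (sq_nonneg _) (sq_nonneg _)]
  · rw [Measure.volume_eq_prod, lintegral_prod _ (by fun_prop)]

/-- Cauchy-Schwarz inequality on an interval. -/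
lemma sq_integral_abs_le {F : ℝ → ℝ} (hF : Continuous F) {x y : ℝ} (h : x ≤ y) :
    (∫ t in x..y, |F t|) ^ 2 ≤ (y - x) * ∫ t in x..y, F t ^ 2 := by
  rcases h.eq_or_lt with rfl | hlt
  · simp
  set I := ∫ t in x..y, |F t| with hI
  set c := I / (y - x) with hc
  have hd : 0 < y - x := by linarith
  have h0 : 0 ≤ ∫ t in x..y, (|F t| - c) ^ 2 :=
    intervalIntegral.integral_nonneg h fun t _ => sq_nonneg _
  have e : ∫ t in x..y, (|F t| - c) ^ 2 =
      (∫ t in x..y, F t ^ 2) - 2 * c * I + c ^ 2 * (y - x) := by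
    have : ∀ t, (|F t| - c) ^ 2 = F t ^ 2 - 2 * c * |F t| + c ^ 2 := by
      intro t; rw [sub_sq, sq_abs]; ring
    simp_rw [this]
    rw [intervalIntegral.integral_add, intervalIntegral.integral_sub,
      intervalIntegral.integral_const_mul, intervalIntegral.integral_const, smul_eq_mul]
    · ring
    all_goals exact Continuous.intervalIntegrable (by fun_prop) _ _
  rw [e] at h0
  have e2 : c * (y - x) = I := by rw [hc]; field_simp
  nlinarith

/-- Folding of a phase at height `β` about the origin: values with `cos ψ ≥ cos β` are collapsed,
the remaining range is stretched, and the result is reflected on the right half-line. -/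
def fold (β l : ℝ) (ψ : ℝ → ℝ) (x : ℝ) : ℝ :=
  if x ≤ 0 then l * (arccos (min (cos (ψ x)) (cos β)) - β)
  else 2 * π - l * (arccos (min (cos (ψ x)) (cos β)) - β)

section
variable {β l : ℝ} {ψ : ℝ → ℝ}

lemma arccos_min_mem (hβ0 : 0 ≤ β) (hβ1 : β ≤ π) (y : ℝ) :
    arccos (min y (cos β)) ∈ Set.Icc β π := by
  refine ⟨?_, arccos_le_pi _⟩
  nth_rewrite 1 [← arccos_cos hβ0 hβ1]
  exact antitone_arccos (min_le_right _ _)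

lemma cos_arccos_min (x : ℝ) :
    cos (arccos (min (cos (ψ x)) (cos β))) = min (cos (ψ x)) (cos β) :=
  cos_arccos (le_min (neg_one_le_cos _) (neg_one_le_cos _)) (min_le_of_left_le (cos_le_one _))

lemma arccos_min_lip (x y : ℝ) :
    |arccos (min (cos (ψ x)) (cos β)) - arccos (min (cos (ψ y)) (cos β))| ≤ |ψ x - ψ y| := by
  rw [antitone_arccos.map_min, antitone_arccos.map_min]
  refine (abs_max_sub_max_le_max _ _ _ _).trans ?_
  rw [sub_self, abs_zero, max_eq_left (abs_nonneg _)]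
  exact abs_arccos_cos_sub_le _ _

lemma fold_folded (hl : 1 ≤ l) (hlb : l * (π - β) = π) (hβ0 : 0 ≤ β) (hβ1 : β ≤ π) :
    Folded (fold β l ψ) := by
  have hl0 : 0 < l := by linarith
  have h : ∀ x, 0 ≤ l * (arccos (min (cos (ψ x)) (cos β)) - β) ∧
      l * (arccos (min (cos (ψ x)) (cos β)) - β) ≤ π := by
    intro x
    obtain ⟨h1, h2⟩ := arccos_min_mem hβ0 hβ1 (cos (ψ x))
    refine ⟨mul_nonneg hl0.le (by linarith), ?_⟩
    calc _ ≤ l * (π - β) := by gcongr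
      _ = π := hlb
  constructor
  · intro x hx
    simp only [fold, if_pos hx]; exact h x
  · intro x hx
    simp only [fold, if_neg (not_le.2 hx)]
    have := h x
    constructor <;> linarith

lemma cos_fold (x : ℝ) :
    cos (fold β l ψ x) = cos (l * (arccos (min (cos (ψ x)) (cos β)) - β)) := by
  unfold fold
  split_ifs
  · rfl
  · rw [cos_two_pi_sub]

lemma fold_far {x : ℝ} (hβ0 : 0 ≤ β) (hβ1 : β ≤ π) (h : cos β ≤ cos (ψ x)) :
    fold β l ψ x = if x ≤ 0 then 0 else 2 * π := by
  unfold fold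
  rw [min_eq_right h, arccos_cos hβ0 hβ1]
  simp

lemma abs_sub_le_integral (hψ : ContDiff ℝ 1 ψ) {x y : ℝ} (h : x ≤ y) :
    |ψ x - ψ y| ≤ ∫ t in x..y, |deriv ψ t| := by
  have hd := hψ.continuous_deriv le_rfl
  have e : ∫ t in x..y, deriv ψ t = ψ y - ψ x :=
    intervalIntegral.integral_deriv_eq_sub
      (fun t _ => (hψ.differentiable one_ne_zero).differentiableAt)
      (hd.intervalIntegrable _ _)
  rw [abs_sub_comm, ← e]
  exact intervalIntegral.abs_integral_le_integral_abs h

/-- Folding is continuous across the origin because `ψ 0` is an odd multiple of `π`, and it stretches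
variations by at most `l`. -/
lemma fold_lip (hψ : ContDiff ℝ 1 ψ) (h0 : cos (ψ 0) = -1) (hl : 1 ≤ l)
    (hlb : l * (π - β) = π) {x y : ℝ} (h : x ≤ y) :
    |fold β l ψ x - fold β l ψ y| ≤ l * ∫ t in x..y, |deriv ψ t| := by
  have hl0 : 0 < l := by linarith
  have hd := hψ.continuous_deriv le_rfl
  have key : ∀ x y : ℝ, x ≤ y → |l * (arccos (min (cos (ψ x)) (cos β)) - β) -
      l * (arccos (min (cos (ψ y)) (cos β)) - β)| ≤ l * ∫ t in x..y, |deriv ψ t| := by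
    intro x y hxy
    rw [← mul_sub, sub_sub_sub_cancel_right, abs_mul, abs_of_pos hl0]
    gcongr
    exact (arccos_min_lip x y).trans (abs_sub_le_integral hψ hxy)
  have g0 : l * (arccos (min (cos (ψ 0)) (cos β)) - β) = π := by
    rw [h0, min_eq_left (neg_one_le_cos _), arccos_neg_one, hlb]
  unfold fold
  split_ifs with hx hy hy
  · exact key x y h
  · push Not at hy
    have k1 := key x 0 hx
    have k2 := key 0 y hy.le
    rw [g0] at k1 k2
    rw [← intervalIntegral.integral_add_adjacent_intervals (b := 0)
      (hd.abs.intervalIntegrable _ _) (hd.abs.intervalIntegrable _ _), mul_add]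
    rw [abs_le] at k1 k2 ⊢
    constructor <;> linarith
  · linarith
  · have := key x y h
    rw [abs_le] at this ⊢
    constructor <;> linarith

lemma fold_sq_le (hψ : ContDiff ℝ 1 ψ) (h0 : cos (ψ 0) = -1) (hl : 1 ≤ l)
    (hlb : l * (π - β) = π) {x y : ℝ} (h : x ≤ y) :
    (fold β l ψ x - fold β l ψ y) ^ 2 ≤ l ^ 2 * ((y - x) * ∫ t in x..y, deriv ψ t ^ 2) := by
  have h1 := pow_le_pow_left₀ (abs_nonneg _) (fold_lip hψ h0 hl hlb h) 2
  rw [sq_abs, mul_pow] at h1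
  exact h1.trans (mul_le_mul_of_nonneg_left
    (sq_integral_abs_le (hψ.continuous_deriv le_rfl) h) (by positivity))

/-- Chordal difference quotients of the folded phase are bounded by the Dirichlet energy. -/
lemma fold_Dsup (hψ : ContDiff ℝ 1 ψ) (h0 : cos (ψ 0) = -1) (hl : 1 ≤ l)
    (hlb : l * (π - β) = π) (hβ0 : 0 ≤ β) (hβ1 : β ≤ π) :
    Dsup (up (fold β l ψ)) ≤
      ENNReal.ofReal (l ^ 2) * (ENNReal.ofReal (1 / 2) * ∫⁻ x, ENNReal.ofReal (deriv ψ x ^ 2)) := by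
  have hd := hψ.continuous_deriv le_rfl
  refine iSup₂_le fun δ hδ => ?_
  have hδ0 := hδ.1
  have hF := fold_folded (ψ := ψ) hl hlb hβ0 hβ1
  have h1 : ∫⁻ x, ENNReal.ofReal (chord2 (up (fold β l ψ)) (x + δ) x) ≤
      ENNReal.ofReal (l ^ 2 * δ / 4) *
        (ENNReal.ofReal δ * ∫⁻ x, ENNReal.ofReal (deriv ψ x ^ 2)) := by
    have e : ENNReal.ofReal δ * ∫⁻ x, ENNReal.ofReal (deriv ψ x ^ 2) =
        ∫⁻ x, ∫⁻ t in Set.Ioc 0 δ, ENNReal.ofReal (deriv ψ (x + t) ^ 2) := by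
      rw [lintegral_lintegral_swap (by fun_prop)]
      have : ∀ t, ∫⁻ x, ENNReal.ofReal (deriv ψ (x + t) ^ 2) =
          ∫⁻ x, ENNReal.ofReal (deriv ψ x ^ 2) := fun t =>
        lintegral_add_right_eq_self (fun x => ENNReal.ofReal (deriv ψ x ^ 2)) t
      simp_rw [this]
      rw [lintegral_const, Measure.restrict_apply .univ, Set.univ_inter, Real.volume_Ioc, sub_zero,
        mul_comm]
    rw [e, ← lintegral_const_mul' _ _ ENNReal.ofReal_ne_top]
    refine lintegral_mono fun x => ?_
    have e2 : ∫⁻ t in Set.Ioc 0 δ, ENNReal.ofReal (deriv ψ (x + t) ^ 2) =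
        ENNReal.ofReal (∫ t in x..x + δ, deriv ψ t ^ 2) := by
      rw [← ofReal_integral_eq_lintegral_ofReal]
      · congr 1
        rw [← intervalIntegral.integral_of_le hδ0.le,
          intervalIntegral.integral_comp_add_left (fun t => deriv ψ t ^ 2), add_zero]
      · have : Continuous fun t => deriv ψ (x + t) ^ 2 := by fun_prop
        exact (this.integrableOn_Icc (a := 0) (b := δ)).mono_set Set.Ioc_subset_Icc_self
      · exact Eventually.of_forall fun t => sq_nonneg _
    rw [e2, ← ENNReal.ofReal_mul (by positivity)]
    refine ENNReal.ofReal_le_ofReal ?_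
    have a1 := hF.chord2 (x + δ) x
    have a2 := fold_sq_le (β := β) hψ h0 hl hlb (by linarith : x ≤ x + δ)
    rw [add_sub_cancel_left] at a2
    rw [show (fold β l ψ (x + δ) - fold β l ψ x) ^ 2 = (fold β l ψ x - fold β l ψ (x + δ)) ^ 2 by
      ring] at a1
    linarith
  unfold Dd
  refine (mul_le_mul_right h1 _).trans (le_of_eq ?_)
  rw [← mul_assoc, ← mul_assoc, ← mul_assoc, ← ENNReal.ofReal_mul (by positivity),
    ← ENNReal.ofReal_mul (by positivity), ← ENNReal.ofReal_mul (by positivity)]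
  congr 2
  field_simp; norm_num

lemma fold_cos_diff (hl : 1 ≤ l) (hlb : l * (π - β) = π) (hβ0 : 0 ≤ β) (hβ1 : β ≤ π) (s t : ℝ) :
    (fu (up (fold β l ψ)) s - fu (up (fold β l ψ)) t) ^ 2 ≤
      l ^ 4 * (cos (ψ s) - cos (ψ t)) ^ 2 := by
  rw [fu_up, fu_up, cos_fold, cos_fold, sub_sub_sub_cancel_left]
  have h1 := cos_stretch hl hlb (arccos_min_mem hβ0 hβ1 (cos (ψ t)))
    (arccos_min_mem hβ0 hβ1 (cos (ψ s)))
  rw [cos_arccos_min, cos_arccos_min] at h1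
  have h2 : |min (cos (ψ t)) (cos β) - min (cos (ψ s)) (cos β)| ≤ |cos (ψ s) - cos (ψ t)| := by
    refine (abs_min_sub_min_le_max _ _ _ _).trans ?_
    rw [sub_self, abs_zero, max_eq_left (abs_nonneg _), abs_sub_comm]
  have h3 := h1.trans (mul_le_mul_of_nonneg_left h2 (by positivity : 0 ≤ l ^ 2))
  have h4 := pow_le_pow_left₀ (abs_nonneg _) h3 2
  rw [sq_abs, mul_pow, sq_abs] at h4
  calc _ ≤ _ := h4
    _ = _ := by ring

lemma fold_sq_fu (hl : 1 ≤ l) (hlb : l * (π - β) = π) (hβ0 : 0 ≤ β) (hβ1 : β ≤ π) {α : ℝ}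
    (hα0 : 0 ≤ α) (hαβ : α ≤ β) (x : ℝ) :
    fu (up (fold β l ψ)) x ^ 2 ≤ l ^ 4 * (cos (ψ x) - cos α) ^ 2 := by
  rw [fu_up, cos_fold]
  have h1 := cos_stretch hl hlb (⟨le_rfl, hβ1⟩ : β ∈ Set.Icc β π)
    (arccos_min_mem hβ0 hβ1 (cos (ψ x)))
  rw [cos_arccos_min, sub_self, mul_zero, cos_zero] at h1
  have hab : cos β ≤ cos α := cos_le_cos_of_nonneg_of_le_pi hα0 hβ1 hαβ
  have h2 : |cos β - min (cos (ψ x)) (cos β)| ≤ |cos (ψ x) - cos α| := by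
    rcases le_total (cos (ψ x)) (cos β) with h | h
    · rw [min_eq_left h, abs_of_nonneg (by linarith), abs_of_nonpos (by linarith)]
      linarith
    · rw [min_eq_right h, sub_self, abs_zero]; exact abs_nonneg _
  have h3 := h1.trans (mul_le_mul_of_nonneg_left h2 (by positivity : 0 ≤ l ^ 2))
  have h4 := pow_le_pow_left₀ (abs_nonneg _) h3 2
  rw [sq_abs, mul_pow, sq_abs] at h4
  calc _ ≤ _ := h4
    _ = _ := by ring

end

section
variable {α β l : ℝ} {ψ : ℝ → ℝ}

lemma integral_sq_le (hψ : ContDiff ℝ 1 ψ) {C : ℝ} (hC : 0 ≤ C)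
    (hen : ∫⁻ x, ENNReal.ofReal (deriv ψ x ^ 2) ≤ ENNReal.ofReal C) {x y : ℝ} (h : x ≤ y) :
    ∫ t in x..y, deriv ψ t ^ 2 ≤ C := by
  have hd := hψ.continuous_deriv le_rfl
  have hi : Continuous fun t => deriv ψ t ^ 2 := by fun_prop
  rw [← ENNReal.ofReal_le_ofReal_iff hC]
  refine le_trans ?_ hen
  rw [intervalIntegral.integral_of_le h, ofReal_integral_eq_lintegral_ofReal
    ((hi.integrableOn_Icc (a := x) (b := y)).mono_set Set.Ioc_subset_Icc_self)
    (Eventually.of_forall fun t => sq_nonneg _)]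
  exact setLIntegral_le_lintegral _ _

lemma fold_zero (h0 : cos (ψ 0) = -1) (hlb : l * (π - β) = π) : fold β l ψ 0 = π := by
  rw [fold, if_pos le_rfl, h0, min_eq_left (neg_one_le_cos _), arccos_neg_one, hlb]

/-- The folded phase belongs to the class: the core condition follows from the energy bound, as the
phase moves by at most a multiple of `√|x|` away from the value `π` at the origin. -/
lemma fold_cls (hψ : ContDiff ℝ 1 ψ) (h0 : cos (ψ 0) = -1) (hl : 1 ≤ l) (hl2 : l ≤ 2)
    (hlb : l * (π - β) = π) (hβ0 : 0 ≤ β) (hβ1 : β ≤ π)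
    (hfar : ∃ S, ∀ x, S ≤ |x| → cos β ≤ cos (ψ x)) {B : ℝ} (hB : 0 ≤ B)
    (hen : ∫⁻ x, ENNReal.ofReal (deriv ψ x ^ 2) ≤ ENNReal.ofReal (2 * (B + 1))) :
    Cls (1 / (8 * (B + 1))) (up (fold β l ψ)) := by
  have hl0 : 0 < l := by linarith
  have hd := hψ.continuous_deriv le_rfl
  obtain ⟨S, hS0, hS⟩ : ∃ S, 0 ≤ S ∧ ∀ x, S ≤ |x| → cos β ≤ cos (ψ x) := by
    obtain ⟨S, hS⟩ := hfar
    exact ⟨max S 0, le_max_right _ _, fun x hx => hS x ((le_max_left _ _).trans hx)⟩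
  refine (fold_folded hl hlb hβ0 hβ1).cls ?_ ⟨S, fun x hx => ?_⟩ fun x hx => ?_
  · obtain ⟨M, hM⟩ := (isCompact_Icc (a := -S - 1) (b := S + 1)).exists_bound_of_continuousOn
      hd.continuousOn
    have key : ∀ x y, x ≤ y → |x - y| ≤ 1 →
        (fold β l ψ x - fold β l ψ y) ^ 2 ≤ (l * M) ^ 2 * (x - y) ^ 2 := by
      intro x y hxy h1
      rw [abs_sub_comm, abs_of_nonneg (by linarith)] at h1
      by_cases hx : x < -S - 1
      · rw [fold_far hβ0 hβ1 (hS x (by rw [abs_of_neg] <;> linarith)),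
          fold_far hβ0 hβ1 (hS y (by rw [abs_of_neg] <;> linarith)), if_pos (by linarith),
          if_pos (by linarith), sub_self, zero_pow two_ne_zero]
        positivity
      by_cases hy : S + 1 < y
      · rw [fold_far hβ0 hβ1 (hS x (by rw [abs_of_pos] <;> linarith)),
          fold_far hβ0 hβ1 (hS y (by rw [abs_of_pos] <;> linarith)), if_neg (by linarith),
          if_neg (by linarith), sub_self, zero_pow two_ne_zero]
        positivity
      push Not at hx hy
      have h2 := fold_lip (β := β) hψ h0 hl hlb hxy
      have h3 : ∫ t in x..y, |deriv ψ t| ≤ M * (y - x) := by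
        have := intervalIntegral.norm_integral_le_of_norm_le_const (a := x) (b := y)
          (f := fun t => |deriv ψ t|) (C := M) (fun t ht => by
            rw [Set.uIoc_of_le hxy] at ht
            have := hM t ⟨by linarith [ht.1], by linarith [ht.2]⟩
            simpa using this)
        rw [abs_of_nonneg (by linarith : 0 ≤ y - x)] at this
        exact (le_abs_self _).trans this
      have h4 : |fold β l ψ x - fold β l ψ y| ≤ l * (M * (y - x)) :=
        h2.trans (mul_le_mul_of_nonneg_left h3 hl0.le)
      have h5 := pow_le_pow_left₀ (abs_nonneg _) h4 2
      rw [sq_abs] at h5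
      calc _ ≤ _ := h5
        _ = _ := by ring
    refine ⟨(l * M) ^ 2, fun x y h => ?_⟩
    rcases le_total x y with hxy | hxy
    · exact key x y hxy h
    · have := key y x hxy (by rwa [abs_sub_comm])
      rw [show (fold β l ψ x - fold β l ψ y) ^ 2 = (fold β l ψ y - fold β l ψ x) ^ 2 by ring,
        show (x - y) ^ 2 = (y - x) ^ 2 by ring]
      exact this
  · rw [fold_far hβ0 hβ1 (hS x hx)]
    split_ifs <;> simp
  · have hC : (0 : ℝ) ≤ 2 * (B + 1) := by linarith
    have hl4 : l ^ 2 ≤ 4 := by nlinarith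
    have hone : 4 * (1 / (8 * (B + 1)) * (2 * (B + 1))) = 1 := by
      have : B + 1 ≠ 0 := by linarith
      field_simp
      norm_num
    have hsq : (fold β l ψ x - π) ^ 2 ≤ 1 := by
      rw [← fold_zero h0 hlb, ← hone]
      rcases le_total 0 x with h | h
      · rw [abs_of_nonneg h] at hx
        have h1 := fold_sq_le (β := β) hψ h0 hl hlb h
        have h2 := integral_sq_le hψ hC hen h
        have h3 : 0 ≤ ∫ t in (0 : ℝ)..x, deriv ψ t ^ 2 :=
          intervalIntegral.integral_nonneg h fun t _ => sq_nonneg _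
        rw [sub_zero] at h1
        rw [show (fold β l ψ x - fold β l ψ 0) ^ 2 = (fold β l ψ 0 - fold β l ψ x) ^ 2 by ring]
        refine h1.trans ?_
        gcongr
      · rw [abs_of_nonpos h] at hx
        have h1 := fold_sq_le (β := β) hψ h0 hl hlb h
        have h2 := integral_sq_le hψ hC hen h
        have h3 : 0 ≤ ∫ t in x..(0 : ℝ), deriv ψ t ^ 2 :=
          intervalIntegral.integral_nonneg h fun t _ => sq_nonneg _
        rw [zero_sub] at h1
        have h4 : 0 ≤ -x := by linarith
        refine h1.trans ?_
        gcongr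
    have h6 : |fold β l ψ x - π| ≤ 1 := by
      rw [← sq_abs] at hsq
      nlinarith [abs_nonneg (fold β l ψ x - π)]
    have h7 := Real.pi_gt_three
    rw [abs_le] at h6
    have h8 : 0 ≤ cos (fold β l ψ x - π) :=
      cos_nonneg_of_neg_pi_div_two_le_of_le (by linarith) (by linarith)
    rw [cos_sub_pi] at h8
    linarith

/-- Folding multiplies the energy by at most `l⁴`. -/
lemma fold_En (hψ : ContDiff ℝ 1 ψ) (h0 : cos (ψ 0) = -1) (hl : 1 ≤ l)
    (hlb : l * (π - β) = π) (hβ1 : β ≤ π) (hα0 : 0 ≤ α) (hαβ : α ≤ β) :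
    En (up (fold β l ψ)) ≤ ENNReal.ofReal (l ^ 4) * energy (cos α) ψ := by
  have hβ0 := hα0.trans hαβ
  rw [energy_cos hψ, mul_add, mul_add]
  unfold En
  refine add_le_add (add_le_add ?_ ?_) ?_
  · refine (fold_Dsup hψ h0 hl hlb hβ0 hβ1).trans ?_
    gcongr
    norm_num
  · unfold Pe
    rw [mul_left_comm]
    gcongr
    rw [← lintegral_const_mul' _ _ ENNReal.ofReal_ne_top]
    refine lintegral_mono fun x => ?_
    rw [← ENNReal.ofReal_mul (by positivity)]
    exact ENNReal.ofReal_le_ofReal (fold_sq_fu hl hlb hβ0 hβ1 hα0 hαβ x)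
  · unfold Nst
    rw [mul_left_comm]
    gcongr
    rw [← lintegral_const_mul' _ _ ENNReal.ofReal_ne_top]
    refine lintegral_mono fun z => ?_
    rw [← ENNReal.ofReal_mul (by positivity), ← mul_div_assoc]
    refine ENNReal.ofReal_le_ofReal ?_
    gcongr
    exact fold_cos_diff hl hlb hβ0 hβ1 _ _

end

lemma limSet_cos {α L : ℝ} (h0 : 0 ≤ α) (h1 : α ≤ π) (hL : L ∈ limSet (cos α)) :
    cos L = cos α := by
  obtain ⟨n, h | h⟩ := hL <;> rw [alphaParam_cos h0 h1] at h <;> rw [h, mul_comm (2 * π)]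
  · rw [add_comm, cos_add_int_mul_two_pi]
  · rw [cos_int_mul_two_pi_sub]

/-- A phase of winding number `1 - α / π` passes an odd multiple of `π`. -/
lemma exists_core {α : ℝ} (h0 : 0 < α) (h1 : α < π / 2) {φ : ℝ → ℝ}
    (hφ : φ ∈ AA (cos α) (1 - α / π)) : ∃ x, cos (φ x) = -1 := by
  have hpi := Real.pi_pos
  obtain ⟨⟨hc, ⟨L, hL, hLt⟩, ⟨M, hM, hMt⟩, -⟩, hdeg⟩ := hφ
  unfold deg at hdeg
  rw [hLt.limUnder_eq, hMt.limUnder_eq, div_eq_iff (by positivity)] at hdeg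
  have hdiff : L - M = 2 * π - 2 * α := by rw [hdeg]; field_simp
  obtain ⟨n, hn⟩ := hL
  obtain ⟨m, hm⟩ := hM
  rw [alphaParam_cos h0.le (by linarith)] at hn hm
  have hLM : M = 2 * π * m + α ∧ L = 2 * π * m + 2 * π - α := by
    have e : ∀ k : ℤ, ∀ c : ℝ, 2 * π * k = c → -(2 * π) < c → c < 2 * π → c = 0 := by
      intro k c hk h2 h3
      have a1 : (-1 : ℝ) < k := by nlinarith
      have a2 : (k : ℝ) < 1 := by nlinarith
      have : k = 0 := by
        have b1 : (-1 : ℤ) < k := by exact_mod_cast a1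
        have b2 : k < (1 : ℤ) := by exact_mod_cast a2
        omega
      rw [← hk, this]; simp
    rcases hn with hn | hn <;> rcases hm with hm | hm
    · have := e (n - m - 1) (-(2 * α)) (by push_cast; linarith) (by linarith) (by linarith)
      linarith
    · have := e (n - m - 1) (-(4 * α)) (by push_cast; linarith) (by linarith) (by linarith)
      linarith
    · exact ⟨hm, by linarith⟩
    · have := e (n - m - 1) (-(2 * α)) (by push_cast; linarith) (by linarith) (by linarith)
      linarith
  have ha : ∃ a, φ a ≤ 2 * π * m + π := by
    have := hMt.eventually (gt_mem_nhds (by linarith [hLM.1] : M < 2 * π * m + π))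
    obtain ⟨a, ha⟩ := this.exists
    exact ⟨a, ha.le⟩
  have hb : ∃ b, 2 * π * m + π ≤ φ b := by
    have := hLt.eventually (lt_mem_nhds (by linarith [hLM.2] : 2 * π * m + π < L))
    obtain ⟨a, ha⟩ := this.exists
    exact ⟨a, ha.le⟩
  obtain ⟨x, hx⟩ := mem_range_of_exists_le_of_exists_ge hc.continuous ha hb
  refine ⟨x, ?_⟩
  rw [hx, show 2 * π * (m : ℝ) + π = π + m * (2 * π) by ring, cos_add_int_mul_two_pi, cos_pi]

/-- Every admissible phase of winding number `1 - α / π` has energy at least `m1 / l⁴`, where the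
core radius is determined by an a priori bound `B` for `m1`. -/
lemma lower_bound {α β l B : ℝ} (h0 : 0 < α) (hαβ : α < β) (hβ : β ≤ π / 2) (hl : 1 ≤ l)
    (hl2 : l ≤ 2) (hlb : l * (π - β) = π) (hB : 0 ≤ B)
    (hm : m1 (1 / (8 * (B + 1))) ≤ ENNReal.ofReal B) :
    m1 (1 / (8 * (B + 1))) ≤ ENNReal.ofReal (l ^ 4) * Einf (cos α) (1 - α / π) := by
  have hpi := Real.pi_pos
  unfold Einf
  rw [ENNReal.mul_iInf_of_ne (by simp; positivity) ENNReal.ofReal_ne_top]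
  refine le_iInf fun φ => ?_
  rw [ENNReal.mul_iInf_of_ne (by simp; positivity) ENNReal.ofReal_ne_top]
  refine le_iInf fun hφ => ?_
  have hl4 : ∀ e, e ≤ ENNReal.ofReal (l ^ 4) * e := by
    intro e
    refine le_mul_of_one_le_left (zero_le) ?_
    rw [← ENNReal.ofReal_one]
    exact ENNReal.ofReal_le_ofReal (one_le_pow₀ hl)
  rcases le_total (ENNReal.ofReal (B + 1)) (energy (cos α) φ) with h | h
  · exact (hm.trans ((ENNReal.ofReal_le_ofReal (by linarith)).trans h)).trans (hl4 _)
  obtain ⟨x0, hx0⟩ := exists_core h0 (by linarith) hφ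
  set ψ : ℝ → ℝ := fun x => φ (x + x0) with hψd
  have hψ : ContDiff ℝ 1 ψ := hφ.1.1.comp (contDiff_id.add contDiff_const)
  have hψ0 : cos (ψ 0) = -1 := by simp only [hψd, zero_add]; exact hx0
  rw [← energy_shift (cos α) x0 φ] at h ⊢
  refine le_trans (m1_le ?_) (fold_En hψ hψ0 hl hlb (by linarith) h0.le hαβ.le)
  refine fold_cls hψ hψ0 hl hl2 hlb (by linarith) (by linarith) ?_ hB ?_
  · have hcos : cos β < cos α := cos_lt_cos_of_nonneg_of_le_pi h0.le (by linarith) hαβ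
    obtain ⟨⟨hc, ⟨L, hL, hLt⟩, ⟨M, hM, hMt⟩, -⟩, -⟩ := hφ
    have e1 : ∀ᶠ x in atTop, cos β < cos (ψ x) := by
      have : Tendsto ψ atTop (𝓝 L) := hLt.comp (tendsto_atTop_add_const_right _ x0 tendsto_id)
      have := (continuous_cos.tendsto L).comp this
      rw [limSet_cos h0.le (by linarith) hL] at this
      exact this.eventually (lt_mem_nhds hcos)
    have e2 : ∀ᶠ x in atBot, cos β < cos (ψ x) := by
      have : Tendsto ψ atBot (𝓝 M) := hMt.comp (tendsto_atBot_add_const_right _ x0 tendsto_id)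
      have := (continuous_cos.tendsto M).comp this
      rw [limSet_cos h0.le (by linarith) hM] at this
      exact this.eventually (lt_mem_nhds hcos)
    obtain ⟨a, ha⟩ := eventually_atTop.1 e1
    obtain ⟨b, hb⟩ := eventually_atBot.1 e2
    refine ⟨max a (-b), fun x hx => ?_⟩
    rcases le_abs.1 (le_refl |x|) with h | h
    · exact (ha x (((le_max_left _ _).trans hx).trans h)).le
    · exact (hb x (by have := ((le_max_right _ _).trans hx).trans h; linarith)).le
  · rw [energy_cos hψ] at h
    have h1 := (le_self_add.trans le_self_add).trans h
    calc _ = ENNReal.ofReal 2 *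
        (ENNReal.ofReal (1 / 2) * ∫⁻ x, ENNReal.ofReal (deriv ψ x ^ 2)) := by
          rw [← mul_assoc, ← ENNReal.ofReal_mul (by norm_num)]; norm_num
      _ ≤ ENNReal.ofReal 2 * ENNReal.ofReal (B + 1) := by gcongr
      _ = _ := by rw [← ENNReal.ofReal_mul (by norm_num)]

/-! ### Upper bound for phases of winding number `2 - α / π` -/

/-- The phase `φ`, running from `0` to `2π`, whose half-angle cosine is `wv u`. -/
def Ph (u : ℝ → ℝ) (x : ℝ) : ℝ := 2 * arccos (wv u x)

/-- Two successive turns, the second one shifted by `L`. -/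
def Ph2 (u : ℝ → ℝ) (L x : ℝ) : ℝ := Ph u x + Ph u (x - L)

section single
variable {r : ℝ} {u : ℝ → ℝ}

lemma Cls.wv_mem (hu : Cls r u) (x : ℝ) : -1 ≤ wv u x ∧ wv u x ≤ 1 := by
  have h := hu.wv_sq x
  rw [← abs_le, ← sq_le_one_iff_abs_le_one, h]
  linarith [sq_nonneg (u x)]

lemma cont_Ph (hu : Cls r u) : Continuous (Ph u) := by
  have := hu.cont_wv
  unfold Ph; fun_prop

lemma Ph_mem (x : ℝ) : 0 ≤ Ph u x ∧ Ph u x ≤ 2 * π :=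
  ⟨mul_nonneg zero_le_two (arccos_nonneg _), mul_le_mul_of_nonneg_left (arccos_le_pi _) zero_le_two⟩

lemma cos_Ph (hu : Cls r u) (x : ℝ) : cos (Ph u x) = 1 - fu u x := by
  unfold Ph fu
  rw [cos_two_mul, cos_arccos (hu.wv_mem x).1 (hu.wv_mem x).2, hu.wv_sq]
  ring

lemma chord2_Ph (hu : Cls r u) (x y : ℝ) :
    chord2 u x y = 4 * sin ((Ph u x - Ph u y) / 4) ^ 2 := by
  have h1 : ∀ x, cos (Ph u x / 2) = wv u x := by
    intro x
    unfold Ph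
    rw [mul_div_cancel_left₀ _ two_ne_zero, cos_arccos (hu.wv_mem x).1 (hu.wv_mem x).2]
  have h2 : ∀ x, sin (Ph u x / 2) = u x := by
    intro x
    unfold Ph
    rw [mul_div_cancel_left₀ _ two_ne_zero, sin_arccos, hu.wv_sq, sub_sub_cancel,
      Real.sqrt_sq (hu.nonneg x)]
  have h3 : cos (Ph u x / 2 - Ph u y / 2) = 1 - 2 * sin ((Ph u x - Ph u y) / 4) ^ 2 := by
    rw [show Ph u x / 2 - Ph u y / 2 = 2 * ((Ph u x - Ph u y) / 4) by ring, cos_two_mul, cos_sq']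
    ring
  rw [cos_sub, h1, h1, h2, h2] at h3
  have h4 := hu.wv_sq x
  have h5 := hu.wv_sq y
  unfold chord2
  linear_combination h4 + h5 - 2 * h3

/-- Jordan's inequality for phase increments in terms of chords. -/
lemma Ph_coarse (hu : Cls r u) (x y : ℝ) : (Ph u x - Ph u y) ^ 2 ≤ π ^ 2 * chord2 u x y := by
  have hpi := Real.pi_pos
  have hx := Ph_mem (u := u) x
  have hy := Ph_mem (u := u) y
  rw [chord2_Ph hu]
  set t := (Ph u x - Ph u y) / 4 with ht
  have h1 : |t| ≤ π / 2 := abs_le.2 ⟨by linarith, by linarith⟩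
  have h2 := pow_le_pow_left₀ (by positivity) (Real.mul_abs_le_abs_sin h1) 2
  rw [mul_pow, sq_abs, sq_abs, div_pow, div_mul_eq_mul_div, div_le_iff₀ (by positivity)] at h2
  rw [show Ph u x - Ph u y = 4 * t by rw [ht]; ring]
  nlinarith

/-- Phase increments are asymptotically twice the chordal increments of the half-angle. -/
lemma Ph_fine (hu : Cls r u) {K : ℝ}
    (hK : ∀ x y, |x - y| ≤ 1 → chord2 u x y ≤ K * (x - y) ^ 2) {x y : ℝ} (h : |x - y| ≤ 1) :
    (Ph u x - Ph u y) ^ 2 * (1 - π ^ 2 * K / 16 * (x - y) ^ 2) ≤ 4 * chord2 u x y := by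
  have h1 := (Ph_coarse hu x y).trans (mul_le_mul_of_nonneg_left (hK x y h) (sq_nonneg π))
  rw [chord2_Ph hu]
  set t := (Ph u x - Ph u y) / 4 with ht
  rw [show Ph u x - Ph u y = 4 * t by rw [ht]; ring] at h1 ⊢
  set c := π ^ 2 * K / 16 * (x - y) ^ 2 with hc
  have h2 : t ^ 2 ≤ c := by rw [hc]; linarith
  rcases le_or_gt 1 c with h3 | h3
  · nlinarith [sq_nonneg t, sq_nonneg (sin t), mul_nonneg (sq_nonneg t) (sub_nonneg.2 h3)]
  have h4 : t ^ 2 * (1 - t ^ 2 / 6) ^ 2 ≤ sin t ^ 2 := by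
    rcases eq_or_ne t 0 with h0 | h0
    · rw [h0]; simp
    have h5 := Real.sin_gt_sub_cube (abs_pos.2 h0)
    have h6 : 0 ≤ |t| - |t| ^ 3 / 6 := by
      have : |t| ^ 2 < 1 := by rw [sq_abs]; linarith
      nlinarith [abs_nonneg t]
    have h7 := pow_le_pow_left₀ h6 h5.le 2
    have h8 : sin |t| ^ 2 = sin t ^ 2 := by
      rcases abs_choice t with h | h <;> rw [h]
      rw [sin_neg, neg_sq]
    rw [h8] at h7
    calc _ = (|t| - |t| ^ 3 / 6) ^ 2 := by
          rw [show |t| - |t| ^ 3 / 6 = |t| * (1 - |t| ^ 2 / 6) by ring, mul_pow, sq_abs]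
      _ ≤ _ := h7
  have h9 : t ^ 2 * (1 - c) ≤ t ^ 2 * (1 - t ^ 2 / 6) ^ 2 := by
    refine mul_le_mul_of_nonneg_left ?_ (sq_nonneg t)
    nlinarith [sq_nonneg t, sq_nonneg (t ^ 2)]
  linarith

lemma Ph_left {S x : ℝ} (hS : ∀ x, S ≤ |x| → u x = 0) (hS0 : 0 ≤ S) (hx : x ≤ -S) :
    Ph u x = 0 := by
  have : u x = 0 := hS x (by rw [abs_of_nonpos] <;> linarith)
  simp [Ph, wv, this, (by linarith : x ≤ 0)]

lemma Ph_right {S x : ℝ} (hS : ∀ x, S ≤ |x| → u x = 0) (hS0 : 0 < S) (hx : S ≤ x) :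
    Ph u x = 2 * π := by
  have : u x = 0 := hS x (by rw [abs_of_nonneg] <;> linarith)
  simp [Ph, wv, this, not_le.2 (by linarith : 0 < x)]

end single

/-- Forward averages over windows of length `a`, through the primitive of `F`. -/
def av (F : ℝ → ℝ) (a x : ℝ) : ℝ := ((∫ t in (0 : ℝ)..x + a, F t) - ∫ t in (0 : ℝ)..x, F t) / a

lemma av_eq {F : ℝ → ℝ} (hF : Continuous F) (a x : ℝ) : av F a x = (∫ t in x..x + a, F t) / a := by
  unfold av
  rw [intervalIntegral.integral_interval_sub_left (hF.intervalIntegrable _ _)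
    (hF.intervalIntegrable _ _)]

lemma av_const {F : ℝ → ℝ} (hF : Continuous F) {a x c : ℝ} (ha : 0 < a)
    (h : ∀ t ∈ Set.Icc x (x + a), F t = c) : av F a x = c := by
  rw [av_eq hF, intervalIntegral.integral_congr (g := fun _ => c)
    (fun t ht => h t (by rwa [Set.uIcc_of_le (by linarith)] at ht)),
    intervalIntegral.integral_const, smul_eq_mul, add_sub_cancel_left]
  field_simp

lemma hasDerivAt_av {F : ℝ → ℝ} (hF : Continuous F) (a x : ℝ) :
    HasDerivAt (av F a) ((F (x + a) - F x) / a) x := by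
  have h : ∀ x, HasDerivAt (fun y => ∫ t in (0 : ℝ)..y, F t) (F x) x := fun x =>
    intervalIntegral.integral_hasDerivAt_right (hF.intervalIntegrable _ _)
      (hF.stronglyMeasurableAtFilter _ _) hF.continuousAt
  exact (((h (x + a)).comp_add_const x a).sub (h x)).div_const a

lemma tendsto_av {F : ℝ → ℝ} (hF : Continuous F) (x : ℝ) :
    Tendsto (fun a => av F a x) (𝓝[>] 0) (𝓝 (F x)) := by
  have h : HasDerivAt (fun y => ∫ t in (0 : ℝ)..y, F t) (F x) x :=
    intervalIntegral.integral_hasDerivAt_right (hF.intervalIntegrable _ _)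
      (hF.stronglyMeasurableAtFilter _ _) hF.continuousAt
  refine h.tendsto_slope_zero_right.congr fun a => ?_
  rw [smul_eq_mul, av, div_eq_inv_mul]

/-- Trial phase of winding number `2 - α / π`: the double turn is averaged, to become `C¹`, and
compressed affinely to run from `α` to `4π - α`. -/
def tp (u : ℝ → ℝ) (L α x : ℝ) : ℝ := α + (1 - α / (2 * π)) * av (Ph2 u L) α x

section trial
variable {r S K : ℝ} {u : ℝ → ℝ}

lemma cont_Ph2 (hu : Cls r u) (L : ℝ) : Continuous (Ph2 u L) := by
  have := cont_Ph hu
  unfold Ph2; fun_prop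

lemma hasDerivAt_tp (hu : Cls r u) (L α x : ℝ) : HasDerivAt (tp u L α)
    ((1 - α / (2 * π)) * ((Ph2 u L (x + α) - Ph2 u L x) / α)) x :=
  ((hasDerivAt_av (cont_Ph2 hu L) α x).const_mul _).const_add _

lemma contDiff_tp (hu : Cls r u) (L α : ℝ) : ContDiff ℝ 1 (tp u L α) := by
  refine contDiff_one_iff_deriv.2 ⟨fun x => (hasDerivAt_tp hu L α x).differentiableAt, ?_⟩
  have : deriv (tp u L α) = fun x => (1 - α / (2 * π)) * ((Ph2 u L (x + α) - Ph2 u L x) / α) :=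
    funext fun x => (hasDerivAt_tp hu L α x).deriv
  rw [this]
  have := cont_Ph2 hu L
  fun_prop

lemma Ph2_left (hS : ∀ x, S ≤ |x| → u x = 0) (hS0 : 0 < S) {x : ℝ} (hx : x ≤ S + 1) :
    Ph2 u (2 * S + 1) x = Ph u x := by
  unfold Ph2
  rw [Ph_left hS hS0.le (by linarith : x - (2 * S + 1) ≤ -S), add_zero]

lemma Ph2_right (hS : ∀ x, S ≤ |x| → u x = 0) (hS0 : 0 < S) {x : ℝ} (hx : S ≤ x) :
    Ph2 u (2 * S + 1) x = 2 * π + Ph u (x - (2 * S + 1)) := by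
  unfold Ph2
  rw [Ph_right hS hS0 hx]

lemma cos_Ph2 (hu : Cls r u) (hS : ∀ x, S ≤ |x| → u x = 0) (hS0 : 0 < S) (x : ℝ) :
    cos (Ph2 u (2 * S + 1) x) = 1 - (fu u x + fu u (x - (2 * S + 1))) := by
  rcases le_total x S with h | h
  · rw [Ph2_left hS hS0 (by linarith), cos_Ph hu]
    have : u (x - (2 * S + 1)) = 0 := hS _ (by rw [abs_of_neg] <;> linarith)
    simp [fu, this]
  · rw [Ph2_right hS hS0 h, add_comm, cos_add_two_pi, cos_Ph hu]
    have : u x = 0 := hS _ (by rw [abs_of_nonneg] <;> linarith)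
    simp [fu, this]

lemma tp_left (hu : Cls r u) (hS : ∀ x, S ≤ |x| → u x = 0) (hS0 : 0 < S) {α : ℝ} (h0 : 0 < α)
    (h1 : α ≤ 1) {x : ℝ} (hx : x ≤ -S - 1) : tp u (2 * S + 1) α x = α := by
  unfold tp
  rw [av_const (cont_Ph2 hu _) h0 (c := 0), mul_zero, add_zero]
  intro t ht
  rw [Ph2_left hS hS0 (by linarith [ht.2]), Ph_left hS hS0.le (by linarith [ht.2])]

lemma tp_right (hu : Cls r u) (hS : ∀ x, S ≤ |x| → u x = 0) (hS0 : 0 < S) {α : ℝ} (h0 : 0 < α)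
    {x : ℝ} (hx : 3 * S + 1 ≤ x) : tp u (2 * S + 1) α x = 4 * π - α := by
  have hpi := Real.pi_pos
  unfold tp
  rw [av_const (cont_Ph2 hu _) h0 (c := 4 * π)]
  · field_simp; ring
  intro t ht
  rw [Ph2_right hS hS0 (by linarith [ht.1]), Ph_right hS hS0 (by linarith [ht.1])]
  ring

lemma cos_tp_far (hu : Cls r u) (hS : ∀ x, S ≤ |x| → u x = 0) (hS0 : 0 < S) {α : ℝ} (h0 : 0 < α)
    (h1 : α ≤ 1) {x : ℝ} (hx : 3 * S + 1 < |x|) : cos (tp u (2 * S + 1) α x) = cos α := by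
  rcases lt_abs.1 hx with h | h
  · rw [tp_right hu hS hS0 h0 h.le, show 4 * π - α = ((2 : ℕ) : ℝ) * (2 * π) - α by
      push_cast; ring, cos_nat_mul_two_pi_sub]
  · rw [tp_left hu hS hS0 h0 h1 (by linarith)]

/-- For small steps the increments of the two turns do not interfere. -/
lemma Ph2_inc (hS : ∀ x, S ≤ |x| → u x = 0) (hS0 : 0 < S) {α : ℝ} (h0 : 0 ≤ α)
    (h1 : α ≤ 1) (x : ℝ) :
    (Ph2 u (2 * S + 1) (x + α) - Ph2 u (2 * S + 1) x) ^ 2 = (Ph u (x + α) - Ph u x) ^ 2 +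
      (Ph u (x - (2 * S + 1) + α) - Ph u (x - (2 * S + 1))) ^ 2 := by
  rcases le_total x S with h | h
  · rw [Ph2_left hS hS0 (by linarith), Ph2_left hS hS0 (by linarith),
      Ph_left hS hS0.le (by linarith : x - (2 * S + 1) + α ≤ -S),
      Ph_left hS hS0.le (by linarith : x - (2 * S + 1) ≤ -S)]
    ring
  · rw [Ph2_right hS hS0 (by linarith), Ph2_right hS hS0 (by linarith),
      Ph_right hS hS0 (by linarith : S ≤ x + α), Ph_right hS hS0 h,
      show x + α - (2 * S + 1) = x - (2 * S + 1) + α by ring]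
    ring

lemma coef_mem {α : ℝ} (h0 : 0 < α) (h1 : α ≤ 1) : (1 - α / (2 * π)) ^ 2 ≤ 1 := by
  have hpi := Real.pi_gt_three
  have h2 : α / (2 * π) ≤ 1 := by rw [div_le_one (by positivity)]; linarith
  have h3 : 0 ≤ α / (2 * π) := by positivity
  nlinarith

lemma deriv_tp_sq (hu : Cls r u) (hS : ∀ x, S ≤ |x| → u x = 0) (hS0 : 0 < S) {α : ℝ} (h0 : 0 < α)
    (h1 : α ≤ 1) (x : ℝ) : deriv (tp u (2 * S + 1) α) x ^ 2 ≤
      1 / α ^ 2 * ((Ph u (x + α) - Ph u x) ^ 2 +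
        (Ph u (x - (2 * S + 1) + α) - Ph u (x - (2 * S + 1))) ^ 2) := by
  rw [(hasDerivAt_tp hu _ _ _).deriv, mul_pow, div_pow, Ph2_inc hS hS0 h0.le h1]
  refine (mul_le_of_le_one_left (by positivity) (coef_mem h0 h1)).trans (le_of_eq (by ring))

/-- Uniform bound on the slope of the trial phase, giving the majorants for dominated convergence. -/
lemma deriv_tp_le (hu : Cls r u) (hS : ∀ x, S ≤ |x| → u x = 0) (hS0 : 0 < S)
    (hK : ∀ x y, |x - y| ≤ 1 → chord2 u x y ≤ K * (x - y) ^ 2) {α : ℝ} (h0 : 0 < α)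
    (h1 : α ≤ 1) (x : ℝ) : deriv (tp u (2 * S + 1) α) x ^ 2 ≤ 2 * (π ^ 2 * K) := by
  refine (deriv_tp_sq hu hS hS0 h0 h1 x).trans ?_
  have key : ∀ x, (Ph u (x + α) - Ph u x) ^ 2 ≤ π ^ 2 * K * α ^ 2 := by
    intro x
    have := hK (x + α) x (by rw [add_sub_cancel_left, abs_of_pos h0]; exact h1)
    rw [add_sub_cancel_left] at this
    refine (Ph_coarse hu _ _).trans ?_
    rw [mul_assoc]
    exact mul_le_mul_of_nonneg_left this (sq_nonneg π)
  have a1 := key x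
  have a2 := key (x - (2 * S + 1))
  rw [one_div_mul_eq_div, div_le_iff₀ (by positivity)]
  linarith

lemma cos_tp_lip (hu : Cls r u) (hS : ∀ x, S ≤ |x| → u x = 0) (hS0 : 0 < S)
    (hK0 : 0 ≤ K) (hK : ∀ x y, |x - y| ≤ 1 → chord2 u x y ≤ K * (x - y) ^ 2) {α : ℝ} (h0 : 0 < α)
    (h1 : α ≤ 1) (x y : ℝ) :
    (cos (tp u (2 * S + 1) α x) - cos (tp u (2 * S + 1) α y)) ^ 2 ≤
      2 * (π ^ 2 * K) * (x - y) ^ 2 := by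
  have h2 := Convex.norm_image_sub_le_of_norm_deriv_le (f := tp u (2 * S + 1) α) (s := Set.univ)
    (x := y) (y := x) (C := √(2 * (π ^ 2 * K)))
    (fun x _ => (hasDerivAt_tp hu _ _ x).differentiableAt)
    (fun x _ => by
      rw [Real.norm_eq_abs]
      exact Real.abs_le_sqrt (deriv_tp_le hu hS hS0 hK h0 h1 x)) convex_univ trivial trivial
  rw [Real.norm_eq_abs, Real.norm_eq_abs] at h2
  have h3 := pow_le_pow_left₀ (abs_nonneg _) ((abs_cos_sub_cos_le _ _).trans h2) 2
  rwa [mul_pow, sq_abs, sq_abs, Real.sq_sqrt (by positivity)] at h3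

/-- The exchange energy of the trial phase is a difference quotient at step `α`, hence asymptotically
bounded by the relaxed exchange energy of the two turns. -/
lemma exch_tp (hu : Cls r u) (hS : ∀ x, S ≤ |x| → u x = 0) (hS0 : 0 < S)
    (hK : ∀ x y, |x - y| ≤ 1 → chord2 u x y ≤ K * (x - y) ^ 2) {α : ℝ} (h0 : 0 < α)
    (h1 : α ≤ 1) (hα : 0 < 1 - π ^ 2 * K / 16 * α ^ 2) :
    ENNReal.ofReal (1 / 2) * ∫⁻ x, ENNReal.ofReal (deriv (tp u (2 * S + 1) α) x ^ 2) ≤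
      ENNReal.ofReal (2 / (1 - π ^ 2 * K / 16 * α ^ 2)) * Dsup u := by
  set c := 1 - π ^ 2 * K / 16 * α ^ 2 with hc
  have hP := cont_Ph hu
  have e1 : ∫⁻ x, ENNReal.ofReal (deriv (tp u (2 * S + 1) α) x ^ 2) ≤
      ENNReal.ofReal (1 / α ^ 2) * (2 * ∫⁻ x, ENNReal.ofReal ((Ph u (x + α) - Ph u x) ^ 2)) := by
    have e2 : ∫⁻ x, ENNReal.ofReal
        ((Ph u (x - (2 * S + 1) + α) - Ph u (x - (2 * S + 1))) ^ 2) =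
        ∫⁻ x, ENNReal.ofReal ((Ph u (x + α) - Ph u x) ^ 2) :=
      lintegral_sub_right_eq_self
        (fun x => ENNReal.ofReal ((Ph u (x + α) - Ph u x) ^ 2)) (2 * S + 1)
    rw [two_mul (∫⁻ x, ENNReal.ofReal ((Ph u (x + α) - Ph u x) ^ 2))]
    nth_rewrite 2 [← e2]
    rw [← lintegral_add_left (by fun_prop), ← lintegral_const_mul' _ _ ENNReal.ofReal_ne_top]
    refine lintegral_mono fun x => ?_
    rw [← ENNReal.ofReal_add (sq_nonneg _) (sq_nonneg _), ← ENNReal.ofReal_mul (by positivity)]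
    exact ENNReal.ofReal_le_ofReal (deriv_tp_sq hu hS hS0 h0 h1 x)
  have e3 : ∫⁻ x, ENNReal.ofReal ((Ph u (x + α) - Ph u x) ^ 2) ≤
      ENNReal.ofReal (4 / c) * ∫⁻ x, ENNReal.ofReal (chord2 u (x + α) x) := by
    rw [← lintegral_const_mul' _ _ ENNReal.ofReal_ne_top]
    refine lintegral_mono fun x => ?_
    rw [← ENNReal.ofReal_mul (by positivity)]
    refine ENNReal.ofReal_le_ofReal ?_
    have := Ph_fine hu hK (x := x + α) (y := x)
      (by rw [add_sub_cancel_left, abs_of_pos h0]; exact h1)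
    rw [add_sub_cancel_left, ← hc] at this
    rw [div_mul_eq_mul_div, le_div_iff₀ hα]
    exact this
  have e4 : Dd u α ≤ Dsup u := le_iSup₂_of_le α ⟨h0, h1⟩ le_rfl
  calc _ ≤ ENNReal.ofReal (1 / 2) * (ENNReal.ofReal (1 / α ^ 2) * (ENNReal.ofReal 2 *
        (ENNReal.ofReal (4 / c) * ∫⁻ x, ENNReal.ofReal (chord2 u (x + α) x)))) := by
        gcongr
        refine e1.trans ?_
        rw [ENNReal.ofReal_ofNat]
        gcongr
    _ = ENNReal.ofReal (2 / c) * Dd u α := by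
        unfold Dd
        rw [← mul_assoc, ← mul_assoc, ← mul_assoc, ← mul_assoc,
          ← ENNReal.ofReal_mul (by positivity), ← ENNReal.ofReal_mul (by positivity),
          ← ENNReal.ofReal_mul (by positivity), ← ENNReal.ofReal_mul (by positivity)]
        congr 2
        ring
    _ ≤ _ := by gcongr

lemma tendsto_cos_tp (hu : Cls r u) (hS : ∀ x, S ≤ |x| → u x = 0) (hS0 : 0 < S) (x : ℝ) :
    Tendsto (fun α => cos (tp u (2 * S + 1) α x)) (𝓝[>] 0)
      (𝓝 (1 - (fu u x + fu u (x - (2 * S + 1))))) := by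
  rw [← cos_Ph2 hu hS hS0]
  refine (continuous_cos.tendsto _).comp ?_
  have ha : Tendsto (fun α : ℝ => α) (𝓝[>] 0) (𝓝 0) := tendsto_nhdsWithin_of_tendsto_nhds tendsto_id
  have h := ha.add (((ha.div_const (2 * π)).const_sub 1).mul
    (tendsto_av (cont_Ph2 hu (2 * S + 1)) x))
  simpa [tp] using h

lemma eventually_small : ∀ᶠ α : ℝ in 𝓝[>] 0, 0 < α ∧ α ≤ 1 :=
  (Ioc_mem_nhdsGT one_pos)

lemma cos_diff_sq_le (a b : ℝ) : (cos a - cos b) ^ 2 ≤ 4 := by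
  have := neg_one_le_cos a; have := cos_le_one a
  have := neg_one_le_cos b; have := cos_le_one b
  nlinarith

lemma tendsto_aniso (hu : Cls r u) (hS : ∀ x, S ≤ |x| → u x = 0) (hS0 : 0 < S) :
    Tendsto (fun α => ∫⁻ x, ENNReal.ofReal ((cos (tp u (2 * S + 1) α x) - cos α) ^ 2)) (𝓝[>] 0)
      (𝓝 (∫⁻ x, ENNReal.ofReal ((fu u x + fu u (x - (2 * S + 1))) ^ 2))) := by
  refine tendsto_lintegral_filter_of_dominated_convergence
    (fun x => ENNReal.ofReal (inf' (3 * S + 1) (fun _ => 4) x)) ?_ ?_ ?_ ?_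
  · refine Eventually.of_forall fun α => ?_
    have := (contDiff_tp hu (2 * S + 1) α).continuous
    fun_prop
  · filter_upwards [eventually_small] with α hα
    refine Eventually.of_forall fun x => ENNReal.ofReal_le_ofReal ?_
    unfold inf'
    split_ifs with h
    · exact cos_diff_sq_le _ _
    · rw [cos_tp_far hu hS hS0 hα.1 hα.2 (not_le.1 h)]; simp
  · rw [inf'_vol]
    exact (ENNReal.mul_lt_top ENNReal.ofReal_lt_top ENNReal.ofReal_lt_top).ne
  · refine Eventually.of_forall fun x => ?_
    refine (ENNReal.continuous_ofReal.tendsto _).comp ?_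
    have h1 : Tendsto (fun α : ℝ => cos α) (𝓝[>] 0) (𝓝 1) := by
      have := continuous_cos.tendsto 0
      rw [cos_zero] at this
      exact tendsto_nhdsWithin_of_tendsto_nhds this
    have := ((tendsto_cos_tp hu hS hS0 x).sub h1).pow 2
    convert this using 2
    ring

lemma tendsto_stray (hu : Cls r u) (hS : ∀ x, S ≤ |x| → u x = 0) (hS0 : 0 < S) :
    Tendsto (fun α => ∫⁻ z : ℝ × ℝ, ENNReal.ofReal ((cos (tp u (2 * S + 1) α z.1) -
      cos (tp u (2 * S + 1) α z.2)) ^ 2 / (z.1 - z.2) ^ 2)) (𝓝[>] 0)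
      (𝓝 (∫⁻ z : ℝ × ℝ, ENNReal.ofReal (((fu u z.1 + fu u (z.1 - (2 * S + 1))) -
        (fu u z.2 + fu u (z.2 - (2 * S + 1)))) ^ 2 / (z.1 - z.2) ^ 2))) := by
  obtain ⟨K, hK0, hK⟩ := hu.lip'
  refine tendsto_lintegral_filter_of_dominated_convergence
    (fun z => ENNReal.ofReal (dk (3 * S + 1) (4 + 2 * (π ^ 2 * K)) z)) ?_ ?_ ?_ ?_
  · refine Eventually.of_forall fun α => ?_
    have := (contDiff_tp hu (2 * S + 1) α).continuous
    fun_prop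
  · filter_upwards [eventually_small] with α hα
    refine Eventually.of_forall fun z => ENNReal.ofReal_le_ofReal ?_
    exact nst_point (F := fun x => cos (tp u (2 * S + 1) α x)) (by norm_num) (by positivity)
      (fun s t => cos_diff_sq_le _ _)
      (fun s t _ => cos_tp_lip hu hS hS0 hK0 hK hα.1 hα.2 s t)
      (fun s t hs ht => by
        rw [cos_tp_far hu hS hS0 hα.1 hα.2 hs, cos_tp_far hu hS hS0 hα.1 hα.2 ht]) z
  · exact (dk_lt_top _ (by positivity)).ne
  · refine Eventually.of_forall fun z => ?_
    refine (ENNReal.continuous_ofReal.tendsto _).comp ?_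
    have := (((tendsto_cos_tp hu hS hS0 z.1).sub (tendsto_cos_tp hu hS hS0 z.2)).pow 2).div_const
      ((z.1 - z.2) ^ 2)
    convert this using 2
    ring

lemma Pe_pair (hu : Cls r u) (hS : ∀ x, S ≤ |x| → u x = 0) (hS0 : 0 < S) :
    Pe (fun x => fu u x + fu u (x - (2 * S + 1))) = 2 * Pe (fu u) := by
  have hf := hu.cont_fu
  have h : ∀ x, (fu u x + fu u (x - (2 * S + 1))) ^ 2 =
      fu u x ^ 2 + fu u (x - (2 * S + 1)) ^ 2 := by
    intro x
    rcases le_total x S with h | h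
    · have : u (x - (2 * S + 1)) = 0 := hS _ (by rw [abs_of_neg] <;> linarith)
      simp [fu, this]
    · have : u x = 0 := hS _ (by rw [abs_of_nonneg] <;> linarith)
      simp [fu, this]
  unfold Pe
  simp_rw [h, ENNReal.ofReal_add (sq_nonneg _) (sq_nonneg _)]
  rw [lintegral_add_left (by fun_prop),
    lintegral_sub_right_eq_self (fun x => ENNReal.ofReal (fu u x ^ 2)) (2 * S + 1), two_mul,
    mul_add]

lemma tp_mem (hu : Cls r u) (hS : ∀ x, S ≤ |x| → u x = 0) (hS0 : 0 < S) {α : ℝ} (h0 : 0 < α)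
    (h1 : α ≤ 1) (hfin : energy (cos α) (tp u (2 * S + 1) α) < ⊤) :
    tp u (2 * S + 1) α ∈ AA (cos α) (2 - α / π) := by
  have hpi := Real.pi_gt_three
  have ht : Tendsto (tp u (2 * S + 1) α) atTop (𝓝 (4 * π - α)) :=
    tendsto_const_nhds.congr' ((eventually_ge_atTop (3 * S + 1)).mono fun x hx =>
      (tp_right hu hS hS0 h0 hx).symm)
  have hb : Tendsto (tp u (2 * S + 1) α) atBot (𝓝 α) :=
    tendsto_const_nhds.congr' ((eventually_le_atBot (-S - 1)).mono fun x hx =>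
      (tp_left hu hS hS0 h0 h1 hx).symm)
  refine ⟨⟨contDiff_tp hu _ _, ⟨_, ⟨2, Or.inr ?_⟩, ht⟩, ⟨_, ⟨0, Or.inl ?_⟩, hb⟩, hfin⟩, ?_⟩
  · rw [alphaParam_cos h0.le (by linarith)]; push_cast; ring
  · rw [alphaParam_cos h0.le (by linarith)]; push_cast; ring
  · unfold deg
    rw [ht.limUnder_eq, hb.limUnder_eq]
    field_simp
    ring

/-- As `α → 0+`, the energies of the trial phases converge to at most the energy of the double turn. -/
lemma upper_bound (hu : Cls r u) (hS : ∀ x, S ≤ |x| → u x = 0) (hS0 : 0 < S) {X : ℝ≥0∞}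
    (hX : 2 * Dsup u + 2 * Pe (fu u) + Nst (fun x => fu u x + fu u (x - (2 * S + 1))) < X) :
    ∀ᶠ α in 𝓝[>] 0, Einf (cos α) (2 - α / π) < X := by
  obtain ⟨K, hK0, hK⟩ := hu.lip'
  have hcont : Tendsto (fun α : ℝ => 1 - π ^ 2 * K / 16 * α ^ 2) (𝓝[>] 0) (𝓝 1) := by
    have : Continuous (fun α : ℝ => 1 - π ^ 2 * K / 16 * α ^ 2) := by fun_prop
    have := this.tendsto 0
    simp only [ne_eq, OfNat.ofNat_ne_zero, not_false_eq_true, zero_pow, mul_zero, sub_zero] at this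
    exact tendsto_nhdsWithin_of_tendsto_nhds this
  have tD : Tendsto (fun α : ℝ => ENNReal.ofReal (2 / (1 - π ^ 2 * K / 16 * α ^ 2)) * Dsup u)
      (𝓝[>] 0) (𝓝 (2 * Dsup u)) := by
    refine ENNReal.Tendsto.mul_const ?_ (Or.inl two_ne_zero)
    have := (ENNReal.continuous_ofReal.tendsto _).comp (tendsto_const_nhds (x := (2 : ℝ)).div hcont one_ne_zero)
    rw [div_one, ENNReal.ofReal_ofNat] at this
    exact this
  have tP := ENNReal.Tendsto.const_mul (a := ENNReal.ofReal (1 / 2)) (tendsto_aniso hu hS hS0)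
    (Or.inr ENNReal.ofReal_ne_top)
  have tN := ENNReal.Tendsto.const_mul (a := ENNReal.ofReal (1 / (4 * π)))
    (tendsto_stray hu hS hS0) (Or.inr ENNReal.ofReal_ne_top)
  have hlim := (tD.add tP).add tN
  rw [← Pe_pair hu hS hS0] at hX
  filter_upwards [hlim.eventually (gt_mem_nhds hX), eventually_small,
    hcont.eventually (lt_mem_nhds one_pos)] with α h1 h2 h3
  have h4 : energy (cos α) (tp u (2 * S + 1) α) < X := by
    rw [energy_cos (contDiff_tp hu _ _)]
    exact (add_le_add (add_le_add (exch_tp hu hS hS0 hK h2.1 h2.2 h3) le_rfl) le_rfl).trans_lt h1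
  exact (iInf₂_le _ (tp_mem hu hS hS0 h2.1 h2.2 (h4.trans_le le_top))).trans_lt h4

end trial

/-! ### Comparison of the two bounds -/

/-- The stretching factor tends to `1`, so it can be absorbed in any strict inequality. -/
lemma exists_beta {Y Z : ℝ≥0∞} (hYZ : Y < Z) (hY : Y ≠ ⊤) : ∃ β l : ℝ, 0 < β ∧ β ≤ π / 2 ∧ 1 ≤ l ∧
    l ≤ 2 ∧ l * (π - β) = π ∧ ENNReal.ofReal (l ^ 4) * Y < Z := by
  have hpi := Real.pi_pos
  have hl : Tendsto (fun β : ℝ => π / (π - β)) (𝓝[>] 0) (𝓝 1) := by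
    have h1 : Tendsto (fun β : ℝ => π - β) (𝓝[>] 0) (𝓝 π) := by
      have : Continuous (fun β : ℝ => π - β) := by fun_prop
      have := this.tendsto 0
      rw [sub_zero] at this
      exact tendsto_nhdsWithin_of_tendsto_nhds this
    have := (tendsto_const_nhds (x := π)).div h1 hpi.ne'
    rwa [div_self hpi.ne'] at this
  have hY2 : Tendsto (fun β : ℝ => ENNReal.ofReal ((π / (π - β)) ^ 4) * Y) (𝓝[>] 0) (𝓝 Y) := by
    have h1 := (ENNReal.continuous_ofReal.tendsto _).comp (hl.pow 4)
    have h2 := ENNReal.Tendsto.mul_const (b := Y) h1 (Or.inr hY)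
    simpa using h2
  obtain ⟨β, h1, h2⟩ := ((hY2.eventually (gt_mem_nhds hYZ)).and
    (Ioc_mem_nhdsGT (by positivity : 0 < π / 2))).exists
  have h3 : 0 < π - β := by linarith [h2.2]
  refine ⟨β, π / (π - β), h2.1, h2.2, ?_, ?_, by field_simp, h1⟩
  · rw [le_div_iff₀ h3]; linarith [h2.1]
  · rw [div_le_iff₀ h3]; linarith [h2.2]

/-- A core radius for which the lower bound applies, together with a finite bound for `m1`. -/
lemma exists_radius : ∃ B : ℝ, 0 ≤ B ∧ 1 / (8 * (B + 1)) ≤ 1 / 2 ∧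
    m1 (1 / (8 * (B + 1))) ≤ ENNReal.ofReal B ∧ ∃ u, Cls (1 / (8 * (B + 1))) u := by
  obtain ⟨u, hu⟩ := exists_cls
  have hr : 1 / (8 * ((En u).toReal + 1)) ≤ 1 / 2 := by
    have : 0 ≤ (En u).toReal := ENNReal.toReal_nonneg
    rw [div_le_div_iff₀ (by positivity) (by norm_num)]
    linarith
  refine ⟨(En u).toReal, ENNReal.toReal_nonneg, hr, ?_, u, hu.mono hr⟩
  rw [ENNReal.ofReal_toReal (En_lt_top hu).ne]
  exact m1_le (hu.mono hr)

/-- **Strict subadditivity for `h` close to `1`.** -/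
theorem strict_subadditivity_h_lt_one :
    ∃ H : ℝ, 0 ≤ H ∧ H < 1 ∧ ∀ h : ℝ, H ≤ h → h < 1 →
      Einf h (2 - alphaParam h / Real.pi) <
        2 * Einf h (1 - alphaParam h / Real.pi) + Einf h (alphaParam h / Real.pi) := by
  have hpi := Real.pi_pos
  obtain ⟨B, hB, hr, hm, hne⟩ := exists_radius
  set r0 := 1 / (8 * (B + 1)) with hr0
  have hr0p : 0 < r0 := by positivity
  obtain ⟨c, hc, u, S, hu, hS1, hS, hgain⟩ :=
    exists_gain hr0p (by linarith) hne fun u hu => En_lt_top hu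
  set Y := 2 * Dsup u + 2 * Pe (fu u) + Nst (fun x => fu u x + fu u (x - (2 * S + 1))) with hYdef
  have hm_top : m1 r0 ≠ ⊤ := (hm.trans_lt ENNReal.ofReal_lt_top).ne
  have hY_top : Y ≠ ⊤ :=
    ((le_self_add.trans hgain).trans_lt (ENNReal.mul_lt_top (by simp) hm_top.lt_top)).ne
  have hYZ : Y < 2 * m1 r0 :=
    (ENNReal.lt_add_right hY_top (by simpa using hc)).trans_le hgain
  obtain ⟨X, hYX, hXZ⟩ := exists_between hYZ
  obtain ⟨β, l, hβ0, hβ, hl, hl2, hlb, hX⟩ := exists_beta hXZ hXZ.ne_top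
  have hup := upper_bound hu hS (by linarith) hYX
  obtain ⟨α0, hα0, hup⟩ := (mem_nhdsGT_iff_exists_Ioc_subset).1
    (hup.and (Ioo_mem_nhdsGT hβ0))
  have hα0β : α0 < β := (hup ⟨hα0, le_rfl⟩).2.2
  refine ⟨cos α0, cos_nonneg_of_neg_pi_div_two_le_of_le (by linarith [Set.mem_Ioi.1 hα0])
    (by linarith), ?_, fun h hh hh1 => ?_⟩
  · rw [← cos_zero]
    exact cos_lt_cos_of_nonneg_of_le_pi le_rfl (by linarith) hα0
  have hh0 : 0 ≤ cos α0 := cos_nonneg_of_neg_pi_div_two_le_of_le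
    (by linarith [Set.mem_Ioi.1 hα0]) (by linarith)
  have hα_pos : 0 < arccos h := arccos_pos.2 hh1
  have hα_le : arccos h ≤ α0 := by
    have := antitone_arccos hh
    rwa [arccos_cos (le_of_lt hα0) (by linarith)] at this
  have hcos : cos (arccos h) = h := cos_arccos (by linarith) hh1.le
  have hal : alphaParam h = arccos h := by
    unfold alphaParam kparam; rw [min_eq_left hh1.le]
  have h1 := (hup ⟨hα_pos, hα_le⟩).1
  have h2 := lower_bound hα_pos (hα_le.trans_lt hα0β) hβ hl hl2 hlb hB hm
  rw [hcos] at h1 h2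
  rw [hal]
  refine lt_of_lt_of_le (h1.trans ?_) le_self_add
  -- The factor `l ^ 4` in the lower bound was chosen so that `l ^ 4 * X < 2 * m1`.
  have h3 : ENNReal.ofReal (l ^ 4) * X <
      ENNReal.ofReal (l ^ 4) * (2 * Einf h (1 - arccos h / π)) := by
    refine hX.trans_le ?_
    rw [mul_left_comm]
    gcongr
  exact lt_of_mul_lt_mul_left' h3
end
end

section
/- Suppose 0 ≤ h < 1 and let α = arccos h ∈ (0, π/2]. Then for every φ ∈ 𝒜_h(1), the strict inequality E_h(φ) > ℰ_h(α/π) + ℰ_h(1 − α/π) holds. -/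
/-!
Why the split is strictly cheaper. Put `f = cos φ - h`; since `h < 1` the anisotropy is
`2 W_h(φ) = f ^ 2`. A phase of winding number `1` runs from `L` to `L + 2π` with `cos L = h`. Let
`ψ₁` and `ψ₂` be phases with `cos ψ₁ = max (cos φ) h` and `cos ψ₂ = min (cos φ) h`, obtained by
freezing `φ` outside, respectively inside, the set `{cos φ ≥ h}`. They have winding numbers `α/π`
and `1 - α/π`, their exchange and anisotropy energies add up to those of `φ`, and their stray
fields are those of the positive and the negative part of `f`. The pointwise inequality
`(Δf⁺)² + (Δf⁻)² ≤ (Δf)²` is strict whenever `f(s)` and `f(t)` have opposite signs, which by the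
intermediate value theorem happens on a nonempty open set of pairs, so the total energy drops
strictly (`splitEnergy_lt`).

The frozen phases are only Lipschitz, whereas admissible phases are `C¹`. They are therefore
replaced by `g ∘ φ`, where `g` is a `C¹` version of the freezing map (`exists_fold`). Given `Λ > 1`,
`g` can be chosen with slope at most `Λ`, still constant outside the well, never increasing the
anisotropy energy, and with `cos ∘ g` a `Λ²`-Lipschitz function of the truncated cosine. The
energies of the two resulting phases sum to at most `Λ⁴` times the split energy (`exists_split`),
and the strict gap absorbs `Λ⁴` once `Λ` is close to `1`.

The map `g` is the composition of the triangle wave `2 arcsin (sin (θ/2))`, which preserves the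
cosine, with a saturating profile rescaled to the half-width `γ` of the well. The profile is already
constant where the triangle wave has its kinks because `γ < π`. The Lipschitz bound rests on
`sin y ≤ Λ sin t` for `t ≤ y ≤ Λ t`, `y ≤ π`, i.e. on the concavity of the sine. Taking `γ = α` gives
`ψ₁`; taking `γ = π - α`, after shifting angles by `π`, gives `ψ₂`.
-/

open Real MeasureTheory Filter Topology
open scoped ENNReal NNReal

noncomputable section

/-! ### A saturating profile -/

/-- A `C¹` odd profile `P` with derivative `p`, saturating at `1` from `u = 1` on, lying above the
identity on `[0, 1]` and with slope at most `Λ`. On `[0, 1]` it is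
`(1 + 1/n) u - u ^ (n + 1) / n` for a large even `n`. -/
theorem exists_profile (Λ : ℝ) (hΛ : 1 < Λ) : ∃ P p : ℝ → ℝ, Continuous p ∧
    (∀ u, HasDerivAt P (p u) u) ∧ (∀ u, 0 ≤ p u ∧ p u ≤ Λ) ∧ (∀ u, 1 ≤ |u| → p u = 0) ∧
    (∀ u, P (-u) = -P u) ∧ (∀ u, 1 ≤ u → P u = 1) ∧
    (∀ u, 0 ≤ u → u ≤ 1 → u ≤ P u ∧ P u ≤ 1 ∧ P u ≤ Λ * u) := by
  obtain ⟨m, hm⟩ := exists_nat_gt (1 / (Λ - 1))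
  have hm0 : (0 : ℝ) < m := lt_trans (by have : 0 < Λ - 1 := by linarith
                                         positivity) hm
  set n : ℕ := 2 * m with hn
  have hn0 : (0 : ℝ) < n := by rw [hn]; push_cast; linarith
  have hlam : 1 + 1 / (n : ℝ) ≤ Λ := by
    have h1 : 1 / (m : ℝ) < Λ - 1 := by
      rw [div_lt_comm₀ hm0 (by linarith)]; exact hm
    have h2 : 1 / (n : ℝ) ≤ 1 / m := by
      apply one_div_le_one_div_of_le hm0; rw [hn]; push_cast; linarith
    linarith
  set l : ℝ := 1 + 1 / (n : ℝ) with hl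
  have hl1 : 1 < l := by rw [hl]; have : 0 < 1 / (n : ℝ) := by positivity
                         linarith
  have hev : Even n := ⟨m, by omega⟩
  let p : ℝ → ℝ := fun v => l * max 0 (1 - v ^ n)
  have hpc : Continuous p := by fun_prop
  have hp0 : ∀ u, 0 ≤ p u := fun u => by positivity
  have hpz : ∀ u, 1 ≤ |u| → p u = 0 := fun u hu => by
    have : 1 ≤ u ^ n := by rw [← hev.pow_abs]; exact one_le_pow₀ hu
    simp only [p]; rw [max_eq_left (by linarith)]; ring
  let P : ℝ → ℝ := fun u => ∫ v in (0 : ℝ)..u, p v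
  have hval : ∀ u, 0 ≤ u → u ≤ 1 → P u = l * u - u ^ (n + 1) / n := by
    intro u h0 h1
    have : P u = ∫ v in (0 : ℝ)..u, l * (1 - v ^ n) := by
      apply intervalIntegral.integral_congr
      intro v hv
      rw [Set.uIcc_of_le h0] at hv
      have : v ^ n ≤ 1 := pow_le_one₀ hv.1 (hv.2.trans h1)
      simp only [p]; rw [max_eq_right (by linarith)]
    rw [this, intervalIntegral.integral_const_mul, intervalIntegral.integral_sub (by simp)
      (by exact (continuous_pow n).intervalIntegrable _ _), integral_pow]
    simp only [intervalIntegral.integral_const, smul_eq_mul, hl]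
    field_simp
    ring
  have hP1 : P 1 = 1 := by
    rw [hval 1 (by norm_num) le_rfl, hl]; simp
  refine ⟨P, p, hpc, fun u => (hpc.integral_hasStrictDerivAt 0 u).hasDerivAt,
    fun u => ⟨hp0 u, ?_⟩, hpz, ?_, ?_, ?_⟩
  · have : 0 ≤ u ^ n := hev.pow_nonneg u
    have h2 : max 0 (1 - u ^ n) ≤ 1 := max_le (by norm_num) (by linarith)
    simp only [p]; nlinarith
  · intro u
    have := intervalIntegral.integral_comp_neg (a := 0) (b := u) p
    have hpe : ∀ v, p (-v) = p v := fun v => by simp only [p]; rw [hev.neg_pow]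
    simp only [hpe, neg_zero] at this
    simp only [P]; rw [intervalIntegral.integral_symm, ← this]
  · intro u hu
    have : P u = P 1 + ∫ v in (1 : ℝ)..u, p v :=
      (intervalIntegral.integral_add_adjacent_intervals (hpc.intervalIntegrable _ _)
        (hpc.intervalIntegrable _ _)).symm
    rw [this, hP1]
    have : ∫ v in (1 : ℝ)..u, p v = ∫ v in (1 : ℝ)..u, 0 := by
      apply intervalIntegral.integral_congr
      intro v hv
      rw [Set.uIcc_of_le hu] at hv
      exact hpz v (hv.1.trans (le_abs_self v))
    rw [this]; simp
  · intro u h0 h1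
    have e := hval u h0 h1
    have h3 : u ^ (n + 1) ≤ u := by
      rw [pow_succ]; have : u ^ n ≤ 1 := pow_le_one₀ h0 h1
      nlinarith
    refine ⟨?_, ?_, ?_⟩
    · rw [e, hl]
      have : u ^ (n + 1) / n ≤ u / n := by gcongr
      have h4 : (1 + 1 / (n : ℝ)) * u = u + u / n := by ring
      linarith
    · have : P 1 = P u + ∫ v in u..1, p v :=
        (intervalIntegral.integral_add_adjacent_intervals (hpc.intervalIntegrable _ _)
          (hpc.intervalIntegrable _ _)).symm
      have h5 : 0 ≤ ∫ v in u..1, p v :=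
        intervalIntegral.integral_nonneg h1 (fun v _ => hp0 v)
      linarith
    · rw [e]; have : 0 ≤ u ^ (n + 1) / n := by positivity
      nlinarith

/-! ### The triangle wave -/

/-- The `4π`-periodic triangle wave with slopes `± 1` and range `[-π, π]`, equal to the identity on
`[-π, π]`. Its kinks are the odd multiples of `π`. -/
def tri (θ : ℝ) : ℝ := 2 * arcsin (sin (θ / 2))

theorem cos_tri (θ : ℝ) : cos (tri θ) = cos θ := by
  have h1 : cos (tri θ) = 1 - 2 * sin (θ / 2) ^ 2 := by
    rw [tri, cos_two_mul, cos_sq', sin_arcsin (neg_one_le_sin _) (sin_le_one _)]; ring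
  have h2 : cos θ = 1 - 2 * sin (θ / 2) ^ 2 := by
    conv_lhs => rw [show θ = 2 * (θ / 2) by ring, cos_two_mul, cos_sq']
    ring
  rw [h1, h2]

theorem abs_tri_le (θ : ℝ) : |tri θ| ≤ π := by
  have h1 := neg_pi_div_two_le_arcsin (sin (θ / 2))
  have h2 := arcsin_le_pi_div_two (sin (θ / 2))
  rw [abs_le, tri]; constructor <;> linarith

theorem abs_tri (θ : ℝ) : |tri θ| = arccos (cos θ) := by
  rw [← cos_tri θ, ← cos_abs, arccos_cos (abs_nonneg _) (abs_tri_le θ)]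

theorem tri_add (θ : ℝ) : tri (θ + 2 * π) = - tri θ := by
  rw [tri, tri, show (θ + 2 * π) / 2 = θ / 2 + π by ring, sin_add_pi, arcsin_neg]; ring

theorem continuous_tri : Continuous tri := by unfold tri; fun_prop

theorem hasDerivAt_tri (θ : ℝ) (h : cos (θ / 2) ≠ 0) :
    ∃ d, HasDerivAt tri d θ ∧ |d| = 1 := by
  have hs : sin (θ / 2) ^ 2 ≠ 1 := by
    intro h'; apply h; have := sin_sq_add_cos_sq (θ / 2); rw [h'] at this
    have : cos (θ / 2) ^ 2 = 0 := by linarith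
    exact pow_eq_zero_iff (two_ne_zero) |>.1 this
  have h1 : sin (θ / 2) ≠ -1 := by intro h'; apply hs; rw [h']; norm_num
  have h2 : sin (θ / 2) ≠ 1 := by intro h'; apply hs; rw [h']; norm_num
  have h3 : HasDerivAt (fun θ : ℝ => sin (θ / 2)) (cos (θ / 2) * (1 / 2)) θ :=
    ((hasDerivAt_id θ).div_const 2).sin
  have h4 : HasDerivAt (fun θ : ℝ => arcsin (sin (θ / 2)))
      (1 / √(1 - sin (θ / 2) ^ 2) * (cos (θ / 2) * (1 / 2))) θ :=
    HasDerivAt.comp (h₂ := arcsin) θ (hasDerivAt_arcsin h1 h2) h3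
  refine ⟨2 * (1 / √(1 - sin (θ / 2) ^ 2) * (cos (θ / 2) * (1 / 2))), h4.const_mul 2, ?_⟩
  rw [show 1 - sin (θ / 2) ^ 2 = cos (θ / 2) ^ 2 by rw [cos_sq'], sqrt_sq_eq_abs, abs_mul, abs_mul, abs_mul,
    abs_div, abs_abs]
  have : |cos (θ / 2)| ≠ 0 := abs_ne_zero.2 h
  simp
  field_simp

theorem contDiffAt_tri (θ : ℝ) (h : cos (θ / 2) ≠ 0) : ContDiffAt ℝ 1 tri θ := by
  have hs : sin (θ / 2) ^ 2 ≠ 1 := by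
    intro h'; apply h; have := sin_sq_add_cos_sq (θ / 2); rw [h'] at this
    have : cos (θ / 2) ^ 2 = 0 := by linarith
    exact pow_eq_zero_iff (two_ne_zero) |>.1 this
  have h1 : sin (θ / 2) ≠ -1 := by intro h'; apply hs; rw [h']; norm_num
  have h2 : sin (θ / 2) ≠ 1 := by intro h'; apply hs; rw [h']; norm_num
  have h3 : ContDiffAt ℝ 1 (fun θ : ℝ => sin (θ / 2)) θ := by fun_prop
  have h4 : ContDiffAt ℝ 1 (fun θ : ℝ => arcsin (sin (θ / 2))) θ :=
    ContDiffAt.comp (g := arcsin) θ (contDiffAt_arcsin h1 h2) h3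
  exact contDiffAt_const.mul h4

/-- Increasing an angle by a factor at most `Λ` increases its sine by a factor at most `Λ`, because
`sin t / t` is decreasing on `(0, π]` by concavity. -/
theorem sin_le_of_le_mul {Λ t y : ℝ} (hty : t ≤ y) (ht : 0 < t) (hy : y ≤ Λ * t)
    (hπ : y ≤ π) : sin y ≤ Λ * sin t := by
  have hy0 : 0 < y := ht.trans_le hty
  have hst : 0 ≤ sin y := sin_nonneg_of_nonneg_of_le_pi hy0.le hπ
  have ha : 0 ≤ t / y := by positivity
  have hb : 0 ≤ 1 - t / y := by rw [sub_nonneg, div_le_one hy0]; exact hty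
  have hc := strictConcaveOn_sin_Icc.concaveOn.2 (⟨hy0.le, hπ⟩ : y ∈ Set.Icc 0 π)
    (⟨le_rfl, pi_pos.le⟩ : (0 : ℝ) ∈ Set.Icc 0 π) ha hb (by ring)
  simp only [smul_eq_mul, sin_zero, mul_zero, add_zero] at hc
  rw [div_mul_cancel₀ _ hy0.ne'] at hc
  have h1 : t * sin y ≤ y * sin t := by
    rw [div_mul_eq_mul_div, div_le_iff₀ hy0] at hc; linarith
  have hs : 0 ≤ sin t := sin_nonneg_of_nonneg_of_le_pi ht.le (hty.trans hπ)
  have h2 : y * sin t ≤ (Λ * t) * sin t := by gcongr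
  have : t * sin y ≤ t * (Λ * sin t) := by linarith
  exact le_of_mul_le_mul_left this ht

/-! ### Folding maps of the angle variable -/

/-- For a well `{cos θ ≥ cos γ}`, a `C¹` folding map `g` of slope at most `Λ`, constant off the well,
whose cosine is a `Λ²`-Lipschitz function of the truncated cosine `max (cos θ) (cos γ)` and lies
between `cos γ` and that truncation. -/
theorem exists_fold {γ Λ : ℝ} (hγ0 : 0 < γ) (hγπ : γ < π) (hΛ : 1 < Λ) :
    ∃ g : ℝ → ℝ, ContDiff ℝ 1 g ∧ (∀ θ, |deriv g θ| ≤ Λ) ∧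
      (∀ θ, cos θ ≤ cos γ → deriv g θ = 0) ∧ (∀ θ, g (θ + 2 * π) = -g θ) ∧
      (∀ θ, cos θ = cos γ → g θ = γ ∨ g θ = -γ) ∧
      (∀ θ, cos γ ≤ cos (g θ) ∧ cos (g θ) ≤ max (cos θ) (cos γ)) ∧
      (∀ θ θ', |cos (g θ) - cos (g θ')| ≤
        Λ ^ 2 * |max (cos θ) (cos γ) - max (cos θ') (cos γ)|) := by
  obtain ⟨P, p, hpc, hP, hp, hpz, hodd, hone, hin⟩ := exists_profile Λ hΛ
  let g : ℝ → ℝ := fun θ => γ * P (tri θ / γ)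
  have hPC : ContDiff ℝ 1 P := by
    rw [contDiff_one_iff_deriv]
    refine ⟨fun u => (hP u).differentiableAt, ?_⟩
    rwa [show deriv P = p from funext fun u => (hP u).deriv]
  have hPm : Monotone P := monotone_of_deriv_nonneg (fun u => (hP u).differentiableAt)
    (fun u => by rw [(hP u).deriv]; exact (hp u).1)
  -- where the triangle wave has a kink, the profile has already saturated
  have hconst : ∀ θ, cos (θ / 2) = 0 → ∃ c, g =ᶠ[𝓝 θ] fun _ => c := by
    intro θ hθ
    have hsq : sin (θ / 2) ^ 2 = 1 := by
      have := sin_sq_add_cos_sq (θ / 2); rw [hθ] at this; linarith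
    have hsat : ∀ u, γ < u → γ * P (u / γ) = γ := fun u hu => by
      rw [hone _ ((one_le_div hγ0).2 hu.le), mul_one]
    rcases sq_eq_sq_iff_eq_or_eq_neg.1 (hsq.trans (one_pow 2).symm) with h | h
    · refine ⟨γ, ?_⟩
      have : tri θ = π := by rw [tri, h, arcsin_one]; ring
      filter_upwards [continuous_tri.continuousAt.eventually (lt_mem_nhds (this ▸ hγπ))]
        with x hx using hsat _ hx
    · refine ⟨-γ, ?_⟩
      have : tri θ = -π := by rw [tri, h, arcsin_neg_one]; ring
      have h' : tri θ < -γ := by linarith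
      filter_upwards [continuous_tri.continuousAt.eventually (gt_mem_nhds h')] with x hx
      have h2 := hsat (-tri x) (by linarith)
      rw [neg_div, hodd] at h2
      show γ * P (tri x / γ) = -γ
      linarith
  have hderiv : ∀ θ, |deriv g θ| ≤ Λ ∧ (cos θ ≤ cos γ → deriv g θ = 0) := by
    intro θ
    by_cases hθ : cos (θ / 2) = 0
    · obtain ⟨c, hc⟩ := hconst θ hθ
      rw [hc.deriv_eq]; simp; linarith
    · obtain ⟨d, hd, hd1⟩ := hasDerivAt_tri θ hθ
      have h1 : HasDerivAt (fun x => P (tri x / γ)) (p (tri θ / γ) * (d / γ)) θ :=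
        HasDerivAt.comp (h₂ := P) θ (hP _) (hd.div_const γ)
      have h2 : HasDerivAt g (γ * (p (tri θ / γ) * (d / γ))) θ := h1.const_mul γ
      have h3 : γ * (p (tri θ / γ) * (d / γ)) = p (tri θ / γ) * d := by field_simp
      rw [h2.deriv, h3]
      refine ⟨?_, fun hc => ?_⟩
      · rw [abs_mul, hd1, mul_one, abs_of_nonneg (hp _).1]; exact (hp _).2
      · rw [hpz, zero_mul]
        rw [abs_div, abs_of_pos hγ0, one_le_div hγ0, abs_tri,
          ← arccos_cos hγ0.le hγπ.le]
        exact arccos_le_arccos hc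
  -- `C` is the cosine of the modified angle at distance `t` from the well's center
  let C : ℝ → ℝ := fun t => cos (γ * P (t / γ))
  have hCd : ∀ t, HasDerivAt C (-sin (γ * P (t / γ)) * p (t / γ)) t := by
    intro t
    have h1 : HasDerivAt (fun x => P (x / γ)) (p (t / γ) * (1 / γ)) t :=
      HasDerivAt.comp (h₂ := P) t (hP _) ((hasDerivAt_id t).div_const γ)
    convert (h1.const_mul γ).cos using 1
    field_simp
  have hrange : ∀ t, 0 ≤ t → t ≤ γ →
      t ≤ γ * P (t / γ) ∧ γ * P (t / γ) ≤ γ ∧ γ * P (t / γ) ≤ Λ * t := by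
    intro t h0 h1
    obtain ⟨a, b, c⟩ := hin (t / γ) (by positivity) ((div_le_one hγ0).2 h1)
    refine ⟨?_, ?_, ?_⟩
    · rw [div_le_iff₀ hγ0] at a; linarith
    · nlinarith
    · calc γ * P (t / γ) ≤ γ * (Λ * (t / γ)) := by gcongr
        _ = Λ * t := by field_simp
  have hCanti : AntitoneOn C (Set.Icc 0 γ) := by
    intro a ha b hb hab
    obtain ⟨a1, a2, a3⟩ := hrange a ha.1 ha.2
    obtain ⟨b1, b2, b3⟩ := hrange b hb.1 hb.2
    apply cos_le_cos_of_nonneg_of_le_pi (ha.1.trans a1) (b2.trans hγπ.le)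
    have := hPm (div_le_div_of_nonneg_right hab hγ0.le)
    gcongr
  have hCmono : AntitoneOn (fun t => Λ ^ 2 * cos t - C t) (Set.Icc 0 γ) := by
    have hd : ∀ t, HasDerivAt (fun t => Λ ^ 2 * cos t - C t)
        (Λ ^ 2 * (-sin t) - (-sin (γ * P (t / γ)) * p (t / γ))) t :=
      fun t => ((hasDerivAt_cos t).const_mul _).sub (hCd t)
    apply antitoneOn_of_deriv_nonpos (convex_Icc _ _)
      (fun t _ => (hd t).continuousAt.continuousWithinAt)
      (fun t _ => (hd t).differentiableAt.differentiableWithinAt)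
    intro t ht
    rw [interior_Icc] at ht
    obtain ⟨a1, a2, a3⟩ := hrange t ht.1.le ht.2.le
    have hs := sin_le_of_le_mul a1 ht.1 a3 (a2.trans hγπ.le)
    have hs0 : 0 ≤ sin (γ * P (t / γ)) :=
      sin_nonneg_of_nonneg_of_le_pi (ht.1.le.trans a1) (a2.trans hγπ.le)
    rw [(hd t).deriv]
    have : sin (γ * P (t / γ)) * p (t / γ) ≤ (Λ * sin t) * Λ :=
      mul_le_mul hs (hp _).2 (hp _).1 (hs0.trans hs)
    nlinarith
  have hCγ : C γ = cos γ := by simp only [C]; rw [div_self hγ0.ne', hone 1 le_rfl, mul_one]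
  let m : ℝ → ℝ := fun θ => min |tri θ| γ
  have hm : ∀ θ, m θ ∈ Set.Icc 0 γ := fun θ =>
    ⟨le_min (abs_nonneg _) hγ0.le, min_le_right _ _⟩
  have hmax : ∀ θ, max (cos θ) (cos γ) = cos (m θ) := by
    intro θ
    rw [← cos_tri θ, ← cos_abs (tri θ)]
    rcases le_total |tri θ| γ with h | h
    · simp only [m]; rw [min_eq_left h, max_eq_left]
      exact cos_le_cos_of_nonneg_of_le_pi (abs_nonneg _) hγπ.le h
    · simp only [m]; rw [min_eq_right h, max_eq_right]
      exact cos_le_cos_of_nonneg_of_le_pi hγ0.le (abs_tri_le θ) h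
  have hg : ∀ θ, cos (g θ) = C (m θ) := by
    intro θ
    have h1 : cos (g θ) = C |tri θ| := by
      simp only [g, C]
      rcases abs_choice (tri θ) with h | h <;> rw [h]
      rw [neg_div, hodd, mul_neg, cos_neg]
    rw [h1]
    rcases le_total |tri θ| γ with h | h
    · simp only [m]; rw [min_eq_left h]
    · simp only [m]; rw [min_eq_right h, hCγ]; simp only [C]
      rw [hone _ ((one_le_div hγ0).2 h), mul_one]
  refine ⟨g, ?_, fun θ => (hderiv θ).1, fun θ => (hderiv θ).2, ?_, ?_, ?_, ?_⟩
  · rw [contDiff_iff_contDiffAt]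
    intro θ
    by_cases hθ : cos (θ / 2) = 0
    · obtain ⟨c, hc⟩ := hconst θ hθ
      exact contDiffAt_const.congr_of_eventuallyEq hc
    · have h1 : ContDiffAt ℝ 1 (fun x => P (tri x / γ)) θ :=
        hPC.contDiffAt.comp θ ((contDiffAt_tri θ hθ).div_const γ)
      exact contDiffAt_const.mul h1
  · intro θ
    simp only [g]; rw [tri_add, neg_div, hodd, mul_neg]
  · intro θ hθ
    have h1 : |tri θ| = γ := by rw [abs_tri, hθ, arccos_cos hγ0.le hγπ.le]
    rcases eq_or_eq_neg_of_abs_eq h1 with h | h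
    · left; simp only [g]; rw [h, div_self hγ0.ne', hone 1 le_rfl, mul_one]
    · right; simp only [g]; rw [h, neg_div, hodd, div_self hγ0.ne', hone 1 le_rfl]; ring
  · intro θ
    rw [hg, hmax]
    refine ⟨?_, ?_⟩
    · rw [← hCγ]; exact hCanti (hm θ) ⟨hγ0.le, le_rfl⟩ (hm θ).2
    · obtain ⟨a1, a2, a3⟩ := hrange (m θ) (hm θ).1 (hm θ).2
      exact cos_le_cos_of_nonneg_of_le_pi (hm θ).1 (a2.trans hγπ.le) a1
  · intro θ θ'
    rw [hg, hg, hmax, hmax]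
    have key : ∀ a ∈ Set.Icc 0 γ, ∀ b ∈ Set.Icc 0 γ, a ≤ b →
        |C a - C b| ≤ Λ ^ 2 * |cos a - cos b| := by
      intro a ha b hb hab
      have h1 := hCanti ha hb hab
      have h2 := hCmono ha hb hab
      have h3 := cos_le_cos_of_nonneg_of_le_pi ha.1 (hb.2.trans hγπ.le) hab
      simp only at h2
      rw [abs_of_nonneg (by linarith), abs_of_nonneg (by linarith)]
      linarith
    rcases le_total (m θ) (m θ') with h | h
    · exact key _ (hm θ) _ (hm θ') h
    · rw [abs_sub_comm, abs_sub_comm (cos (m θ))]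
      exact key _ (hm θ') _ (hm θ) h

/-! ### Energy of the truncated phases -/

theorem kparam_eq {h : ℝ} (h1 : h < 1) : kparam h = h := min_eq_left h1.le

theorem Wpot_eq {h : ℝ} (h1 : h < 1) (θ : ℝ) : 2 * Wpot h θ = (cos θ - h) ^ 2 := by
  rw [Wpot, kparam_eq h1]; ring

/-- The energy with the stray-field term written as an integral over `ℝ × ℝ`. -/
theorem energy_eq {h : ℝ} (h1 : h < 1) {φ : ℝ → ℝ} (hφ : Continuous φ) :
    energy h φ = ENNReal.ofReal (1/2) *
        (∫⁻ x : ℝ, ENNReal.ofReal ((deriv φ x)^2 + (cos (φ x) - h) ^ 2)) +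
      ENNReal.ofReal (1/(4*π)) *
        (∫⁻ z : ℝ × ℝ, ENNReal.ofReal ((cos (φ z.1) - cos (φ z.2))^2 / (z.1 - z.2)^2)) := by
  have hm : Measurable fun z : ℝ × ℝ =>
      ENNReal.ofReal ((cos (φ z.1) - cos (φ z.2))^2 / (z.1 - z.2)^2) := by
    have := hφ.measurable
    fun_prop
  simp only [energy, Wpot_eq h1]
  rw [Measure.volume_eq_prod, lintegral_prod _ hm.aemeasurable]

/-- The energy of `φ` in which the stray-field energy of `cos φ - h` is replaced by the sum of the
stray-field energies of its positive and negative parts. The parts are represented by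
`max (cos φ) h` and `min (cos φ) h`, from which they differ by constants up to sign. -/
def splitEnergy (h : ℝ) (φ : ℝ → ℝ) : ℝ≥0∞ :=
  ENNReal.ofReal (1/2) *
      (∫⁻ x : ℝ, ENNReal.ofReal ((deriv φ x)^2 + (cos (φ x) - h) ^ 2)) +
    ENNReal.ofReal (1/(4*π)) *
      (∫⁻ z : ℝ × ℝ, ENNReal.ofReal (((max (cos (φ z.1)) h - max (cos (φ z.2)) h) ^ 2 +
        (min (cos (φ z.1)) h - min (cos (φ z.2)) h) ^ 2) / (z.1 - z.2)^2))

theorem sq_split_le (a b h : ℝ) :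
    (max a h - max b h) ^ 2 + (min a h - min b h) ^ 2 ≤ (a - b) ^ 2 := by
  rcases le_total a h with ha | ha <;> rcases le_total b h with hb | hb <;>
    simp only [ha, hb, max_eq_left, max_eq_right, min_eq_left, min_eq_right] <;> nlinarith

/-- The interaction between the positive and negative parts of `cos φ - h` has a strictly positive
cost as soon as both parts are nonzero. -/
theorem splitEnergy_lt {h : ℝ} (h1 : h < 1) {φ : ℝ → ℝ} (hφ : Continuous φ)
    (hfin : energy h φ < ⊤) (hpos : ∃ x, h < cos (φ x)) (hneg : ∃ x, cos (φ x) < h) :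
    splitEnergy h φ < energy h φ := by
  rw [energy_eq h1 hφ] at hfin ⊢
  have hmeas := hφ.measurable
  have hc : ENNReal.ofReal (1/(4*π)) ≠ 0 := by
    rw [ne_eq, ENNReal.ofReal_eq_zero, not_le]; positivity
  have hle : ∀ z : ℝ × ℝ, ENNReal.ofReal (((max (cos (φ z.1)) h - max (cos (φ z.2)) h) ^ 2 +
        (min (cos (φ z.1)) h - min (cos (φ z.2)) h) ^ 2) / (z.1 - z.2)^2) ≤
      ENNReal.ofReal ((cos (φ z.1) - cos (φ z.2))^2 / (z.1 - z.2)^2) := by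
    intro z
    apply ENNReal.ofReal_le_ofReal
    gcongr
    exact sq_split_le _ _ _
  have hfin2 := (ENNReal.add_lt_top.1 hfin).2
  have hB : ∫⁻ z : ℝ × ℝ, ENNReal.ofReal ((cos (φ z.1) - cos (φ z.2))^2 / (z.1 - z.2)^2) ≠ ⊤ := by
    intro hB
    rw [hB, ENNReal.mul_top hc] at hfin2
    exact lt_irrefl _ hfin2
  have hlt : ∫⁻ z : ℝ × ℝ, ENNReal.ofReal (((max (cos (φ z.1)) h - max (cos (φ z.2)) h) ^ 2 +
        (min (cos (φ z.1)) h - min (cos (φ z.2)) h) ^ 2) / (z.1 - z.2)^2) <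
      ∫⁻ z : ℝ × ℝ, ENNReal.ofReal ((cos (φ z.1) - cos (φ z.2))^2 / (z.1 - z.2)^2) := by
    refine lintegral_strict_mono_of_ae_le_of_ae_lt_on (by fun_prop)
      (ne_top_of_le_ne_top hB (lintegral_mono hle)) (ae_of_all _ hle)
      (s := {x | h < cos (φ x)} ×ˢ {x | cos (φ x) < h}) ?_ (ae_of_all _ ?_)
    · apply IsOpen.measure_ne_zero
      · exact (isOpen_lt continuous_const (continuous_cos.comp hφ)).prod
          (isOpen_lt (continuous_cos.comp hφ) continuous_const)
      · exact Set.Nonempty.prod hpos hneg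
    · rintro ⟨s, t⟩ ⟨hs, ht⟩
      simp only [Set.mem_ofPred_eq] at hs ht
      have hst : s - t ≠ 0 := by
        intro h'; rw [sub_eq_zero] at h'; subst h'; linarith
      have hst2 : 0 < (s - t) ^ 2 := by positivity
      have hd : (max (cos (φ s)) h - max (cos (φ t)) h) ^ 2 +
          (min (cos (φ s)) h - min (cos (φ t)) h) ^ 2 < (cos (φ s) - cos (φ t)) ^ 2 := by
        rw [max_eq_left hs.le, max_eq_right ht.le, min_eq_right hs.le, min_eq_left ht.le]
        nlinarith [mul_pos (sub_pos.2 hs) (sub_pos.2 ht)]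
      apply (ENNReal.ofReal_lt_ofReal_iff _).2
      · exact div_lt_div_of_pos_right hd hst2
      · exact div_pos (lt_of_le_of_lt (by positivity) hd) hst2
  rw [splitEnergy]
  apply ENNReal.add_lt_add_of_le_of_lt (ENNReal.add_lt_top.1 hfin).1.ne le_rfl
  exact (ENNReal.mul_lt_mul_iff_right hc ENNReal.ofReal_ne_top).2 hlt

/-- The hypotheses compare the two phases with `φ` pointwise: exchange density, anisotropy density,
and increments of the cosines against those of the truncated cosines of `φ`. -/
theorem energy_add_le {h Λ : ℝ} (h1 : h < 1) (hΛ : 1 ≤ Λ) {φ ψ₁ ψ₂ : ℝ → ℝ}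
    (hψ₁ : ContDiff ℝ 1 ψ₁) (hψ₂ : ContDiff ℝ 1 ψ₂)
    (hD : ∀ x, deriv ψ₁ x ^ 2 + deriv ψ₂ x ^ 2 ≤ Λ ^ 2 * deriv φ x ^ 2)
    (hW : ∀ x, (cos (ψ₁ x) - h) ^ 2 + (cos (ψ₂ x) - h) ^ 2 ≤ (cos (φ x) - h) ^ 2)
    (hN₁ : ∀ s t, |cos (ψ₁ s) - cos (ψ₁ t)| ≤ Λ ^ 2 * |max (cos (φ s)) h - max (cos (φ t)) h|)
    (hN₂ : ∀ s t, |cos (ψ₂ s) - cos (ψ₂ t)| ≤ Λ ^ 2 * |min (cos (φ s)) h - min (cos (φ t)) h|) :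
    energy h ψ₁ + energy h ψ₂ ≤ ENNReal.ofReal (Λ ^ 4) * splitEnergy h φ := by
  rw [energy_eq h1 hψ₁.continuous, energy_eq h1 hψ₂.continuous, splitEnergy]
  have m1 := hψ₁.continuous.measurable
  have m2 := hψ₂.continuous.measurable
  have m3 := hψ₁.continuous_deriv_one.measurable
  have hΛ2 : 1 ≤ Λ ^ 2 := one_le_pow₀ hΛ
  have hΛ4 : Λ ^ 2 ≤ Λ ^ 4 := pow_le_pow_right₀ hΛ (by norm_num)
  have hA : (∫⁻ x : ℝ, ENNReal.ofReal ((deriv ψ₁ x)^2 + (cos (ψ₁ x) - h) ^ 2)) +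
      (∫⁻ x : ℝ, ENNReal.ofReal ((deriv ψ₂ x)^2 + (cos (ψ₂ x) - h) ^ 2)) ≤
      ENNReal.ofReal (Λ ^ 4) *
        ∫⁻ x : ℝ, ENNReal.ofReal ((deriv φ x)^2 + (cos (φ x) - h) ^ 2) := by
    rw [← lintegral_add_left (by fun_prop), ← lintegral_const_mul' _ _ ENNReal.ofReal_ne_top]
    apply lintegral_mono
    intro x
    simp only
    rw [← ENNReal.ofReal_add (by positivity) (by positivity), ← ENNReal.ofReal_mul (by positivity)]
    apply ENNReal.ofReal_le_ofReal
    have e1 := hD x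
    have e2 := hW x
    have e3 : Λ ^ 2 * deriv φ x ^ 2 ≤ Λ ^ 4 * deriv φ x ^ 2 := by gcongr
    have e4 : 1 * (cos (φ x) - h) ^ 2 ≤ Λ ^ 4 * (cos (φ x) - h) ^ 2 := by
      gcongr; linarith
    linarith
  have hB : (∫⁻ z : ℝ × ℝ, ENNReal.ofReal ((cos (ψ₁ z.1) - cos (ψ₁ z.2))^2 / (z.1 - z.2)^2)) +
      (∫⁻ z : ℝ × ℝ, ENNReal.ofReal ((cos (ψ₂ z.1) - cos (ψ₂ z.2))^2 / (z.1 - z.2)^2)) ≤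
      ENNReal.ofReal (Λ ^ 4) *
      ∫⁻ z : ℝ × ℝ, ENNReal.ofReal (((max (cos (φ z.1)) h - max (cos (φ z.2)) h) ^ 2 +
        (min (cos (φ z.1)) h - min (cos (φ z.2)) h) ^ 2) / (z.1 - z.2)^2) := by
    rw [← lintegral_add_left (by fun_prop), ← lintegral_const_mul' _ _ ENNReal.ofReal_ne_top]
    apply lintegral_mono
    intro z
    simp only
    rw [← ENNReal.ofReal_add (by positivity) (by positivity), ← ENNReal.ofReal_mul (by positivity)]
    apply ENNReal.ofReal_le_ofReal
    rw [← add_div, ← mul_div_assoc]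
    have sqle : ∀ {a b : ℝ}, |a| ≤ Λ ^ 2 * |b| → a ^ 2 ≤ Λ ^ 4 * b ^ 2 := by
      intro a b hab
      have := pow_le_pow_left₀ (abs_nonneg a) hab 2
      rw [sq_abs, mul_pow, sq_abs] at this
      linarith
    have e1 := sqle (hN₁ z.1 z.2)
    have e2 := sqle (hN₂ z.1 z.2)
    gcongr
    linarith
  calc _ = ENNReal.ofReal (1/2) * (_ + _) + ENNReal.ofReal (1/(4*π)) * (_ + _) := by
        rw [mul_add, mul_add]; exact add_add_add_comm _ _ _ _
    _ ≤ _ := add_le_add (mul_le_mul_right hA _) (mul_le_mul_right hB _)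
    _ = _ := by ring

/-! ### The two phases and the strict inequality -/

/-- The folding map of `exists_fold`, with its sign chosen so that it climbs from `-γ` to `γ` along
`[L, L + 2π]`. -/
theorem exists_oriented_fold {γ Λ : ℝ} (hγ0 : 0 < γ) (hγπ : γ < π) (hΛ : 1 < Λ)
    {L : ℝ} (hL : cos L = cos γ) :
    ∃ g : ℝ → ℝ, ContDiff ℝ 1 g ∧ (∀ θ, |deriv g θ| ≤ Λ) ∧
      (∀ θ, cos θ ≤ cos γ → deriv g θ = 0) ∧ g L = -γ ∧ g (L + 2 * π) = γ ∧
      (∀ θ, cos γ ≤ cos (g θ) ∧ cos (g θ) ≤ max (cos θ) (cos γ)) ∧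
      (∀ θ θ', |cos (g θ) - cos (g θ')| ≤
        Λ ^ 2 * |max (cos θ) (cos γ) - max (cos θ') (cos γ)|) := by
  obtain ⟨g, h1, h2, h3, h4, h5, h6, h7⟩ := exists_fold hγ0 hγπ hΛ
  rcases h5 L hL with h | h
  · refine ⟨fun θ => -g θ, h1.neg, fun θ => ?_, fun θ hθ => ?_, ?_, ?_, fun θ => ?_,
      fun θ θ' => ?_⟩
    · rw [deriv.fun_neg, abs_neg]; exact h2 θ
    · rw [deriv.fun_neg, h3 θ hθ, neg_zero]
    · simp only [h]
    · simp only [h4, h, neg_neg]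
    · rw [cos_neg]; exact h6 θ
    · rw [cos_neg, cos_neg]; exact h7 θ θ'
  · exact ⟨g, h1, h2, h3, h, by rw [h4, h, neg_neg], h6, h7⟩

theorem mem_AA {h d a b : ℝ} {ψ : ℝ → ℝ} (hψ : ContDiff ℝ 1 ψ) (ha : a ∈ limSet h)
    (hb : b ∈ limSet h) (hta : Tendsto ψ atBot (𝓝 a)) (htb : Tendsto ψ atTop (𝓝 b))
    (hE : energy h ψ < ⊤) (hd : (b - a) / (2 * π) = d) : ψ ∈ AA h d := by
  refine ⟨⟨hψ, ⟨b, hb, htb⟩, ⟨a, ha, hta⟩, hE⟩, ?_⟩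
  rw [deg, hta.limUnder_eq, htb.limUnder_eq, hd]

theorem cos_of_mem_limSet {h : ℝ} (h0 : 0 ≤ h) (h1 : h < 1) {L : ℝ} (hL : L ∈ limSet h) :
    cos L = h := by
  have hc : cos (alphaParam h) = h := by
    rw [alphaParam, kparam_eq h1, cos_arccos (by linarith) h1.le]
  obtain ⟨n, rfl | rfl⟩ := hL
  · rw [show 2 * π * n + alphaParam h = alphaParam h + n * (2 * π) by ring,
      cos_add_int_mul_two_pi, hc]
  · rw [show 2 * π * n - alphaParam h = n * (2 * π) - alphaParam h by ring,
      cos_int_mul_two_pi_sub, hc]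

/-- A phase of winding number `1` visits both sides of the level `h`. -/
theorem crosses {h : ℝ} {φ : ℝ → ℝ} (h0 : 0 ≤ h) (h1 : h < 1) (hφ : Continuous φ) {L : ℝ}
    (hLc : cos L = h) (hbot : Tendsto φ atBot (𝓝 L)) (htop : Tendsto φ atTop (𝓝 (L + 2 * π))) :
    (∃ x, h < cos (φ x)) ∧ ∃ x, cos (φ x) < h := by
  have hsurj : ∀ y, L < y → y < L + 2 * π → ∃ x, φ x = y := by
    intro y hy1 hy2
    apply mem_range_of_exists_le_of_exists_ge hφ
    · exact ((hbot.eventually (gt_mem_nhds hy1)).mono fun _ => le_of_lt).exists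
    · exact ((htop.eventually (lt_mem_nhds hy2)).mono fun _ => le_of_lt).exists
  -- modulo `2π`, `z` lies in `[L, L + 2π)`, and it is not `L` itself
  have hatt : ∀ z, cos z ≠ h → ∃ x, cos (φ x) = cos z := by
    intro z hz
    have hmem := toIcoMod_mem_Ico two_pi_pos L z
    have hcz : cos (toIcoMod two_pi_pos L z) = cos z := by
      rw [toIcoMod, zsmul_eq_mul, cos_sub_int_mul_two_pi]
    have hne : L ≠ toIcoMod two_pi_pos L z := by
      intro h'; rw [← h', hLc] at hcz; exact hz hcz.symm
    obtain ⟨x, hx⟩ := hsurj _ (lt_of_le_of_ne hmem.1 hne) hmem.2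
    exact ⟨x, by rw [hx, hcz]⟩
  obtain ⟨x, hx⟩ := hatt 0 (by rw [cos_zero]; exact h1.ne')
  obtain ⟨y, hy⟩ := hatt π (by rw [cos_pi]; linarith)
  rw [cos_zero] at hx
  rw [cos_pi] at hy
  exact ⟨⟨x, by linarith⟩, ⟨y, by linarith⟩⟩

/-- Folding `φ` into the wells around `0` and around `π` produces admissible competitors for the two
partial winding numbers, at a cost of at most `Λ⁴` times the split energy. -/
theorem exists_split {h Λ : ℝ} (h0 : 0 ≤ h) (h1 : h < 1) (hΛ : 1 < Λ) {φ : ℝ → ℝ}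
    (hφ : ContDiff ℝ 1 φ) {L : ℝ} (hLc : cos L = h) (hbot : Tendsto φ atBot (𝓝 L))
    (htop : Tendsto φ atTop (𝓝 (L + 2 * π))) (hfin : splitEnergy h φ < ⊤) :
    ∃ ψ₁ ∈ AA h (alphaParam h / π), ∃ ψ₂ ∈ AA h (1 - alphaParam h / π),
      energy h ψ₁ + energy h ψ₂ ≤ ENNReal.ofReal (Λ ^ 4) * splitEnergy h φ := by
  set α := alphaParam h with hα
  have hαc : cos α = h := by
    rw [hα, alphaParam, kparam_eq h1, cos_arccos (by linarith) h1.le]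
  have hα0 : 0 < α := by rw [hα, alphaParam, kparam_eq h1]; exact arccos_pos.2 h1
  have hαπ : α < π := by
    have : α ≤ π / 2 := by
      rw [hα, alphaParam, kparam_eq h1]; exact arccos_le_pi_div_two.2 h0
    linarith [pi_pos]
  have hβc : cos (π - α) = -h := by rw [cos_pi_sub, hαc]
  obtain ⟨g, gC, gd, gz, gL, gL', gr, gl⟩ :=
    exists_oriented_fold (Λ := Λ) (L := L) hα0 hαπ hΛ (by rw [hLc, hαc])
  obtain ⟨k, kC, kd, kz, kL, kL', kr, kl⟩ :=
    exists_oriented_fold (γ := π - α) (Λ := Λ) (L := L - π) (by linarith) (by linarith) hΛ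
      (by rw [cos_sub_pi, hLc, hβc])
  rw [hαc] at gz gr gl
  rw [hβc] at kz kr kl
  let ψ₁ : ℝ → ℝ := fun x => g (φ x)
  let ψ₂ : ℝ → ℝ := fun x => π + k (φ x - π)
  have C₁ : ContDiff ℝ 1 ψ₁ := gC.comp hφ
  have C₂ : ContDiff ℝ 1 ψ₂ := contDiff_const.add (kC.comp (hφ.sub contDiff_const))
  have d₁ : ∀ x, deriv ψ₁ x = deriv g (φ x) * deriv φ x := fun x =>
    (HasDerivAt.comp (h₂ := g) x (gC.differentiable_one _).hasDerivAt
      (hφ.differentiable_one x).hasDerivAt).deriv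
  have d₂ : ∀ x, deriv ψ₂ x = deriv k (φ x - π) * deriv φ x := fun x =>
    ((HasDerivAt.comp (h₂ := k) x (kC.differentiable_one _).hasDerivAt
      ((hφ.differentiable_one x).hasDerivAt.sub_const π)).const_add π).deriv
  have c₂ : ∀ x, cos (ψ₂ x) = -cos (k (φ x - π)) := fun x => by
    simp only [ψ₂]; rw [add_comm, cos_add_pi]
  have hmm : ∀ a : ℝ, max (-a) (-h) = -min a h := fun a => max_neg_neg a h
  replace kr := fun x => kr (φ x - π)
  replace kl := fun s t => kl (φ s - π) (φ t - π)
  simp only [cos_sub_pi, hmm] at kr kl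
  have hsq : ∀ a : ℝ, |a| ≤ Λ → a ^ 2 ≤ Λ ^ 2 := fun a ha => by
    rw [← sq_abs]; exact pow_le_pow_left₀ (abs_nonneg a) ha 2
  have hE : energy h ψ₁ + energy h ψ₂ ≤ ENNReal.ofReal (Λ ^ 4) * splitEnergy h φ := by
    apply energy_add_le h1 hΛ.le C₁ C₂
    · intro x
      rw [d₁, d₂, mul_pow, mul_pow]
      have e1 := hsq _ (gd (φ x))
      have e2 := hsq _ (kd (φ x - π))
      -- at each point at most one of the two folds has nonzero slope
      rcases le_total (cos (φ x)) h with hx | hx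
      · rw [gz _ hx]; nlinarith [sq_nonneg (deriv φ x)]
      · rw [kz (φ x - π) (by rw [cos_sub_pi]; linarith)]; nlinarith [sq_nonneg (deriv φ x)]
    · intro x
      rw [c₂]
      obtain ⟨a1, a2⟩ := gr (φ x)
      obtain ⟨b1, b2⟩ := kr x
      simp only [ψ₁]
      rcases le_total (cos (φ x)) h with hx | hx
      · rw [max_eq_right hx] at a2; rw [min_eq_left hx] at b2
        nlinarith
      · rw [max_eq_left hx] at a2; rw [min_eq_right hx] at b2
        nlinarith
    · intro s t
      exact gl (φ s) (φ t)
    · intro s t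
      rw [c₂, c₂]
      have := kl t s
      rwa [neg_sub_neg] at this ⊢
  have hlt : energy h ψ₁ + energy h ψ₂ < ⊤ :=
    lt_of_le_of_lt hE (ENNReal.mul_lt_top ENNReal.ofReal_lt_top hfin)
  obtain ⟨hE₁, hE₂⟩ := ENNReal.add_lt_top.1 hlt
  have hπ := pi_pos.ne'
  refine ⟨ψ₁, ?_, ψ₂, ?_, hE⟩
  · refine mem_AA (a := -α) (b := α) C₁ ⟨0, .inr (by simp [hα])⟩ ⟨0, .inl (by simp [hα])⟩
      ?_ ?_ hE₁ (by field_simp; ring)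
    · rw [← gL]; exact (gC.continuous.tendsto L).comp hbot
    · rw [← gL']; exact (gC.continuous.tendsto _).comp htop
  · refine mem_AA (a := α) (b := 2 * π - α) C₂ ⟨0, .inl (by simp [hα])⟩
      ⟨1, .inr (by simp [hα])⟩ ?_ ?_ hE₂ (by field_simp; ring)
    · have : α = π + k (L - π) := by rw [kL]; ring
      conv => rhs; rw [this]
      exact ((kC.continuous.tendsto _).comp (hbot.sub_const π)).const_add π
    · have : 2 * π - α = π + k (L + 2 * π - π) := by
        rw [show L + 2 * π - π = L - π + 2 * π by ring, kL']; ring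
      rw [this]
      exact ((kC.continuous.tendsto _).comp (htop.sub_const π)).const_add π

/-- For `0 ≤ h < 1`, any phase of winding number `1` has energy
strictly above `ℰ_h(α/π) + ℰ_h(1 − α/π)`. -/
theorem energy_strictly_above_split (h : ℝ) (h0 : 0 ≤ h) (h1 : h < 1)
    (φ : ℝ → ℝ) (hφ : φ ∈ AA h 1) :
    Einf h (alphaParam h / Real.pi) + Einf h (1 - alphaParam h / Real.pi) <
      energy h φ := by
  obtain ⟨⟨hC, ⟨M, -, htop⟩, ⟨L, hL, hbot⟩, hfin⟩, hdeg⟩ := hφ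
  have hM : M = L + 2 * π := by
    rw [deg, htop.limUnder_eq, hbot.limUnder_eq, div_eq_one_iff_eq two_pi_pos.ne'] at hdeg
    linarith
  subst hM
  have hLc := cos_of_mem_limSet h0 h1 hL
  obtain ⟨hpos, hneg⟩ := crosses h0 h1 hC.continuous hLc hbot htop
  have hlt := splitEnergy_lt h1 hC.continuous hfin hpos hneg
  -- the strict gap leaves room for a dilation factor `Λ > 1`
  have hlim : Tendsto (fun Λ : ℝ => ENNReal.ofReal (Λ ^ 4) * splitEnergy h φ) (𝓝[>] 1)
      (𝓝 (splitEnergy h φ)) := by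
    have h2 : Tendsto (fun Λ : ℝ => ENNReal.ofReal (Λ ^ 4)) (𝓝[>] 1) (𝓝 1) := by
      have : Continuous fun Λ : ℝ => ENNReal.ofReal (Λ ^ 4) :=
        ENNReal.continuous_ofReal.comp (continuous_pow 4)
      simpa using (this.tendsto 1).mono_left nhdsWithin_le_nhds
    simpa using ENNReal.Tendsto.mul_const h2 (Or.inl one_ne_zero)
  obtain ⟨Λ, hΛE, hΛ⟩ := ((hlim.eventually (gt_mem_nhds hlt)).and self_mem_nhdsWithin).exists
  obtain ⟨ψ₁, hψ₁, ψ₂, hψ₂, hle⟩ := exists_split h0 h1 hΛ hC hLc hbot htop (hlt.trans hfin)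
  calc _ ≤ energy h ψ₁ + energy h ψ₂ := add_le_add (iInf₂_le ψ₁ hψ₁) (iInf₂_le ψ₂ hψ₂)
    _ ≤ _ := hle
    _ < _ := hΛE
end
end
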